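/- arXiv:2006.04799 — 7 statements merged into one kernel-verified Lean document; each statement's English description precedes it below -/
import Mathlib

section
/- The class of finite-dimensional complex normed spaces satisfies the discrete approximate Ramsey property: for all finite-dimensional complex normed spaces X and Y, every r ∈ ℕ, and every ε > 0, there exists a finite-dimensional complex normed space Z such that for every coloring c of the set of linear isometric embeddings of X into Z with r colors there exist a linear isometric embedding γ : Y → Z and a color j such that for every linear isometric embedding η : X → Y there is a linear isometric embedding ξ : X → Z with c(ξ) = j and ‖γ ∘ η − ξ‖ ≤ ε (operator norm). -/
universe u

theorem arp_sum_sq_sub {ι : Type*} [Fintype ι] (f : ι → ℝ) :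
    ∑ x, ∑ y, (f x - f y) ^ 2 = 2 * (Fintype.card ι * ∑ x, f x ^ 2 - (∑ x, f x) ^ 2) := by
  have h1 : ∀ x, ∑ y, (f x - f y) ^ 2
      = Fintype.card ι * f x ^ 2 - 2 * f x * (∑ y, f y) + ∑ y, f y ^ 2 := by
    intro x
    simp only [sub_sq, Finset.sum_add_distrib, Finset.sum_sub_distrib, Finset.sum_const,
      Finset.card_univ, nsmul_eq_mul, ← Finset.mul_sum]
  simp only [h1, Finset.sum_add_distrib, Finset.sum_sub_distrib, Finset.sum_const,
      Finset.card_univ, nsmul_eq_mul, ← Finset.mul_sum, ← Finset.sum_mul]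
  ring

/-- Efron-Stein for Hamming-Lipschitz functions. -/
theorem arp_variance {G : Type*} [Fintype G] [DecidableEq G] (n : ℕ) :
    ∀ f : (Fin n → G) → ℝ, (∀ x y, |f x - f y| ≤ hammingDist x y) →
      (Fintype.card G : ℝ) ^ n * ∑ x, f x ^ 2 - (∑ x, f x) ^ 2
        ≤ n * ((Fintype.card G : ℝ) ^ n) ^ 2 := by
  induction n with
  | zero => intro f _; simp
  | succ n ih =>
    intro f hf
    set N : ℝ := (Fintype.card G : ℝ) ^ n with hN
    set g : ℝ := (Fintype.card G : ℝ) with hg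
    have hg0 : 0 ≤ g := by positivity
    have e : ∀ F : (Fin (n+1) → G) → ℝ, ∑ x, F x = ∑ a : G, ∑ x : Fin n → G, F (Fin.cons a x) := by
      intro F
      rw [← (Fin.consEquiv (fun _ : Fin (n+1) => G)).sum_comp, Fintype.sum_prod_type]
      rfl
    rw [e, e]
    set S : G → ℝ := fun a => ∑ x : Fin n → G, f (Fin.cons a x) with hS
    have hcons : ∀ (a : G) (x y : Fin n → G),
        hammingDist (Fin.cons a x : Fin (n+1) → G) (Fin.cons a y) = hammingDist x y := by
      intro a x y
      simp [hammingDist, Fin.univ_succ, Finset.filter_insert, Finset.filter_map]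
    have hcons' : ∀ (a b : G) (x : Fin n → G),
        hammingDist (Fin.cons a x : Fin (n+1) → G) (Fin.cons b x) ≤ 1 := by
      intro a b x
      by_cases h : a = b <;>
      simp [hammingDist, Fin.univ_succ, Finset.filter_insert, Finset.filter_map, h]
    have h1 : ∀ a, N * ∑ x : Fin n → G, f (Fin.cons a x) ^ 2 ≤ S a ^ 2 + n * N ^ 2 := by
      intro a
      have := ih (fun x => f (Fin.cons a x)) (fun x y => by
        rw [← hcons a x y]; exact hf _ _)
      linarith
    have h2 : ∑ a, ∑ b, (S a - S b) ^ 2 ≤ g ^ 2 * N ^ 2 := by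
      have : ∀ a b, (S a - S b) ^ 2 ≤ N ^ 2 := by
        intro a b
        apply sq_le_sq'
        all_goals
          have : |S a - S b| ≤ N := by
            rw [hS]
            simp only [← Finset.sum_sub_distrib]
            refine (Finset.abs_sum_le_sum_abs _ _).trans ?_
            refine (Finset.sum_le_sum (g := fun _ => (1:ℝ)) fun x _ => (hf _ _).trans ?_).trans ?_
            · exact_mod_cast hcons' a b x
            · simp [hN, hg]
          have := abs_le.1 this
          linarith
      refine (Finset.sum_le_sum fun a _ => Finset.sum_le_sum fun b _ => this a b).trans ?_
      simp only [Finset.sum_const, Finset.card_univ, nsmul_eq_mul, ← hg]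
      apply le_of_eq; ring
    rw [arp_sum_sq_sub] at h2
    have h3 : N * ∑ a, ∑ x : Fin n → G, f (Fin.cons a x) ^ 2 ≤ ∑ a, S a ^ 2 + g * (n * N ^ 2) := by
      rw [Finset.mul_sum]
      refine (Finset.sum_le_sum fun a _ => h1 a).trans ?_
      simp [Finset.sum_add_distrib, hg]
    have h4 := mul_le_mul_of_nonneg_left h3 hg0
    have h5 : 0 ≤ g ^ 2 * N ^ 2 := by positivity
    rw [pow_succ, ← hN]
    push_cast
    nlinarith

/-- Concentration of measure in Hamming cubes. -/
theorem arp_concentration {G : Type*} [Fintype G] [DecidableEq G] (n : ℕ)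
    (A B : Finset (Fin n → G)) (hA : A.Nonempty) (δ : ℝ) (hδ : 0 < δ) (hn : 0 < n)
    (hB : ∀ b ∈ B, ∀ a ∈ A, δ * n < hammingDist b a) :
    (A.card : ℝ) * B.card * (δ ^ 2 * n) ≤ ((Fintype.card G : ℝ) ^ n) ^ 2 := by
  set f : (Fin n → G) → ℕ := fun x => A.inf' hA (fun a => hammingDist x a) with hf
  have hle : ∀ x y, f x ≤ f y + hammingDist x y := by
    intro x y
    obtain ⟨a, ha, h⟩ := Finset.exists_mem_eq_inf' hA (fun a => hammingDist y a)
    have h1 : f x ≤ hammingDist x a := Finset.inf'_le _ ha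
    have h2 := hammingDist_triangle x y a
    simp only [hf] at *
    omega
  have hlip : ∀ x y, |(f x : ℝ) - f y| ≤ hammingDist x y := by
    intro x y
    have h1 := hle x y
    have h2 := hle y x
    rw [hammingDist_comm] at h2
    rw [abs_le]
    have h1' : (f x : ℝ) ≤ f y + hammingDist x y := by exact_mod_cast h1
    have h2' : (f y : ℝ) ≤ f x + hammingDist x y := by exact_mod_cast h2
    constructor <;> linarith
  have hv := arp_variance n (fun x => (f x : ℝ)) hlip
  have hs := arp_sum_sq_sub (fun x : Fin n → G => (f x : ℝ))
  have hA0 : ∀ a ∈ A, f a = 0 := by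
    intro a ha
    have : f a ≤ hammingDist a a := Finset.inf'_le _ ha
    simpa using this
  have hBl : ∀ b ∈ B, δ * n ≤ f b := by
    intro b hb
    obtain ⟨a, ha, h⟩ := Finset.exists_mem_eq_inf' hA (fun a => hammingDist b a)
    have := (hB b hb a ha).le
    rw [hf]; simp only; rw [h]; exact this
  have hAB : Disjoint A B := by
    rw [Finset.disjoint_left]
    intro a ha hb
    have h1 := hBl a hb
    rw [hA0 a ha] at h1
    have : 0 < δ * n := by positivity
    simp at h1; linarith
  have hn' : (0:ℝ) < n := by exact_mod_cast hn
  have hlow : 2 * ((A.card : ℝ) * B.card * (δ * n) ^ 2) ≤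
      ∑ x, ∑ y, ((f x : ℝ) - f y) ^ 2 := by
    have key : ∀ C D : Finset (Fin n → G), (∀ x ∈ C, ∀ y ∈ D, (δ * n)^2 ≤ ((f x : ℝ) - f y) ^ 2) →
        (C.card : ℝ) * D.card * (δ * n) ^ 2 ≤ ∑ x ∈ C, ∑ y, ((f x : ℝ) - f y) ^ 2 := by
      intro C D h
      calc (C.card : ℝ) * D.card * (δ * n) ^ 2 = ∑ x ∈ C, ∑ y ∈ D, (δ * n) ^ 2 := by
            simp; ring
        _ ≤ ∑ x ∈ C, ∑ y ∈ D, ((f x : ℝ) - f y) ^ 2 :=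
            Finset.sum_le_sum fun x hx => Finset.sum_le_sum fun y hy => h x hx y hy
        _ ≤ _ := Finset.sum_le_sum fun x hx =>
            Finset.sum_le_sum_of_subset_of_nonneg (Finset.subset_univ _)
              (fun _ _ _ => sq_nonneg _)
    have k1 := key A B (fun x hx y hy => by
      rw [hA0 x hx]; have := hBl y hy
      have : 0 < δ * n := by positivity
      push_cast
      nlinarith)
    have k2 := key B A (fun x hx y hy => by
      rw [hA0 y hy]; have := hBl x hx
      have : 0 < δ * n := by positivity
      push_cast
      nlinarith)
    have k3 : ∑ x ∈ A ∪ B, ∑ y, ((f x : ℝ) - f y) ^ 2 ≤ ∑ x, ∑ y, ((f x : ℝ) - f y) ^ 2 :=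
      Finset.sum_le_sum_of_subset_of_nonneg (Finset.subset_univ _)
              (fun _ _ _ => Finset.sum_nonneg fun _ _ => sq_nonneg _)
    rw [Finset.sum_union hAB] at k3
    linarith
  have hc : (Fintype.card (Fin n → G) : ℝ) = (Fintype.card G : ℝ) ^ n := by simp
  rw [hs, hc] at hlow
  have : (n:ℝ) * ((A.card : ℝ) * B.card * (δ ^ 2 * n)) ≤ n * ((Fintype.card G : ℝ) ^ n) ^ 2 := by
    calc _ = (A.card : ℝ) * B.card * (δ * n) ^ 2 := by ring
      _ ≤ _ := by linarith
  exact le_of_mul_le_mul_left this hn'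

/-- Ramsey consequence. -/
theorem arp_hamming_ramsey {G K : Type*} [Fintype G] [DecidableEq G] [Nonempty G] [Fintype K]
    (σ : K → Equiv.Perm G) (r : ℕ) (δ : ℝ) (hδ : 0 < δ) :
    ∃ n : ℕ, 0 < n ∧ ∀ c : (Fin n → G) → Fin r, ∃ (g : Fin n → G) (j : Fin r), ∀ k : K,
      ∃ h : Fin n → G, c h = j ∧ (hammingDist (fun i => σ k (g i)) h : ℝ) ≤ δ * n := by
  classical
  obtain ⟨n, hn⟩ := exists_nat_gt ((r : ℝ) * Fintype.card K / δ ^ 2)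
  have hn0 : (0:ℝ) < n := lt_of_le_of_lt (by positivity) hn
  have hn1 : 0 < n := by exact_mod_cast hn0
  refine ⟨n, hn1, fun c => ?_⟩
  have hr : 0 < r := (c (fun _ => Classical.arbitrary G)).pos
  have : Nonempty (Fin r) := ⟨⟨0, hr⟩⟩
  set N : ℝ := (Fintype.card G : ℝ) ^ n with hN
  have hNpos : 0 < N := by
    have : 0 < Fintype.card G := Fintype.card_pos
    positivity
  obtain ⟨j, hj⟩ := Fintype.exists_le_card_fiber_of_nsmul_le_card c (b := N / r) (by
    simp [hN]
    rw [mul_div_cancel₀]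
    positivity)
  set A : Finset (Fin n → G) := {x | c x = j} with hA
  have hApos : (0:ℝ) < A.card := lt_of_lt_of_le (by positivity) hj
  have hAne : A.Nonempty := by
    rw [← Finset.card_pos]; exact_mod_cast hApos
  set B : Finset (Fin n → G) := {x | ∀ a ∈ A, δ * n < hammingDist x a} with hB
  have hconc := arp_concentration n A B hAne δ hδ hn1 (fun b hb => by
    simpa [hB] using hb)
  have hsmall : (Fintype.card K : ℝ) * B.card < N := by
    rw [div_lt_iff₀ (by positivity)] at hn
    by_contra hcon
    push Not at hcon
    have hBpos : (0:ℝ) < B.card := by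
      rcases (Nat.cast_nonneg (α := ℝ) B.card).lt_or_eq with h | h
      · exact h
      · rw [← h] at hcon; simp at hcon; linarith
    rw [← hN] at hconc
    have hj' : N ≤ A.card * r := by
      rwa [div_le_iff₀ (by positivity)] at hj
    have h1 : N * N ≤ (A.card * r) * (Fintype.card K * B.card) :=
      mul_le_mul hj' hcon hNpos.le (by positivity)
    have h2 : (A.card * r : ℝ) * (Fintype.card K * B.card) < A.card * B.card * (δ ^ 2 * n) := by
      have : (0:ℝ) < A.card * B.card := by positivity
      calc (A.card * r : ℝ) * (Fintype.card K * B.card) 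
          = A.card * B.card * (r * Fintype.card K) := by ring
        _ < _ := by
          apply mul_lt_mul_of_pos_left _ this
          linarith
    nlinarith
  have hex : ∃ g : Fin n → G, ∀ k, (fun i => σ k (g i)) ∉ B := by
    by_contra hcon
    push Not at hcon
    have hcov : (Finset.univ : Finset (Fin n → G)) ⊆
        Finset.univ.biUnion (fun k : K => B.image (fun x i => (σ k).symm (x i))) := by
      intro g _
      obtain ⟨k, hk⟩ := hcon g
      simp only [Finset.mem_biUnion, Finset.mem_univ, true_and, Finset.mem_image]
      exact ⟨k, _, hk, by simp⟩
    have h1 := (Finset.card_le_card hcov).trans Finset.card_biUnion_le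
    have h2 : ∑ k : K, (B.image (fun x i => (σ k).symm (x i))).card ≤ ∑ k : K, B.card :=
      Finset.sum_le_sum fun k _ => Finset.card_image_le
    have h3 := h1.trans h2
    have h4 : N ≤ Fintype.card K * B.card := by
      rw [hN]
      simp at h3
      exact_mod_cast h3
    linarith
  obtain ⟨g, hg⟩ := hex
  refine ⟨g, j, fun k => ?_⟩
  have := hg k
  simp only [hB, Finset.mem_filter, Finset.mem_univ, true_and] at this
  push Not at this
  obtain ⟨h, hh, hle⟩ := this
  exact ⟨h, by simpa [hA] using hh, hle⟩


theorem arp_extend {X Y : Type*} [NormedAddCommGroup X] [NormedSpace ℂ X]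
    [NormedAddCommGroup Y] [NormedSpace ℂ Y] (η : X →L[ℂ] Y) (hη : ∀ x, ‖η x‖ = ‖x‖)
    (f : X →L[ℂ] ℂ) : ∃ g : Y →L[ℂ] ℂ, g.comp η = f ∧ ‖g‖ ≤ ‖f‖ := by
  let i : X →ₗᵢ[ℂ] Y := ⟨η.toLinearMap, hη⟩
  let e := i.equivRange
  obtain ⟨g, hg, hn⟩ := exists_extension_norm_eq _
    (f.comp (e.symm.toContinuousLinearEquiv : i.range →L[ℂ] X))
  refine ⟨g, ?_, ?_⟩
  · ext x
    have := hg (e x)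
    simp only [ContinuousLinearMap.comp_apply] at this ⊢
    have h2 : ((e x : _) : Y) = η x := rfl
    rw [h2] at this
    rw [this]
    simp
  · rw [hn]
    refine ContinuousLinearMap.opNorm_le_bound _ (norm_nonneg _) fun y => ?_
    refine (f.le_opNorm _).trans (le_of_eq ?_)
    congr 1
    exact e.symm.norm_map y

theorem arp_comp_norm {X Y Z : Type*} [NormedAddCommGroup X] [NormedSpace ℂ X]
    [NormedAddCommGroup Y] [NormedSpace ℂ Y] [NormedAddCommGroup Z] [NormedSpace ℂ Z]
    (η : X →L[ℂ] Y) (hη : ∀ x, ‖η x‖ = ‖x‖)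
    (f : Y →L[ℂ] Z) : ‖f.comp η‖ ≤ ‖f‖ := by
  refine ContinuousLinearMap.opNorm_le_bound _ (norm_nonneg _) fun x => ?_
  simpa [hη] using f.le_opNorm (η x)

/-- Propagation of a functional along the words of a free group. -/
noncomputable def arpFold {X Y K : Type*} [NormedAddCommGroup X] [NormedSpace ℂ X]
    [NormedAddCommGroup Y] [NormedSpace ℂ Y] (η₀ : X →L[ℂ] Y) (h₀ : ∀ x, ‖η₀ x‖ = ‖x‖)
    (η : K → X →L[ℂ] Y) (hη : ∀ k x, ‖η k x‖ = ‖x‖) (s : Y →L[ℂ] ℂ) :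
    List (K × Bool) → (Y →L[ℂ] ℂ)
  | [] => s
  | (k, true) :: w => (arp_extend η₀ h₀ ((arpFold η₀ h₀ η hη s w).comp (η k))).choose
  | (k, false) :: w => (arp_extend (η k) (hη k) ((arpFold η₀ h₀ η hη s w).comp η₀)).choose

section
variable {X Y K : Type*} [NormedAddCommGroup X] [NormedSpace ℂ X]
    [NormedAddCommGroup Y] [NormedSpace ℂ Y] (η₀ : X →L[ℂ] Y) (h₀ : ∀ x, ‖η₀ x‖ = ‖x‖)
    (η : K → X →L[ℂ] Y) (hη : ∀ k x, ‖η k x‖ = ‖x‖) (s : Y →L[ℂ] ℂ)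

theorem arpFold_norm (hs : ‖s‖ ≤ 1) (w : List (K × Bool)) :
    ‖arpFold η₀ h₀ η hη s w‖ ≤ 1 := by
  induction w with
  | nil => exact hs
  | cons a w ih =>
    obtain ⟨k, b⟩ := a
    cases b
    · exact ((arp_extend (η k) (hη k) _).choose_spec.2.trans (arp_comp_norm _ h₀ _)).trans ih
    · exact ((arp_extend η₀ h₀ _).choose_spec.2.trans (arp_comp_norm _ (hη k) _)).trans ih

theorem arpFold_true (k : K) (w : List (K × Bool)) :
    (arpFold η₀ h₀ η hη s ((k, true) :: w)).comp η₀ = (arpFold η₀ h₀ η hη s w).comp (η k) :=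
  (arp_extend η₀ h₀ _).choose_spec.1

theorem arpFold_false (k : K) (w : List (K × Bool)) :
    (arpFold η₀ h₀ η hη s ((k, false) :: w)).comp (η k) = (arpFold η₀ h₀ η hη s w).comp η₀ :=
  (arp_extend (η k) (hη k) _).choose_spec.1

theorem arpFold_step [DecidableEq K] (k : K) (g : FreeGroup K) :
    (arpFold η₀ h₀ η hη s (FreeGroup.of k * g).toWord).comp η₀
      = (arpFold η₀ h₀ η hη s g.toWord).comp (η k) := by
  have h1 : (FreeGroup.of k * g).toWord = FreeGroup.reduce ((k, true) :: g.toWord) := by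
    rw [FreeGroup.toWord_mul, FreeGroup.toWord_of]; rfl
  rw [h1, FreeGroup.reduce.cons, FreeGroup.reduce_toWord]
  rcases hw : g.toWord with _ | ⟨⟨k', b⟩, tl⟩
  · exact arpFold_true ..
  · simp only
    split_ifs with h
    · obtain ⟨rfl, h2⟩ := h
      have : b = false := by simpa using h2
      subst this
      exact (arpFold_false ..).symm
    · exact arpFold_true ..

end

theorem arp_scale {X Y : Type*} [NormedAddCommGroup X] [NormedSpace ℂ X]
    [NormedAddCommGroup Y] [NormedSpace ℂ Y] (a b : ℝ) (f f' : Y →L[ℂ] ℂ) (η η' : X →L[ℂ] Y)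
    (h : f.comp η = f'.comp η') (h1 : ‖f'.comp η'‖ ≤ 1) :
    ‖((a : ℂ) • f).comp η - ((b : ℂ) • f').comp η'‖ ≤ |a - b| := by
  refine ContinuousLinearMap.opNorm_le_bound _ (abs_nonneg _) fun x => ?_
  have h2 : f (η x) = f' (η' x) := congrArg (fun F : X →L[ℂ] ℂ => F x) h
  have h3 : ‖f' (η' x)‖ ≤ ‖x‖ := by
    simpa using (f'.comp η').le_of_opNorm_le h1 x
  change ‖(a : ℂ) * f (η x) - (b : ℂ) * f' (η' x)‖ ≤ _
  rw [h2, ← sub_mul, ← Complex.ofReal_sub, norm_mul, Complex.norm_real, Real.norm_eq_abs]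
  gcongr

theorem arp_scale' {X Y : Type*} [NormedAddCommGroup X] [NormedSpace ℂ X]
    [NormedAddCommGroup Y] [NormedSpace ℂ Y] (a b : ℝ) (ha : 0 ≤ a) (hb : b = 0)
    (f f' : Y →L[ℂ] ℂ) (η η' : X →L[ℂ] Y) (h1 : ‖f.comp η‖ ≤ 1) :
    ‖((a : ℂ) • f).comp η - ((b : ℂ) • f').comp η'‖ ≤ a := by
  refine ContinuousLinearMap.opNorm_le_bound _ ha fun x => ?_
  have h3 : ‖f (η x)‖ ≤ ‖x‖ := by
    simpa using (f.comp η).le_of_opNorm_le h1 x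
  change ‖(a : ℂ) * f (η x) - (b : ℂ) * f' (η' x)‖ ≤ _
  rw [hb, Complex.ofReal_zero, zero_mul, sub_zero, norm_mul, Complex.norm_real,
    Real.norm_of_nonneg ha]
  gcongr

theorem arp_gadget {X Y : Type*} {K : Type} [NormedAddCommGroup X] [NormedSpace ℂ X]
    [NormedAddCommGroup Y] [NormedSpace ℂ Y] (η₀ : X →L[ℂ] Y) (h₀ : ∀ x, ‖η₀ x‖ = ‖x‖)
    (η : K → X →L[ℂ] Y) (hη : ∀ k x, ‖η k x‖ = ‖x‖) [Fintype K] (R : ℕ) (hR : 0 < R) :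
    ∃ (V : Type) (_ : Fintype V) (v₀ : V) (F : V → (Y →L[ℂ] ℂ) → (Y →L[ℂ] ℂ))
      (π : K → Equiv.Perm V), (∀ v s, ‖s‖ ≤ 1 → ‖F v s‖ ≤ 1) ∧ (∀ s, F v₀ s = s) ∧
      ∀ k v s, ‖s‖ ≤ 1 → ‖(F (π k v) s).comp η₀ - (F v s).comp (η k)‖ ≤ 1 / R := by
  classical
  let V := {g : FreeGroup K // g.norm ≤ R}
  have : Finite V := by
    have : Finite {l : List (K × Bool) | l.length ≤ R} := List.finite_length_le _ R
    exact Finite.of_injective (fun v : V => (⟨v.1.toWord, v.2⟩ : {l : List (K × Bool) | l.length ≤ R}))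
      (fun a b h => Subtype.ext (FreeGroup.toWord_injective (congrArg Subtype.val h)))
  let _ : Fintype V := Fintype.ofFinite V
  let D : Set V := {v | v.1.norm < R}
  have hstep : ∀ k (g : FreeGroup K), (FreeGroup.of k * g).norm ≤ g.norm + 1 := fun k g => by
    have := FreeGroup.norm_mul_le (FreeGroup.of k) g
    rw [FreeGroup.norm_of] at this; omega
  have hstep' : ∀ k (g : FreeGroup K), ((FreeGroup.of k)⁻¹ * g).norm ≤ g.norm + 1 := fun k g => by
    have := FreeGroup.norm_mul_le (FreeGroup.of k)⁻¹ g
    rw [FreeGroup.norm_inv_eq, FreeGroup.norm_of] at this; omega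
  have hstep'' : ∀ k (g : FreeGroup K), g.norm ≤ (FreeGroup.of k * g).norm + 1 := fun k g => by
    simpa using hstep' k (FreeGroup.of k * g)
  have hperm : ∀ k, ∃ π : Equiv.Perm V, ∀ v ∈ D, (π v).1 = FreeGroup.of k * v.1 := by
    intro k
    let f : V → V := fun v => if h : v.1.norm < R then ⟨FreeGroup.of k * v.1,
      (hstep k v.1).trans h⟩ else v
    have hf : ∀ v ∈ D, (f v).1 = FreeGroup.of k * v.1 := fun v hv => by
      have hv' : v.1.norm < R := hv
      simp [f, hv']
    obtain ⟨g, hg⟩ := Set.MapsTo.exists_equiv_extend_of_card_eq (α := V) (β := V)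
      (t := Finset.univ) (by simp) (s := D) (f := f) (fun _ _ => by simp)
      (fun a ha b hb h => by
        have := congrArg Subtype.val h
        rw [hf a ha, hf b hb] at this
        exact Subtype.ext (mul_left_cancel this))
    refine ⟨g.trans (Equiv.subtypeUnivEquiv (by simp)), fun v hv => ?_⟩
    rw [← hf v hv, ← hg v hv]
    rfl
  choose π hπ using hperm
  have hR' : (0:ℝ) < R := by exact_mod_cast hR
  let sc : V → ℝ := fun v => 1 - v.1.norm / R
  have hsc0 : ∀ v, 0 ≤ sc v := fun v => by
    have : (v.1.norm : ℝ) ≤ R := by exact_mod_cast v.2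
    have := (div_le_one hR').2 this
    simp only [sc]; linarith
  have hsc1 : ∀ v, sc v ≤ 1 := fun v => by
    have : (0:ℝ) ≤ v.1.norm / R := by positivity
    simp only [sc]; linarith
  let F0 : V → (Y →L[ℂ] ℂ) → (Y →L[ℂ] ℂ) := fun v s => arpFold η₀ h₀ η hη s v.1.toWord
  refine ⟨V, inferInstance, ⟨1, by simp⟩, fun v s => ((sc v : ℝ) : ℂ) • F0 v s, π, ?_, ?_, ?_⟩
  · intro v s hs
    rw [norm_smul, Complex.norm_real, Real.norm_of_nonneg (hsc0 v)]
    exact mul_le_one₀ (hsc1 v) (norm_nonneg _) (arpFold_norm _ _ _ _ _ hs _)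
  · intro s
    simp [sc, F0, arpFold]
  · intro k v s hs
    have hn0 : ‖(F0 (π k v) s).comp η₀‖ ≤ 1 :=
      (arp_comp_norm _ h₀ _).trans (arpFold_norm _ _ _ _ _ hs _)
    have hnk : ‖(F0 v s).comp (η k)‖ ≤ 1 :=
      (arp_comp_norm _ (hη k) _).trans (arpFold_norm _ _ _ _ _ hs _)
    by_cases hv : v ∈ D
    · have h1 := hπ k v hv
      have h2 : (F0 (π k v) s).comp η₀ = (F0 v s).comp (η k) := by
        simp only [F0]
        rw [h1]
        exact arpFold_step ..
      refine (arp_scale _ _ _ _ _ _ h2 hnk).trans ?_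
      have e1 := hstep k v.1
      have e2 := hstep'' k v.1
      simp only [sc]
      rw [h1, abs_le]
      have e1' : ((FreeGroup.of k * v.1).norm : ℝ) ≤ v.1.norm + 1 := by exact_mod_cast e1
      have e2' : (v.1.norm : ℝ) ≤ (FreeGroup.of k * v.1).norm + 1 := by exact_mod_cast e2
      have e3 := div_le_div_of_nonneg_right e1' hR'.le
      have e4 := div_le_div_of_nonneg_right e2' hR'.le
      rw [add_div] at e3 e4
      constructor <;> linarith
    · have hvR : v.1.norm = R := le_antisymm v.2 (not_lt.1 hv)
      have h0 : sc v = 0 := by simp [sc, hvR, hR'.ne']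
      have hbig : R ≤ (π k v).1.norm + 1 := by
        by_contra hcon
        push Not at hcon
        have e1 := hstep' k (π k v).1
        let u : V := ⟨(FreeGroup.of k)⁻¹ * (π k v).1, by omega⟩
        have hu : u ∈ D := by change ((FreeGroup.of k)⁻¹ * (π k v).1).norm < R; omega
        have h3 : π k u = π k v := Subtype.ext (by rw [hπ k u hu]; simp [u])
        exact hv ((π k).injective h3 ▸ hu)
      refine (arp_scale' _ _ (hsc0 _) h0 _ _ _ _ hn0).trans ?_
      have hb' : (R:ℝ) ≤ (π k v).1.norm + 1 := by exact_mod_cast hbig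
      have e3 := div_le_div_of_nonneg_right hb' hR'.le
      rw [add_div, div_self hR'.ne'] at e3
      simp only [sc]; linarith

/-- An approximately homogeneous finite family of isometric embeddings. -/
theorem arp_family {X Y : Type u} {K : Type} [NormedAddCommGroup X] [NormedSpace ℂ X]
    [NormedAddCommGroup Y] [NormedSpace ℂ Y] [FiniteDimensional ℂ Y]
    (η₀ : X →L[ℂ] Y) (h₀ : ∀ x, ‖η₀ x‖ = ‖x‖)
    (η : K → X →L[ℂ] Y) (hη : ∀ k x, ‖η k x‖ = ‖x‖) [Fintype K] (R : ℕ) (hR : 0 < R) :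
    ∃ (W : Type u) (_ : NormedAddCommGroup W) (_ : NormedSpace ℂ W) (_ : FiniteDimensional ℂ W)
      (G : Type) (_ : Fintype G) (_ : Nonempty G) (σ : K → Equiv.Perm G) (γ : G → Y →L[ℂ] W),
      (∀ g y, ‖γ g y‖ = ‖y‖) ∧
      ∀ k g, ‖(γ (σ k g)).comp η₀ - (γ g).comp (η k)‖ ≤ 1 / R := by
  classical
  obtain ⟨V, _, v₀, F, π, hF1, hF0, hFπ⟩ := arp_gadget η₀ h₀ η hη R hR
  let S := {s : Y →L[ℂ] ℂ // ‖s‖ ≤ 1}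
  let E := lp (fun _ : V × S => ℂ) ⊤
  have hb : ∀ (g : Equiv.Perm V) (y : Y) (t : V × S), ‖F (g t.1) t.2.1 y‖ ≤ ‖y‖ := by
    intro g y t
    refine ((F (g t.1) t.2.1).le_opNorm y).trans ?_
    exact mul_le_of_le_one_left (norm_nonneg _) (hF1 _ _ t.2.2)
  let Γ₀ : Equiv.Perm V → Y →ₗ[ℂ] E := fun g =>
    { toFun := fun y => ⟨fun t => F (g t.1) t.2.1 y,
        memℓp_infty ⟨‖y‖, by rintro _ ⟨t, rfl⟩; exact hb g y t⟩⟩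
      map_add' := fun x y => by
        apply Subtype.ext; funext t; exact map_add _ _ _
      map_smul' := fun c x => by
        apply Subtype.ext; funext t; exact map_smul _ _ _ }
  have hΓ : ∀ g y t, (Γ₀ g y : V × S → ℂ) t = F (g t.1) t.2.1 y := fun _ _ _ => rfl
  have hΓn : ∀ g y, ‖Γ₀ g y‖ = ‖y‖ := by
    intro g y
    apply le_antisymm
    · exact lp.norm_le_of_forall_le (norm_nonneg _) (fun t => hb g y t)
    · obtain ⟨s, hs, hsy⟩ := exists_dual_vector'' ℂ y
      have h1 := lp.norm_apply_le_norm (p := ⊤) (by simp) (Γ₀ g y) (g.symm v₀, ⟨s, hs⟩)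
      rw [hΓ] at h1
      simpa [hF0, hsy] using h1
  let W : Submodule ℂ E := ⨆ g, LinearMap.range (Γ₀ g)
  have hmem : ∀ g y, Γ₀ g y ∈ W := fun g y =>
    (le_iSup (fun g => LinearMap.range (Γ₀ g)) g) ⟨y, rfl⟩
  let γ : Equiv.Perm V → Y →L[ℂ] W := fun g =>
    LinearMap.mkContinuous ((Γ₀ g).codRestrict W (hmem g)) 1 (fun y => by
      rw [one_mul]; exact (hΓn g y).le)
  refine ⟨W, inferInstance, inferInstance, inferInstance, Equiv.Perm V, inferInstance,
    inferInstance, fun k => Equiv.mulLeft (π k), γ, fun g y => hΓn g y, ?_⟩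
  intro k g
  refine ContinuousLinearMap.opNorm_le_bound _ (by positivity) fun x => ?_
  change ‖Γ₀ (π k * g) (η₀ x) - Γ₀ g (η k x)‖ ≤ _
  refine lp.norm_le_of_forall_le (by positivity) fun t => ?_
  change ‖F (π k (g t.1)) t.2.1 (η₀ x) - F (g t.1) t.2.1 (η k x)‖ ≤ _
  have := ((F (π k (g t.1)) t.2.1).comp η₀ - (F (g t.1) t.2.1).comp (η k)).le_opNorm x
  refine le_trans this ?_
  gcongr
  exact hFπ k _ _ t.2.2

theorem arp_net {X Y : Type*} [NormedAddCommGroup X] [NormedSpace ℂ X] [FiniteDimensional ℂ X]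
    [NormedAddCommGroup Y] [NormedSpace ℂ Y] [FiniteDimensional ℂ Y] (ε : ℝ) (hε : 0 < ε) :
    ∃ (m : ℕ) (η : Fin m → X →L[ℂ] Y), (∀ k x, ‖η k x‖ = ‖x‖) ∧
      ∀ θ : X →L[ℂ] Y, (∀ x, ‖θ x‖ = ‖x‖) → ∃ k, ‖θ - η k‖ ≤ ε := by
  classical
  let S : Set (X →L[ℂ] Y) := {θ | ∀ x, ‖θ x‖ = ‖x‖}
  have : ProperSpace (X →L[ℂ] Y) := FiniteDimensional.proper ℂ _
  have hS : TotallyBounded S := by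
    refine (isCompact_closedBall (0 : X →L[ℂ] Y) 1).totallyBounded.subset fun θ hθ => ?_
    rw [mem_closedBall_zero_iff]
    exact ContinuousLinearMap.opNorm_le_bound _ zero_le_one fun x => by rw [hθ x, one_mul]
  obtain ⟨t, htS, htf, hcov⟩ := Metric.finite_approx_of_totallyBounded hS ε hε
  let e := htf.toFinset.equivFin
  refine ⟨_, fun k => (e.symm k).1, fun k => ?_, fun θ hθ => ?_⟩
  · have := (e.symm k).2
    rw [Set.Finite.mem_toFinset] at this
    exact htS this
  · have := hcov hθ
    simp only [Set.mem_iUnion] at this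
    obtain ⟨y, hy, hd⟩ := this
    refine ⟨e ⟨y, by simpa using hy⟩, ?_⟩
    rw [Metric.mem_ball, dist_eq_norm] at hd
    simpa using hd.le

/-- Averaged diagonal embedding. -/
theorem arp_diag {Y W : Type*} [NormedAddCommGroup Y] [NormedSpace ℂ Y]
    [NormedAddCommGroup W] [NormedSpace ℂ W] (n : ℕ) (hn : 0 < n) :
    ∃ D : (Fin n → Y →L[ℂ] W) → (Y →L[ℂ] PiLp 1 (fun _ : Fin n => W)),
      ∀ f y, D f y = ((n : ℂ)⁻¹) • WithLp.toLp 1 (fun i => f i y) := by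
  refine ⟨fun f => ((n : ℂ)⁻¹) •
    ((PiLp.continuousLinearEquiv 1 ℂ (fun _ : Fin n => W)).symm :
      (Fin n → W) →L[ℂ] PiLp 1 (fun _ : Fin n => W)).comp (ContinuousLinearMap.pi f), fun f y => ?_⟩
  rfl

/-- Discrete approximate Ramsey property of the class of finite-dimensional complex normed
spaces. -/
theorem discrete_arp_fd_complex_normed_spaces
    (X Y : Type u) [NormedAddCommGroup X] [NormedSpace ℂ X] [FiniteDimensional ℂ X]
    [NormedAddCommGroup Y] [NormedSpace ℂ Y] [FiniteDimensional ℂ Y]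
    (r : ℕ) (ε : ℝ) (hε : 0 < ε) :
    ∃ (Z : Type u) (_ : NormedAddCommGroup Z) (_ : NormedSpace ℂ Z)
      (_ : FiniteDimensional ℂ Z),
      ∀ c : {φ : X →L[ℂ] Z // ∀ x, ‖φ x‖ = ‖x‖} → Fin r,
        ∃ (γ : Y →L[ℂ] Z) (_ : ∀ y, ‖γ y‖ = ‖y‖) (j : Fin r),
          ∀ η : X →L[ℂ] Y, (∀ x, ‖η x‖ = ‖x‖) →
            ∃ (ξ : X →L[ℂ] Z) (hξ : ∀ x, ‖ξ x‖ = ‖x‖),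
              c ⟨ξ, hξ⟩ = j ∧ ‖γ.comp η - ξ‖ ≤ ε := by
  classical
  by_cases hne : ∃ η₀ : X →L[ℂ] Y, ∀ x, ‖η₀ x‖ = ‖x‖
  swap
  · refine ⟨X × Y, inferInstance, inferInstance, inferInstance, fun c => ?_⟩
    refine ⟨ContinuousLinearMap.inr ℂ X Y, fun y => by simp [Prod.norm_def],
      c ⟨ContinuousLinearMap.inl ℂ X Y, fun y => by simp [Prod.norm_def]⟩, fun η hη => ?_⟩
    exact (hne ⟨η, hη⟩).elim
  obtain ⟨η₀, h₀⟩ := hne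
  obtain ⟨m, η, hη, hnet⟩ := arp_net (X := X) (Y := Y) (ε / 3) (by positivity)
  obtain ⟨R, hR⟩ := exists_nat_gt (3 / ε)
  have hR0 : (0 : ℝ) < R := lt_trans (by positivity) hR
  have hRε : 1 / (R : ℝ) ≤ ε / 3 := by
    rw [div_lt_iff₀ hε] at hR
    rw [div_le_iff₀ hR0]; linarith
  obtain ⟨W, _, _, _, G, _, _, σ, γ, hγ, hσ⟩ :=
    arp_family η₀ h₀ η hη R (by exact_mod_cast hR0)
  obtain ⟨n, hn, hram⟩ := arp_hamming_ramsey σ r (ε / 6) (by positivity)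
  have hn0 : (0 : ℝ) < n := by exact_mod_cast hn
  obtain ⟨D, hD⟩ := arp_diag (Y := Y) (W := W) n hn
  have hDn : ∀ f y, ‖D f y‖ = (n : ℝ)⁻¹ * ∑ i, ‖f i y‖ := by
    intro f y
    rw [hD, norm_smul, PiLp.norm_eq_of_L1]
    simp
  have hDiso : ∀ g : Fin n → G, ∀ y, ‖D (fun i => γ (g i)) y‖ = ‖y‖ := by
    intro g y
    rw [hDn]
    simp only [hγ, Finset.sum_const, Finset.card_univ, Fintype.card_fin, nsmul_eq_mul]
    field_simp
  have hisoX : ∀ g : Fin n → G, ∀ x, ‖(D (fun i => γ (g i))).comp η₀ x‖ = ‖x‖ := by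
    intro g x
    rw [ContinuousLinearMap.comp_apply, hDiso, h₀]
  refine ⟨PiLp 1 (fun _ : Fin n => W), inferInstance, inferInstance, inferInstance, fun c => ?_⟩
  obtain ⟨g, j, hgj⟩ := hram (fun h => c ⟨(D (fun i => γ (h i))).comp η₀, hisoX h⟩)
  refine ⟨D (fun i => γ (g i)), hDiso g, j, fun θ hθ => ?_⟩
  obtain ⟨k, hk⟩ := hnet θ hθ
  obtain ⟨h, hc, hd⟩ := hgj k
  refine ⟨(D (fun i => γ (h i))).comp η₀, hisoX h, hc, ?_⟩
  refine ContinuousLinearMap.opNorm_le_bound _ hε.le fun x => ?_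
  -- three pieces
  have p1 : ‖D (fun i => γ (g i)) (θ x) - D (fun i => γ (g i)) (η k x)‖ ≤ ε / 3 * ‖x‖ := by
    rw [← map_sub, hDiso]
    exact (ContinuousLinearMap.le_opNorm (θ - η k) x).trans (by gcongr)
  have hsub : ∀ f f' y y', ‖D f y - D f' y'‖ = (n : ℝ)⁻¹ * ∑ i, ‖f i y - f' i y'‖ := by
    intro f f' y y'
    rw [hD, hD, ← smul_sub, norm_smul, PiLp.norm_eq_of_L1]
    simp
  have p2 : ‖D (fun i => γ (g i)) (η k x) - D (fun i => γ (σ k (g i))) (η₀ x)‖ ≤ ε / 3 * ‖x‖ := by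
    rw [hsub]
    have : ∀ i, ‖γ (g i) (η k x) - γ (σ k (g i)) (η₀ x)‖ ≤ ε / 3 * ‖x‖ := by
      intro i
      rw [norm_sub_rev]
      refine (ContinuousLinearMap.le_opNorm
        ((γ (σ k (g i))).comp η₀ - (γ (g i)).comp (η k)) x).trans ?_
      gcongr
      exact (hσ k (g i)).trans hRε
    rw [inv_mul_le_iff₀ hn0]
    refine (Finset.sum_le_sum fun i _ => this i).trans ?_
    simp
  have p3 : ‖D (fun i => γ (σ k (g i))) (η₀ x) - D (fun i => γ (h i)) (η₀ x)‖ ≤ ε / 3 * ‖x‖ := by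
    rw [hsub]
    have : ∀ i, ‖γ (σ k (g i)) (η₀ x) - γ (h i) (η₀ x)‖ ≤
        if σ k (g i) ≠ h i then 2 * ‖x‖ else 0 := by
      intro i
      split_ifs with hi
      · refine (norm_sub_le _ _).trans (le_of_eq ?_)
        rw [hγ, hγ, h₀]; ring
      · push Not at hi
        rw [hi]; simp
    rw [inv_mul_le_iff₀ hn0]
    refine (Finset.sum_le_sum fun i _ => this i).trans ?_
    rw [← Finset.sum_filter, Finset.sum_const, nsmul_eq_mul]
    change (hammingDist (fun i => σ k (g i)) h : ℝ) * _ ≤ _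
    calc (hammingDist (fun i => σ k (g i)) h : ℝ) * (2 * ‖x‖) ≤ ε / 6 * n * (2 * ‖x‖) := by gcongr
      _ = _ := by ring
  calc ‖((D (fun i => γ (g i))).comp θ - (D (fun i => γ (h i))).comp η₀) x‖
      = ‖(D (fun i => γ (g i)) (θ x) - D (fun i => γ (g i)) (η k x))
        + (D (fun i => γ (g i)) (η k x) - D (fun i => γ (σ k (g i))) (η₀ x))
        + (D (fun i => γ (σ k (g i))) (η₀ x) - D (fun i => γ (h i)) (η₀ x))‖ := by
          congr 1
          simp only [sub_apply, ContinuousLinearMap.comp_apply]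
          abel
    _ ≤ ε / 3 * ‖x‖ + ε / 3 * ‖x‖ + ε / 3 * ‖x‖ :=
        (norm_add₃_le).trans (add_le_add (add_le_add p1 p2) p3)
    _ = ε * ‖x‖ := by ring
end

section
/- The class of finite-dimensional complex normed spaces satisfies the stable Ramsey property with modulus ϖ(δ) = δ: for all finite-dimensional complex normed spaces X and Y, every δ ≥ 0, and every ε > 0, there exists a finite-dimensional complex normed space Z such that for every 1-Lipschitz map c from the set of linear δ-embeddings of X into Z (with the operator-norm metric) to [0,1], there exists a linear isometric embedding γ : Y → Z such that |c(γ ∘ η₀) − c(γ ∘ η₁)| ≤ ε + δ for all linear δ-embeddings η₀, η₁ of X into Y. -/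
universe u

/-- A linear `δ`-embedding between normed spaces: a contraction whose inverse (on its range) has
norm at most `1 + δ`. `0`-embeddings are exactly the linear isometric embeddings. -/
def IsDeltaEmbedding {X Y : Type*} [NormedAddCommGroup X] [NormedSpace ℂ X]
    [NormedAddCommGroup Y] [NormedSpace ℂ Y] (δ : ℝ) (φ : X →L[ℂ] Y) : Prop :=
  ∀ x : X, ‖φ x‖ ≤ ‖x‖ ∧ ‖x‖ ≤ (1 + δ) * ‖φ x‖

open Classical in
/-- Toggle the head letter `e` of a reduced word, staying within length `R`. -/
noncomputable def toggleWord {E : Type*} (R : ℕ) (e : E) (l : List E) : List E :=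
  if l.head? = some e then l.tail else if l.length < R then e :: l else l

lemma toggleWord_mem {E : Type*} (R : ℕ) (e : E) (l : List E)
    (h : l.IsChain (· ≠ ·) ∧ l.length ≤ R) :
    (toggleWord R e l).IsChain (· ≠ ·) ∧ (toggleWord R e l).length ≤ R := by
  unfold toggleWord
  split_ifs with h1 h2
  · refine ⟨h.1.tail, ?_⟩
    have := h.2
    simp only [List.length_tail]
    omega
  · refine ⟨List.isChain_cons.2 ⟨?_, h.1⟩, by simpa using h2⟩
    rintro y hy rfl
    exact h1 hy
  · exact h

lemma toggleWord_invol {E : Type*} (R : ℕ) (e : E) (l : List E)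
    (h : l.IsChain (· ≠ ·) ∧ l.length ≤ R) :
    toggleWord R e (toggleWord R e l) = l := by
  by_cases h1 : l.head? = some e
  · obtain ⟨t, rfl⟩ : ∃ t, l = e :: t := by
      cases l with
      | nil => simp at h1
      | cons a t => simp at h1; exact ⟨t, by rw [h1]⟩
    have h3 : t.head? ≠ some e := fun h4 => (List.isChain_cons.1 h.1).1 e h4 rfl
    have h4 : t.length < R := by have := h.2; simp at this; omega
    simp [toggleWord, h3, h4]
  · by_cases h2 : l.length < R
    · simp [toggleWord, h1, h2]
    · simp [toggleWord, h1, h2]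

lemma hb_ext {X Y : Type*} [NormedAddCommGroup X] [NormedSpace ℂ X]
    [NormedAddCommGroup Y] [NormedSpace ℂ Y] (δ : ℝ) (hδ : 0 ≤ δ) (φ : X →L[ℂ] Y)
    (hφ : IsDeltaEmbedding δ φ) (f : StrongDual ℂ X) (hf : ‖f‖ ≤ 1 / (1 + δ)) :
    ∃ g : StrongDual ℂ Y, ‖g‖ ≤ 1 ∧ g.comp φ = f := by
  have hinj : Function.Injective (φ : X →ₗ[ℂ] Y) := by
    rw [← LinearMap.ker_eq_bot, LinearMap.ker_eq_bot']
    intro x hx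
    have := (hφ x).2
    have hx' : φ x = 0 := hx
    rw [hx'] at this
    simpa using this
  let e := LinearEquiv.ofInjective (φ : X →ₗ[ℂ] Y) hinj
  have hb : ∀ z, ‖(f.toLinearMap.comp e.symm.toLinearMap) z‖ ≤ 1 * ‖z‖ := by
    intro z
    obtain ⟨x, rfl⟩ := e.surjective z
    have h1 : ‖e x‖ = ‖φ x‖ := rfl
    simp only [LinearMap.comp_apply, LinearEquiv.coe_coe, LinearEquiv.symm_apply_apply, h1, one_mul]
    calc ‖f x‖ ≤ ‖f‖ * ‖x‖ := f.le_opNorm x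
      _ ≤ 1 / (1 + δ) * ((1 + δ) * ‖φ x‖) := by
        gcongr
        exact (hφ x).2
      _ = ‖φ x‖ := by field_simp
  let f' : StrongDual ℂ (LinearMap.range (φ : X →ₗ[ℂ] Y)) :=
    (f.toLinearMap.comp e.symm.toLinearMap).mkContinuous 1 hb
  obtain ⟨g, hg, hn⟩ := exists_extension_norm_eq _ f'
  refine ⟨g, ?_, ?_⟩
  · rw [hn]; exact LinearMap.mkContinuous_norm_le _ zero_le_one _
  · ext x
    have h2 := hg (e x)
    have h3 : f' (e x) = f x := by
      change f (e.symm (e x)) = f x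
      rw [LinearEquiv.symm_apply_apply]
    rw [h3] at h2
    exact h2

lemma smul_aux {V : Type*} [AddCommGroup V] [Module ℂ V] (p q : ℝ) (A B : V) :
    (p : ℂ) • A - (q : ℂ) • B = (p : ℂ) • (A - B) + ((p - q : ℝ) : ℂ) • B := by
  push_cast
  rw [smul_sub, sub_smul]; abel

lemma smul_aux0 {V : Type*} [AddCommGroup V] [Module ℂ V] (A B : V) :
    ((0 : ℝ) : ℂ) • A - ((0 : ℝ) : ℂ) • B = 0 := by
  simp

lemma smul_aux1 {V : Type*} [AddCommGroup V] [Module ℂ V] (p : ℝ) (A : V) :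
    (p : ℂ) • A - A = ((p - 1 : ℝ) : ℂ) • A := by
  push_cast
  rw [sub_smul, one_smul]

lemma smul_aux2 {V : Type*} [AddCommGroup V] [Module ℂ V] (p : ℝ) (A : V) :
    A - (p : ℂ) • A = ((1 - p : ℝ) : ℂ) • A := by
  push_cast
  rw [sub_smul, one_smul]

set_option maxHeartbeats 1000000 in
lemma tree_family {X Y E : Type u} [NormedAddCommGroup X] [NormedSpace ℂ X]
    [NormedAddCommGroup Y] [NormedSpace ℂ Y] (δ : ℝ) (hδ : 0 ≤ δ) [Finite E]
    (emb : E → X →L[ℂ] Y) (hemb : ∀ e, IsDeltaEmbedding δ (emb e)) (R : ℕ) (hR : 0 < R) :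
    ∃ (V : Type u) (_ : Finite V) (v0 : V) (s : E → Equiv.Perm V),
      ∀ y : StrongDual ℂ Y, ‖y‖ ≤ 1 → ∃ (fY : V → StrongDual ℂ Y) (fX : V → StrongDual ℂ X),
        (∀ v, ‖fY v‖ ≤ 1) ∧ (∀ v, ‖fX v‖ ≤ 1) ∧ fY v0 = y ∧
        ∀ e v, ‖(fY v).comp (emb e) - fX (s e v)‖ ≤ δ / 2 + 1 / R := by
  let V := {l : List E // l.IsChain (· ≠ ·) ∧ l.length ≤ R}
  have hV : Finite V := by
    refine Set.Finite.subset (List.finite_length_le E R) ?_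
    intro l hl
    exact hl.2
  let s : E → Equiv.Perm V := fun e =>
    Function.Involutive.toPerm (fun v => ⟨toggleWord R e v.1, toggleWord_mem R e v.1 v.2⟩)
      (fun v => Subtype.ext (toggleWord_invol R e v.1 v.2))
  refine ⟨V, hV, ⟨[], by simp⟩, s, ?_⟩
  intro y hy
  set a : ℝ := 1 / (1 + δ) with ha
  have ha0 : 0 < a := by positivity
  have ha1 : a ≤ 1 := by rw [ha, div_le_one (by positivity)]; linarith
  have had : (1 - a) / 2 ≤ δ / 2 := by
    have : 1 - a = δ * a := by rw [ha]; field_simp; ring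
    nlinarith
  set t : ℝ := (1 + a) / 2 with ht
  have ht0 : 0 < t := by positivity
  have ht1 : t ≤ 1 := by linarith
  have hext : ∀ (e : E) (f : StrongDual ℂ X), ∃ g : StrongDual ℂ Y, ‖f‖ ≤ t →
      ‖g‖ ≤ 1 ∧ g.comp (emb e) = ((a / t : ℝ) : ℂ) • f := by
    intro e f
    by_cases hf : ‖f‖ ≤ t
    · obtain ⟨g, h1, h2⟩ := hb_ext δ hδ (emb e) (hemb e) (((a / t : ℝ) : ℂ) • f) (by
        rw [norm_smul, Complex.norm_real, Real.norm_of_nonneg (by positivity), ← ha]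
        calc a / t * ‖f‖ ≤ a / t * t := by gcongr
          _ = a := by field_simp)
      exact ⟨g, fun _ => ⟨h1, h2⟩⟩
    · exact ⟨0, fun h => absurd h hf⟩
  choose ext hext using hext
  let F : List E → StrongDual ℂ Y × StrongDual ℂ X := fun l =>
    l.rec (y, 0) (fun e _ p => (ext e p.2, ((t : ℝ) : ℂ) • p.1.comp (emb e)))
  have Fnil : F [] = (y, 0) := rfl
  have Fcons : ∀ e l, F (e :: l) = (ext e (F l).2, ((t : ℝ) : ℂ) • (F l).1.comp (emb e)) :=
    fun e l => rfl
  clear_value F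
  have hembn : ∀ e, ‖emb e‖ ≤ 1 := fun e =>
    ContinuousLinearMap.opNorm_le_bound _ zero_le_one (fun x => by simpa using (hemb e x).1)
  have hcomp : ∀ e (g : StrongDual ℂ Y), ‖g‖ ≤ 1 → ‖g.comp (emb e)‖ ≤ 1 := fun e g hg =>
    (ContinuousLinearMap.opNorm_comp_le _ _).trans (mul_le_one₀ hg (norm_nonneg _) (hembn e))
  have Fb : ∀ l, ‖(F l).1‖ ≤ 1 ∧ ‖(F l).2‖ ≤ t := by
    intro l
    induction l with
    | nil => rw [Fnil]; exact ⟨hy, by simpa using ht0.le⟩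
    | cons e l ih =>
      rw [Fcons]
      refine ⟨(hext e _ ih.2).1, ?_⟩
      simp only [norm_smul, Complex.norm_real, Real.norm_of_nonneg ht0.le]
      exact mul_le_of_le_one_right ht0.le (hcomp e _ ih.1)
  let sc : List E → ℝ := fun l => 1 - l.length / R
  have hR' : (0 : ℝ) < R := by exact_mod_cast hR
  have sc0 : ∀ v : V, 0 ≤ sc v.1 := by
    intro v
    have h : ((v.1.length : ℕ) : ℝ) ≤ R := by exact_mod_cast v.2.2
    simp only [sc, sub_nonneg]
    exact (div_le_one hR').2 h
  have sc1 : ∀ v : V, sc v.1 ≤ 1 := by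
    intro v
    simp only [sc]
    have : (0 : ℝ) ≤ v.1.length / R := by positivity
    linarith
  have key : ∀ (p q : ℝ) (A B : StrongDual ℂ X), 0 ≤ p → p ≤ 1 → |p - q| ≤ 1 / R → ‖B‖ ≤ 1 →
      ‖A - B‖ ≤ (1 - a) / 2 → ‖(p : ℂ) • A - (q : ℂ) • B‖ ≤ δ / 2 + 1 / R := by
    intro p q A B hp0 hp1 hpq hB hAB
    have : (p : ℂ) • A - (q : ℂ) • B = (p : ℂ) • (A - B) + ((p - q : ℝ) : ℂ) • B :=
      smul_aux p q A B
    rw [this]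
    refine (norm_add_le _ _).trans ?_
    rw [norm_smul, norm_smul, Complex.norm_real, Complex.norm_real, Real.norm_of_nonneg hp0,
      Real.norm_eq_abs]
    have h1 : p * ‖A - B‖ ≤ δ / 2 := (mul_le_of_le_one_left (norm_nonneg _) hp1).trans
      (hAB.trans had)
    have h2 : |p - q| * ‖B‖ ≤ 1 / R := (mul_le_of_le_one_right (abs_nonneg _) hB).trans hpq
    linarith
  have hscn : ∀ (v : V), ‖((sc v.1 : ℝ) : ℂ)‖ ≤ 1 := by
    intro v
    rw [Complex.norm_real, Real.norm_of_nonneg (sc0 v)]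
    exact sc1 v
  refine ⟨fun v => ((sc v.1 : ℝ) : ℂ) • (F v.1).1, fun v => ((sc v.1 : ℝ) : ℂ) • (F v.1).2,
    ?_, ?_, ?_, ?_⟩
  · intro v
    rw [norm_smul]
    exact mul_le_one₀ (hscn v) (norm_nonneg _) (Fb _).1
  · intro v
    rw [norm_smul]
    exact mul_le_one₀ (hscn v) (norm_nonneg _) ((Fb _).2.trans ht1)
  · simp [sc, Fnil]
  · intro e v
    have hs : (s e v).1 = toggleWord R e v.1 := rfl
    simp only [hs, ContinuousLinearMap.smul_comp]
    have hv0 := sc0 v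
    have hv1 := sc1 v
    have hv2 := v.2.2
    generalize v.1 = l at *
    by_cases h1 : l.head? = some e
    · obtain ⟨l', rfl⟩ : ∃ t, l = e :: t := by
        cases l with
        | nil => simp at h1
        | cons a t => simp at h1; exact ⟨t, by rw [h1]⟩
      have h3 : toggleWord R e (e :: l') = l' := by simp [toggleWord]
      rw [h3]
      refine key _ _ _ _ hv0 hv1 ?_ ((Fb _).2.trans ht1) ?_
      · simp only [sc, List.length_cons]
        push_cast
        rw [abs_le]
        have : (0 : ℝ) < 1 / R := by positivity
        constructor <;> (ring_nf; ring_nf at this; linarith)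
      · rw [Fcons]
        simp only
        rw [(hext e _ (Fb l').2).2]
        have : ((a / t : ℝ) : ℂ) • (F l').2 - (F l').2 = ((a / t - 1 : ℝ) : ℂ) • (F l').2 :=
          smul_aux1 _ _
        rw [this, norm_smul, Complex.norm_real, Real.norm_eq_abs]
        have hat : a / t ≤ 1 := by rw [div_le_one ht0]; linarith
        rw [abs_of_nonpos (by linarith)]
        calc -(a / t - 1) * ‖(F l').2‖ ≤ -(a / t - 1) * t := by
              apply mul_le_mul_of_nonneg_left (Fb l').2; linarith
          _ = t - a := by field_simp; ring
          _ = (1 - a) / 2 := by rw [ht]; ring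
          _ ≤ _ := le_rfl
    · by_cases h2 : l.length < R
      · have h3 : toggleWord R e l = e :: l := by simp [toggleWord, h1, h2]
        rw [h3]
        refine key (sc l) (sc (e :: l)) ((F l).1.comp (emb e)) (F (e :: l)).2 hv0 hv1 ?_
          ((Fb (e :: l)).2.trans ht1) ?_
        · simp only [sc, List.length_cons]
          push_cast
          rw [abs_le]
          have : (0 : ℝ) < 1 / R := by positivity
          constructor <;> (ring_nf; ring_nf at this; linarith)
        · rw [Fcons]
          simp only
          rw [smul_aux2 t ((F l).1.comp (emb e)), norm_smul, Complex.norm_real, Real.norm_of_nonneg (by linarith)]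
          calc (1 - t) * ‖(F l).1.comp (emb e)‖ ≤ (1 - t) * 1 := by
                apply mul_le_mul_of_nonneg_left (hcomp e _ (Fb l).1); linarith
            _ = (1 - a) / 2 := by rw [ht]; ring
            _ ≤ _ := le_rfl
      · have h3 : toggleWord R e l = l := by simp [toggleWord, h1, h2]
        rw [h3]
        have h4 : sc l = 0 := by
          have : l.length = R := by omega
          simp [sc, this, hR.ne']
        rw [h4]
        have h5 : ∀ A B : StrongDual ℂ X, ‖((0 : ℝ) : ℂ) • A - ((0 : ℝ) : ℂ) • B‖ = 0 := by
          intro A B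
          exact norm_eq_zero.2 (smul_aux0 A B)
        exact (h5 _ _).le.trans (by positivity)

/-- A bounded family of functionals gives a contraction into `ℓ∞`. -/
lemma family_map {V Φ : Type*} [NormedAddCommGroup V] [NormedSpace ℂ V]
    (ψ : Φ → StrongDual ℂ V) (h : ∀ p, ‖ψ p‖ ≤ 1) :
    ∃ T : V →L[ℂ] lp (fun _ : Φ => ℂ) ⊤, ‖T‖ ≤ 1 ∧ ∀ v p, (T v : Φ → ℂ) p = ψ p v := by
  have hb : ∀ v p, ‖ψ p v‖ ≤ ‖v‖ := fun v p =>
    ((ψ p).le_opNorm v).trans (mul_le_of_le_one_left (norm_nonneg _) (h p))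
  let T : V →ₗ[ℂ] lp (fun _ : Φ => ℂ) ⊤ :=
    { toFun := fun v => ⟨fun p => ψ p v, memℓp_infty ⟨‖v‖, by rintro _ ⟨p, rfl⟩; exact hb v p⟩⟩
      map_add' := fun v w => by ext p; exact map_add (ψ p) v w
      map_smul' := fun c v => by ext p; simp }
  refine ⟨T.mkContinuous 1 ?_, LinearMap.mkContinuous_norm_le _ zero_le_one _, fun v p => rfl⟩
  intro v
  rw [one_mul]
  exact lp.norm_le_of_forall_le (norm_nonneg _) (hb v)

lemma exists_W {X Y E : Type u} [NormedAddCommGroup X] [NormedSpace ℂ X] [FiniteDimensional ℂ X]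
    [NormedAddCommGroup Y] [NormedSpace ℂ Y] [FiniteDimensional ℂ Y]
    (δ : ℝ) (hδ : 0 ≤ δ) [Finite E]
    (emb : E → X →L[ℂ] Y) (hemb : ∀ e, IsDeltaEmbedding δ (emb e)) (R : ℕ) (hR : 0 < R) :
    ∃ (W : Type u) (_ : NormedAddCommGroup W) (_ : NormedSpace ℂ W) (_ : FiniteDimensional ℂ W)
      (G : Type u) (_ : Finite G) (_ : Nonempty G) (σ : E → Equiv.Perm G)
      (γ : G → Y →L[ℂ] W) (ξ : G → X →L[ℂ] W),
      (∀ g y, ‖γ g y‖ = ‖y‖) ∧ (∀ g, ‖ξ g‖ ≤ 1) ∧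
      ∀ e g x, ‖γ g (emb e x) - ξ (σ e g) x‖ ≤ (δ / 2 + 1 / R) * ‖x‖ := by
  obtain ⟨V, hV, v0, s, hs⟩ := tree_family δ hδ emb hemb R hR
  let G := Equiv.Perm V
  let σ : E → Equiv.Perm G := fun e => Equiv.mulLeft (s e)
  let Φ := {p : (G → StrongDual ℂ Y) × (G → StrongDual ℂ X) //
    (∀ g, ‖p.1 g‖ ≤ 1) ∧ (∀ g, ‖p.2 g‖ ≤ 1) ∧
    ∀ e g, ‖(p.1 g).comp (emb e) - p.2 (σ e g)‖ ≤ δ / 2 + 1 / R}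
  have h1 := fun g : G => family_map (fun p : Φ => p.1.1 g) (fun p => p.2.1 g)
  have h2 := fun g : G => family_map (fun p : Φ => p.1.2 g) (fun p => p.2.2.1 g)
  choose γ hγ1 hγ using h1
  choose ξ hξ1 hξ using h2
  let W : Submodule ℂ (lp (fun _ : Φ => ℂ) ⊤) :=
    (⨆ g, LinearMap.range (γ g : Y →ₗ[ℂ] _)) ⊔ (⨆ g, LinearMap.range (ξ g : X →ₗ[ℂ] _))
  have hγW : ∀ g y, γ g y ∈ W := fun g y =>
    Submodule.mem_sup_left (Submodule.mem_iSup_of_mem g ⟨y, rfl⟩)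
  have hξW : ∀ g x, ξ g x ∈ W := fun g x =>
    Submodule.mem_sup_right (Submodule.mem_iSup_of_mem g ⟨x, rfl⟩)
  refine ⟨W, inferInstance, inferInstance, inferInstance, G, inferInstance, ⟨1⟩, σ,
    fun g => (γ g).codRestrict W (hγW g), fun g => (ξ g).codRestrict W (hξW g), ?_, ?_, ?_⟩
  · intro g y
    change ‖γ g y‖ = ‖y‖
    apply le_antisymm
    · simpa using (γ g).le_of_opNorm_le (hγ1 g) y
    · obtain ⟨f, hf1, hf⟩ := exists_dual_vector'' ℂ y
      obtain ⟨fY, fX, a1, a2, a3, a4⟩ := hs f hf1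
      let p : Φ := ⟨(fun k => fY ((k * g⁻¹) v0), fun k => fX ((k * g⁻¹) v0)),
        fun k => a1 _, fun k => a2 _, fun e k => a4 e _⟩
      have h3 := lp.norm_apply_le_norm (by simp) (γ g y) p
      rw [hγ] at h3
      have h4 : p.1.1 g = f := by
        change fY ((g * g⁻¹) v0) = f
        rw [mul_inv_cancel]; exact a3
      rw [h4, hf] at h3
      simpa using h3
  · intro g
    refine ContinuousLinearMap.opNorm_le_bound _ zero_le_one (fun x => ?_)
    exact (ξ g).le_of_opNorm_le (hξ1 g) x
  · intro e g x
    change ‖γ g (emb e x) - ξ (σ e g) x‖ ≤ _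
    refine lp.norm_le_of_forall_le (by positivity) (fun p => ?_)
    rw [lp.coeFn_sub, Pi.sub_apply, hγ, hξ]
    exact ((p.1.1 g).comp (emb e) - p.1.2 (σ e g)).le_of_opNorm_le (p.2.2.2 e g) x

/-- Variance bound for functions with bounded differences. -/
lemma variance_bound {G : Type*} [Fintype G] [Nonempty G] (d : ℝ) (hd : 0 ≤ d) (n : ℕ) :
    ∀ F : (Fin n → G) → ℝ,
      (∀ g i b, |F g - F (Function.update g i b)| ≤ d) →
      ∃ M : ℝ, ∑ g, (F g - M) ^ 2 ≤ n * d ^ 2 * (Fintype.card G : ℝ) ^ n := by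
  induction n with
  | zero =>
    intro F _
    refine ⟨F default, ?_⟩
    simp
  | succ n ih =>
    intro F hF
    set q : ℝ := (Fintype.card G : ℝ) with hq
    have hq0 : 0 < q := by rw [hq]; exact_mod_cast Fintype.card_pos
    let m : (Fin n → G) → ℝ := fun h => (∑ a, F (Fin.cons a h)) / q
    have hsum0 : ∀ h, ∑ a, (F (Fin.cons a h) - m h) = 0 := by
      intro h
      rw [Finset.sum_sub_distrib]
      simp only [Finset.sum_const, Finset.card_univ, nsmul_eq_mul, m, ← hq]
      field_simp
      ring
    have havg : ∀ (u : G → ℝ), (∀ a, |u a| ≤ d) → |(∑ a, u a) / q| ≤ d := by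
      intro u hu
      rw [abs_div, abs_of_pos hq0, div_le_iff₀ hq0]
      calc |∑ a, u a| ≤ ∑ a, |u a| := Finset.abs_sum_le_sum_abs _ _
        _ ≤ ∑ _a : G, d := Finset.sum_le_sum (fun a _ => hu a)
        _ = d * q := by simp [hq, mul_comm]
    obtain ⟨M, hM⟩ := ih m (by
      intro g i b
      have : m g - m (Function.update g i b)
          = (∑ a, (F (Fin.cons a g) - F (Fin.cons a (Function.update g i b)))) / q := by
        simp only [m]; rw [Finset.sum_sub_distrib]; ring
      rw [this]
      apply havg
      intro a
      rw [Fin.cons_update]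
      exact hF _ _ _)
    refine ⟨M, ?_⟩
    have hdev : ∀ a h, |F (Fin.cons a h) - m h| ≤ d := by
      intro a h
      have : F (Fin.cons a h) - m h = (∑ b, (F (Fin.cons a h) - F (Fin.cons b h))) / q := by
        simp only [m]; rw [Finset.sum_sub_distrib]
        simp only [Finset.sum_const, Finset.card_univ, nsmul_eq_mul, ← hq]
        field_simp
      rw [this]
      apply havg
      intro b
      have := hF (Fin.cons a h) 0 b
      rwa [Fin.update_cons_zero] at this
    rw [← (Fin.consEquiv (fun _ : Fin (n + 1) => G)).sum_comp, Fintype.sum_prod_type_right]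
    have hstep : ∀ h : Fin n → G, ∑ a, (F (Fin.cons a h) - M) ^ 2
        ≤ q * d ^ 2 + q * (m h - M) ^ 2 := by
      intro h
      have e1 : ∀ a, (F (Fin.cons a h) - M) ^ 2 = (F (Fin.cons a h) - m h) ^ 2
          + 2 * (m h - M) * (F (Fin.cons a h) - m h) + (m h - M) ^ 2 := fun a => by ring
      simp_rw [e1]
      rw [Finset.sum_add_distrib, Finset.sum_add_distrib, ← Finset.mul_sum, hsum0]
      simp only [Finset.sum_const, Finset.card_univ, nsmul_eq_mul, ← hq, mul_zero, add_zero]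
      have : ∑ a, (F (Fin.cons a h) - m h) ^ 2 ≤ ∑ _a : G, d ^ 2 :=
        Finset.sum_le_sum (fun a _ => sq_le_sq' (by linarith [abs_le.1 (hdev a h)])
          (abs_le.1 (hdev a h)).2)
      simp only [Finset.sum_const, Finset.card_univ, nsmul_eq_mul, ← hq] at this
      linarith
    calc _ ≤ ∑ h : Fin n → G, (q * d ^ 2 + q * (m h - M) ^ 2) :=
          Finset.sum_le_sum (fun h _ => hstep h)
      _ = q ^ n * (q * d ^ 2) + q * ∑ h, (m h - M) ^ 2 := by
          rw [Finset.sum_add_distrib, Finset.mul_sum]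
          simp [hq]
      _ ≤ q ^ n * (q * d ^ 2) + q * (n * d ^ 2 * q ^ n) := by gcongr
      _ = _ := by push_cast; ring

/-- Diagonal average map into the `ℓ¹`-sum. -/
noncomputable def avgMap {V W : Type*} [NormedAddCommGroup V] [NormedSpace ℂ V]
    [NormedAddCommGroup W] [NormedSpace ℂ W] {N : ℕ} (T : Fin N → V →L[ℂ] W) :
    V →L[ℂ] PiLp 1 (fun _ : Fin N => W) :=
  ((PiLp.continuousLinearEquiv 1 ℂ (fun _ : Fin N => W)).symm :
      (Fin N → W) →L[ℂ] PiLp 1 (fun _ : Fin N => W)).comp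
    (((N : ℂ)⁻¹) • ContinuousLinearMap.pi T)

lemma avgMap_norm {V W : Type*} [NormedAddCommGroup V] [NormedSpace ℂ V]
    [NormedAddCommGroup W] [NormedSpace ℂ W] {N : ℕ} (T : Fin N → V →L[ℂ] W) (v : V) :
    ‖avgMap T v‖ = (∑ i, ‖T i v‖) / N := by
  rw [PiLp.norm_eq_of_L1]
  have : ∀ i, (avgMap T v).ofLp i = (N : ℂ)⁻¹ • T i v := fun i => rfl
  simp_rw [this, norm_smul]
  rw [← Finset.mul_sum]
  simp
  ring

lemma avgMap_sub {V W : Type*} [NormedAddCommGroup V] [NormedSpace ℂ V]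
    [NormedAddCommGroup W] [NormedSpace ℂ W] {N : ℕ} (S T : Fin N → V →L[ℂ] W) :
    avgMap S - avgMap T = avgMap (fun i => S i - T i) := by
  ext v i
  change (N : ℂ)⁻¹ • S i v - (N : ℂ)⁻¹ • T i v = (N : ℂ)⁻¹ • (S i v - T i v)
  rw [smul_sub]

/-- Stable Ramsey property, with stability modulus `ϖ(δ) = δ`, of the class of
finite-dimensional complex normed spaces. -/
theorem srp_fd_complex_normed_spaces
    (X Y : Type u) [NormedAddCommGroup X] [NormedSpace ℂ X] [FiniteDimensional ℂ X]
    [NormedAddCommGroup Y] [NormedSpace ℂ Y] [FiniteDimensional ℂ Y]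
    (δ : ℝ) (hδ : 0 ≤ δ) (ε : ℝ) (hε : 0 < ε) :
    ∃ (Z : Type u) (_ : NormedAddCommGroup Z) (_ : NormedSpace ℂ Z)
      (_ : FiniteDimensional ℂ Z),
      ∀ c : {φ : X →L[ℂ] Z // IsDeltaEmbedding δ φ} → ℝ,
        LipschitzWith 1 c → (∀ φ, c φ ∈ Set.Icc (0 : ℝ) 1) →
        ∃ (γ : Y →L[ℂ] Z) (_ : ∀ y, ‖γ y‖ = ‖y‖),
          ∀ (η₀ η₁ : X →L[ℂ] Y), IsDeltaEmbedding δ η₀ → IsDeltaEmbedding δ η₁ →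
            ∀ (h₀ : IsDeltaEmbedding δ (γ.comp η₀)) (h₁ : IsDeltaEmbedding δ (γ.comp η₁)),
              |c ⟨γ.comp η₀, h₀⟩ - c ⟨γ.comp η₁, h₁⟩| ≤ ε + δ := by
  classical
  -- a finite net of δ-embeddings
  have htb : TotallyBounded {φ : X →L[ℂ] Y | IsDeltaEmbedding δ φ} := by
    have : ProperSpace (X →L[ℂ] Y) := FiniteDimensional.proper ℂ _
    refine TotallyBounded.subset ?_
      (isCompact_closedBall (0 : X →L[ℂ] Y) 1).totallyBounded
    intro φ hφ
    rw [mem_closedBall_zero_iff]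
    exact ContinuousLinearMap.opNorm_le_bound _ zero_le_one (fun x => by simpa using (hφ x).1)
  obtain ⟨S, hS, hSfin, hScov⟩ :=
    Metric.finite_approx_of_totallyBounded htb (ε / 8) (by positivity)
  have : Finite S := hSfin
  have : Fintype S := Fintype.ofFinite _
  obtain ⟨R, hR⟩ := exists_nat_gt (8 / ε)
  have hR0 : (0 : ℝ) < R := lt_trans (by positivity) hR
  have hRe : 1 / (R : ℝ) ≤ ε / 8 := by
    rw [div_lt_iff₀ hε] at hR
    rw [div_le_iff₀ hR0]; linarith
  obtain ⟨W, _, _, _, G, hG, hGn, σ, γ, ξ, hγ, hξ, hγξ⟩ :=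
    exists_W δ hδ (fun e : S => e.1) (fun e => hS e.2) R (by exact_mod_cast hR0)
  have : Fintype G := Fintype.ofFinite _
  obtain ⟨N, hN⟩ := exists_nat_gt (4 * (Fintype.card S : ℝ) / (ε / 8) ^ 2)
  have hN0 : (0 : ℝ) < N := lt_of_le_of_lt (by positivity) hN
  have hNe : Fintype.card S * (4 / (N : ℝ)) ≤ (ε / 8) ^ 2 := by
    rw [div_lt_iff₀ (by positivity)] at hN
    rw [mul_div_assoc', div_le_iff₀ hN0]; linarith
  refine ⟨PiLp 1 (fun _ : Fin N => W), inferInstance, inferInstance, inferInstance, ?_⟩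
  intro c hc _
  -- extend `c`
  obtain ⟨C, hC, hCc⟩ : ∃ C : (X →L[ℂ] PiLp 1 (fun _ : Fin N => W)) → ℝ,
      LipschitzWith 1 C ∧ ∀ φ, C φ.1 = c φ := by
    let f : (X →L[ℂ] PiLp 1 (fun _ : Fin N => W)) → ℝ :=
      fun φ => if h : IsDeltaEmbedding δ φ then c ⟨φ, h⟩ else 0
    have hf : LipschitzOnWith 1 f {φ | IsDeltaEmbedding δ φ} := by
      intro a ha b hb
      have ha' : IsDeltaEmbedding δ a := ha
      have hb' : IsDeltaEmbedding δ b := hb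
      simp only [f, ha', hb', dif_pos]
      exact hc ⟨a, ha⟩ ⟨b, hb⟩
    obtain ⟨C, h1, h2⟩ := hf.extend_real
    refine ⟨C, h1, fun φ => ?_⟩
    have h3 := h2 φ.2
    rw [← h3]
    simp only [f, φ.2, dif_pos]
  have hCl : ∀ a b, |C a - C b| ≤ ‖a - b‖ := by
    intro a b
    have := hC.dist_le_mul a b
    rw [Real.dist_eq, dist_eq_norm] at this
    simpa using this
  let F : (Fin N → G) → ℝ := fun k => C (avgMap (fun i => ξ (k i)))
  obtain ⟨M, hM⟩ := variance_bound (G := G) (2 / N) (by positivity) N F (by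
    intro g i b
    refine (hCl _ _).trans ?_
    rw [avgMap_sub]
    refine ContinuousLinearMap.opNorm_le_bound _ (by positivity) (fun x => ?_)
    rw [avgMap_norm, Finset.sum_eq_single i]
    · rw [div_mul_eq_mul_div]
      gcongr
      have h1 := (ξ (g i)).le_of_opNorm_le (hξ (g i)) x
      have h2 := (ξ (Function.update g i b i)).le_of_opNorm_le (hξ _) x
      refine (norm_sub_le (ξ (g i) x) (ξ (Function.update g i b i) x)).trans ?_
      linarith
    · intro j _ hj
      simp [Function.update_of_ne hj]
    · simp)
  obtain ⟨g, hg⟩ : ∃ g : Fin N → G, ∑ e : S, (F (fun i => σ e (g i)) - M) ^ 2 ≤ (ε / 8) ^ 2 := by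
    have hne : (Finset.univ : Finset (Fin N → G)).Nonempty := Finset.univ_nonempty
    obtain ⟨g, -, hg⟩ := Finset.exists_le_of_sum_le (s := (Finset.univ : Finset (Fin N → G)))
      (f := fun g => ∑ e : S, (F (fun i => σ e (g i)) - M) ^ 2)
      (g := fun _ => (Fintype.card S : ℝ) * (4 / N)) hne (by
        rw [Finset.sum_comm]
        have h1 : ∀ e : S, ∑ g : Fin N → G, (F (fun i => σ e (g i)) - M) ^ 2
            ≤ 4 / N * (Fintype.card G : ℝ) ^ N := by
          intro e
          have h2 := (Equiv.piCongrRight (fun _ : Fin N => σ e)).sum_comp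
            (fun g => (F g - M) ^ 2)
          have h3 : ∑ g : Fin N → G, (F (fun i => σ e (g i)) - M) ^ 2
              = ∑ g, (F g - M) ^ 2 := h2
          rw [h3]
          refine hM.trans (le_of_eq ?_)
          field_simp
          norm_num
        refine (Finset.sum_le_sum (fun e _ => h1 e)).trans (le_of_eq ?_)
        simp
        ring)
    exact ⟨g, hg.trans hNe⟩
  have hgS : ∀ e : S, |F (fun i => σ e (g i)) - M| ≤ ε / 8 := by
    intro e
    apply abs_le_of_sq_le_sq _ (by positivity)
    exact (Finset.single_le_sum (f := fun e : S => (F (fun i => σ e (g i)) - M) ^ 2)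
      (fun e _ => sq_nonneg _) (Finset.mem_univ e)).trans hg
  have hΓ : ∀ y, ‖avgMap (fun i => γ (g i)) y‖ = ‖y‖ := by
    intro y
    rw [avgMap_norm]
    simp only [hγ, Finset.sum_const, Finset.card_univ, Fintype.card_fin, nsmul_eq_mul]
    field_simp
  refine ⟨avgMap (fun i => γ (g i)), hΓ, ?_⟩
  have main : ∀ η : X →L[ℂ] Y, IsDeltaEmbedding δ η →
      |C ((avgMap (fun i => γ (g i))).comp η) - M| ≤ δ / 2 + 3 * (ε / 8) := by
    intro η hη
    have := hScov hη
    simp only [Set.mem_iUnion, Metric.mem_ball, exists_prop] at this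
    obtain ⟨e, heS, he⟩ := this
    rw [dist_eq_norm] at he
    set Γ := avgMap (fun i => γ (g i)) with hΓdef
    have h1 : |C (Γ.comp η) - C (Γ.comp e)| ≤ ε / 8 := by
      refine (hCl _ _).trans (le_trans ?_ he.le)
      rw [← ContinuousLinearMap.comp_sub]
      refine ContinuousLinearMap.opNorm_le_bound _ (norm_nonneg _) (fun x => ?_)
      rw [ContinuousLinearMap.comp_apply, hΓ]
      exact (η - e).le_opNorm x
    have h2 : |C (Γ.comp e) - F (fun i => σ ⟨e, heS⟩ (g i))| ≤ δ / 2 + 1 / R := by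
      refine (hCl _ _).trans ?_
      have h4 : Γ.comp e = avgMap (fun i => (γ (g i)).comp e) := rfl
      rw [h4, avgMap_sub]
      refine ContinuousLinearMap.opNorm_le_bound _ (by positivity) (fun x => ?_)
      rw [avgMap_norm, div_le_iff₀ hN0]
      calc _ ≤ ∑ i : Fin N, (δ / 2 + 1 / R) * ‖x‖ :=
            Finset.sum_le_sum (fun i _ => hγξ ⟨e, heS⟩ (g i) x)
        _ = _ := by simp; ring
    have h3 := hgS ⟨e, heS⟩
    rw [abs_le] at *
    constructor <;> linarith [h1.1, h1.2, h2.1, h2.2, h3.1, h3.2]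
  intro η₀ η₁ hη₀ hη₁ h₀ h₁
  have m0 := main η₀ hη₀
  have m1 := main η₁ hη₁
  rw [hCc ⟨_, h₀⟩] at m0
  rw [hCc ⟨_, h₁⟩] at m1
  rw [abs_le] at *
  constructor <;> linarith [m0.1, m0.2, m1.1, m1.2]
end

section
/- For every d, m, r ∈ ℕ and every ε > 0 there exists n ∈ ℕ such that for every coloring c of S(n,d) with r colors there exist γ ∈ S(n,m) and a color j such that for every ρ ∈ S(m,d) there is ρ' ∈ S(n,d) with c(ρ') = j and D(ρ·γ, ρ') ≤ ε, where ρ·γ denotes the matrix product. Here, for k, l ∈ ℕ, S(k,l) denotes the set of l × k real matrices A such that: all entries of A are nonnegative; every column of A sums to 1; every row of A contains an entry equal to 1; and the last column of A equals the last standard basis vector of ℝ^l. The distance is D(A,B) = max over columns j of Σ_i |A_{i j} − B_{i j}|. -/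
/-- `S k l` is the set of `l × k` real matrices with nonnegative entries, each column summing
to `1`, each row containing an entry equal to `1`, and whose last column is the last standard
basis vector of `ℝˡ`. -/
def S (k l : ℕ) : Set (Matrix (Fin l) (Fin k) ℝ) :=
  {A | (∀ i j, 0 ≤ A i j) ∧ (∀ j, ∑ i, A i j = 1) ∧ (∀ i, ∃ j, A i j = 1) ∧
    (∀ (i : Fin l) (j : Fin k), (j : ℕ) = k - 1 →
      A i j = if (i : ℕ) = l - 1 then 1 else 0)}


/-- rigid surjections `[0,n) → [0,m)` which are the identity on `[0,a)`. -/
def RS (a n m : ℕ) (f : ℕ → ℕ) : Prop :=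
  (∀ y < a, f y = y) ∧ (∀ y < n, f y < m) ∧ ∀ x < m, ∃ y < n, f y = x ∧ ∀ z < y, f z < x

/-- the value depends only on the restriction to `[0,n)` -/
def Loc {κ : Type} (n : ℕ) (c : (ℕ → ℕ) → κ) : Prop :=
  ∀ g g' : ℕ → ℕ, (∀ y < n, g y = g' y) → c g = c g'

def GR (a k : ℕ) : Prop :=
  ∀ m, a ≤ m → ∀ (κ : Type) [Finite κ], ∃ n, a ≤ n ∧ ∀ c : (ℕ → ℕ) → κ, Loc n c →
    ∃ f, RS a n m f ∧ ∀ g g', RS a m k g → RS a m k g' → c (fun y => g (f y)) = c (fun y => g' (f y))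

lemma RS.comp {a n m k : ℕ} {f g : ℕ → ℕ} (hf : RS a n m f) (hg : RS a m k g) :
    RS a n k (fun y => g (f y)) := by
  refine ⟨fun y hy => by simp only [hf.1 y hy, hg.1 y hy], fun y hy => hg.2.1 _ (hf.2.1 y hy), ?_⟩
  intro x hx
  obtain ⟨u, hu, hux, hu'⟩ := hg.2.2 x hx
  obtain ⟨y, hy, hyu, hy'⟩ := hf.2.2 u hu
  exact ⟨y, hy, by simp only [hyu, hux], fun z hz => hu' _ (hy' z hz)⟩

lemma RS.id (a n : ℕ) : RS a n n (fun y => y) :=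
  ⟨fun _ _ => rfl, fun _ h => h, fun x hx => ⟨x, hx, rfl, fun _ h => h⟩⟩

lemma RS.mono {a n m : ℕ} {f : ℕ → ℕ} (hf : RS (a+1) n m f) : RS a n m f :=
  ⟨fun y hy => hf.1 y (by omega), hf.2⟩

/-- skip the letter `a` -/
def skp (a y : ℕ) : ℕ := if y < a then y else y + 1

/-- insert the value `x` at `a` -/
def ins (a x : ℕ) (h : ℕ → ℕ) (y : ℕ) : ℕ := if y < a then h y else if y = a then x else h (y - 1)

lemma ins_skp (a x : ℕ) (h : ℕ → ℕ) (y : ℕ) : ins a x h (skp a y) = h y := by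
  unfold ins skp
  split_ifs <;> first | rfl | omega

lemma ins_ins (a x : ℕ) (g h : ℕ → ℕ) (hh : ∀ y < a, h y < a → True) (y : ℕ) :
    ins a x g (ins a a (fun y => skp a (h y)) y) = ins a x (fun y => g (h y)) y := by
  by_cases h1 : y < a
  · have : ins a a (fun y => skp a (h y)) y = skp a (h y) := by simp [ins, h1]
    rw [this, ins_skp]; simp [ins, h1]
  · by_cases h2 : y = a
    · subst h2; simp [ins]
    · have : ins a a (fun y => skp a (h y)) y = skp a (h (y-1)) := by simp [ins, h1, h2]
      rw [this, ins_skp]; simp [ins, h1, h2]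

lemma RS.insa {a n m : ℕ} (hn : a ≤ n) {f : ℕ → ℕ} (hf : RS a n m f) :
    RS (a+1) (n+1) (m+1) (ins a a (fun y => skp a (f y))) := by
  obtain ⟨h1, h2, h3⟩ := hf
  refine ⟨?_, ?_, ?_⟩
  · intro y hy
    by_cases hya : y < a
    · simp [ins, skp, hya, h1 y hya]
    · have : y = a := by omega
      subst this; simp [ins]
  · intro y hy
    unfold ins skp
    have := fun hy => h2 y hy
    have := fun hy => h2 (y-1) hy
    split_ifs <;> grind
  · intro x hx
    by_cases hxa : x ≤ a
    · refine ⟨x, by omega, ?_, ?_⟩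
      · by_cases hya : x < a
        · simp [ins, skp, hya, h1 x hya]
        · have : x = a := by omega
          subst this; simp [ins]
      · intro z hz
        have : z < a := by omega
        simp [ins, skp, this, h1 z this, hz]
    · obtain ⟨y, hy, hyx, hy'⟩ := h3 (x-1) (by omega)
      have hya : a ≤ y := by
        by_contra hc
        have := h1 y (by omega)
        omega
      refine ⟨y+1, by omega, ?_, ?_⟩
      · have e1 : ¬ (y + 1 < a) := by omega
        have e2 : ¬ (y + 1 = a) := by omega
        have e3 : ¬ (x - 1 < a) := by omega
        simp [ins, skp, e1, e2, hyx, e3]; omega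
      · intro z hz
        have := h1 z
        have := hy' (z-1)
        unfold ins skp
        split_ifs <;> grind

lemma RS.skip {a m k : ℕ} {g : ℕ → ℕ} (hg : RS a (m+1) k g) (ha : a ≤ m) (hx : g a < a) :
    RS a m k (fun y => g (skp a y)) := by
  obtain ⟨h1, h2, h3⟩ := hg
  refine ⟨?_, ?_, ?_⟩
  · intro y hy; simp [skp, hy, h1]
  · intro y hy
    exact h2 _ (by unfold skp; split_ifs <;> omega)
  · intro x hxk
    obtain ⟨y, hy, hyx, hy'⟩ := h3 x hxk
    rcases lt_trichotomy y a with h | h | h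
    · refine ⟨y, by omega, by simp [skp, h, hyx], fun z hz => ?_⟩
      have : z < a := by omega
      simp only [skp, this, if_true]
      exact hy' z hz
    · subst h
      have e := h1 x (by omega)
      have := hy' x (by omega)
      omega
    · refine ⟨y-1, by omega, ?_, ?_⟩
      · have : ¬ (y - 1 < a) := by omega
        simp only [skp, this, if_false]
        rw [← hyx]; congr 1; omega
      · intro z hz
        apply hy'
        unfold skp; split_ifs <;> omega

lemma ins_self (a : ℕ) (g : ℕ → ℕ) (y : ℕ) : ins a (g a) (fun y => g (skp a y)) y = g y := by
  unfold ins
  split_ifs with h1 h2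
  · simp [skp, h1]
  · rw [h2]
  · have e : skp a (y - 1) = y := by unfold skp; split_ifs <;> omega
    simp only [e]

/-- same initial segment -/
def SP (a i : ℕ) (g g' : ℕ → ℕ) : Prop := (∀ y < i, g y < a ∧ g y = g' y) ∧ g i = a ∧ g' i = a

lemma stage1 {a k : ℕ} (hak : a < k) (H : GR (a+1) k) (t : ℕ) : ∀ (κ : Type) [Finite κ],
    ∃ n, a ≤ n ∧ ∀ c : (ℕ → ℕ) → κ, Loc n c → ∃ f, RS a n (a+t) f ∧
      ∀ g g', RS a (a+t) k g → RS a (a+t) k g' → ∀ i < a + t, SP a i g g' →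
        c (fun y => g (f y)) = c (fun y => g' (f y)) := by
  induction t with
  | zero =>
    intro κ _
    refine ⟨a, le_rfl, fun c _ => ⟨fun y => y, RS.id a a, ?_⟩⟩
    intro g g' hg _ i hi hs
    have := hg.1 i (by omega)
    have := hs.2.1
    omega
  | succ t ih =>
    intro κ _
    obtain ⟨N, hN, ihN⟩ := ih (Fin a → κ)
    obtain ⟨n, hn, hF⟩ := H (N+1) (by omega) κ
    refine ⟨n, by omega, fun c hc => ?_⟩
    obtain ⟨F, hFR, hFc⟩ := hF c hc
    obtain ⟨f1, hf1, hf1c⟩ := ihN (fun h x => c (fun y => ins a x h (F y))) (by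
      intro g g' hgg
      funext x
      apply hc
      intro y hy
      have hy := hFR.2.1 y hy
      unfold ins
      split_ifs
      · exact hgg _ (by omega)
      · rfl
      · exact hgg _ (by omega))
    have hf1' := hf1.insa hN
    refine ⟨_, (hFR.comp hf1').mono, ?_⟩
    intro g g' hg hg' i hi hs
    have hia : a ≤ i := by
      by_contra hc
      have := hg.1 i (by omega)
      have := hs.2.1
      omega
    rcases hia.eq_or_lt with h | h
    · subst h
      have h1 : RS (a+1) (a+t+1) k g :=
        ⟨fun y hy => if h : y < a then hg.1 y h else by
          have : y = a := by omega
          rw [this, hs.2.1], hg.2⟩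
      have h2 : RS (a+1) (a+t+1) k g' :=
        ⟨fun y hy => if h : y < a then hg'.1 y h else by
          have : y = a := by omega
          rw [this, hs.2.2], hg'.2⟩
      exact hFc _ _ (hf1'.comp h1) (hf1'.comp h2)
    · have hga := hs.1 a h
      have key : ∀ G : ℕ → ℕ, (fun y => G (ins a a (fun y => skp a (f1 y)) (F y))) =
          fun y => ins a (G a) (fun y => G (skp a (f1 y))) (F y) := by
        intro G
        funext y
        rw [← ins_ins a (G a) (fun y => G (skp a y)) f1 (by simp) (F y), ins_self]
      rw [key g, key g', ← hga.2]
      have := hf1c (fun y => g (skp a y)) (fun y => g' (skp a y)) (RS.skip (m := a + t) hg (by omega) hga.1)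
        (RS.skip (m := a + t) hg' (by omega) (by rw [← hga.2]; exact hga.1)) (i-1) (by omega) (by
          have e : skp a (i-1) = i := by unfold skp; split_ifs <;> omega
          refine ⟨fun y hy => hs.1 _ (by unfold skp; split_ifs <;> omega), ?_, ?_⟩
          · simp only [e]; exact hs.2.1
          · simp only [e]; exact hs.2.2)
      exact congrFun this ⟨g a, hga.1⟩

/-- multidimensional Hales-Jewett in ordered form -/
lemma GR_base (a : ℕ) : GR a a := by
  intro m ham κ _
  obtain ⟨t, rfl⟩ := Nat.exists_eq_add_of_le ham
  obtain ⟨ι, hι, H⟩ := Combinatorics.Subspace.exists_mono_in_high_dimension (Fin a) κ (Fin t)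
  let N := Fintype.card ι
  let E : ι ≃ Fin N := Fintype.equivFin ι
  refine ⟨a + N, by omega, fun c hc => ?_⟩
  let emb : (ι → Fin a) → ℕ → ℕ := fun w y =>
    if y < a then y else if h : y - a < N then (w (E.symm ⟨y - a, h⟩) : ℕ) else 0
  obtain ⟨l, v, hl⟩ := H (fun w => c (emb w))
  -- first occurrences
  have hocc : ∀ e : Fin t, ∃ j : Fin N, l.idxFun (E.symm j) = Sum.inr e ∧
      ∀ j' < j, l.idxFun (E.symm j') ≠ Sum.inr e := by
    intro e
    obtain ⟨i, hi⟩ := l.proper e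
    have hne : (Finset.univ.filter fun j : Fin N => l.idxFun (E.symm j) = Sum.inr e).Nonempty :=
      ⟨E i, by simp [hi]⟩
    refine ⟨Finset.min' _ hne, ?_, ?_⟩
    · have := Finset.min'_mem _ hne
      simpa using this
    · intro j' hj' h
      have := Finset.min'_le _ j' (show j' ∈ (Finset.univ.filter fun j : Fin N => l.idxFun (E.symm j) = Sum.inr e) by simp [h])
      exact absurd hj' (not_lt.mpr this)
  choose φ hφ hφ' using hocc
  have hinj : Function.Injective φ := by
    intro e e' h
    have h1 := hφ e
    rw [h, hφ e'] at h1
    exact (Sum.inr_injective h1).symm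
  let s := Tuple.sort φ
  have hmono : StrictMono (φ ∘ s) :=
    (Tuple.monotone_sort φ).strictMono_of_injective (hinj.comp s.injective)
  let f : ℕ → ℕ := fun y => if y < a then y else if h : y - a < N then
    Sum.elim (fun x : Fin a => (x : ℕ)) (fun e => a + (s.symm e : ℕ)) (l.idxFun (E.symm ⟨y - a, h⟩)) else 0
  have hf : RS a (a+N) (a+t) f := by
    refine ⟨fun y hy => by simp [f, hy], ?_, ?_⟩
    · intro y hy
      by_cases h1 : y < a
      · simp only [f, h1, if_true]; omega
      · have h2 : y - a < N := by omega
        simp only [f, h1, if_false, h2, dif_pos]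
        rcases l.idxFun (E.symm ⟨y - a, h2⟩) with x | e
        · simp; omega
        · simp
    · intro x hx
      by_cases hxa : x < a
      · exact ⟨x, by omega, by simp [f, hxa], fun z hz => by
          have : z < a := by omega
          simp [f, this, hz]⟩
      · let q : Fin t := ⟨x - a, by omega⟩
        refine ⟨a + φ (s q), by omega, ?_, ?_⟩
        · simp [f, hφ, q]; omega
        · intro z hz
          by_cases h1 : z < a
          · simp only [f, h1, if_true]; omega
          · have h2 : z - a < N := by omega
            simp only [f, h1, if_false, h2, dif_pos]
            rcases hh : l.idxFun (E.symm ⟨z - a, h2⟩) with x' | e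
            · simp; omega
            · simp only [Sum.elim_inr]
              have h3 : φ e ≤ ⟨z - a, h2⟩ := by
                by_contra hcon
                exact hφ' e _ (not_le.mp hcon) hh
              have h4 : (φ ∘ s) (s.symm e) < (φ ∘ s) q := by
                simp only [Function.comp, Equiv.apply_symm_apply]
                refine lt_of_le_of_lt h3 ?_
                rw [Fin.lt_def]; simp; omega
              have h5 : s.symm e < q := hmono.lt_iff_lt.mp h4
              have h6 : (s.symm e : ℕ) < x - a := h5
              omega
  refine ⟨f, hf, ?_⟩
  have main : ∀ g, RS a (a+t) a g → c (fun y => g (f y)) = v := by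
    intro g hg
    rw [← hl (fun e => ⟨g (a + s.symm e), hg.2.1 _ (by omega)⟩)]
    apply hc
    intro y hy
    by_cases h1 : y < a
    · simp [f, emb, h1, hg.1]
    · have h2 : y - a < N := by omega
      simp only [f, emb, h1, if_false, h2, dif_pos, Combinatorics.Subspace.apply_def]
      rcases hh : l.idxFun (E.symm ⟨y - a, h2⟩) with x | e
      · simp [hg.1]
      · simp
  intro g g' hg hg'
  rw [main g hg, main g' hg']

lemma initSeg1 (a t : ℕ) (κ : Type) [Finite κ] : ∃ M, a ≤ M ∧ ∀ c : (ℕ → ℕ) → ℕ → κ,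
    (∀ j, Loc j (fun p => c p j)) → ∃ f, RS a M (a+t) f ∧ ∃ v : ℕ → κ, ∀ i, a ≤ i → i < a + t →
      ∃ j < M, f j = i ∧ (∀ z < j, f z < i) ∧
        ∀ p : ℕ → ℕ, (∀ y < a, p y = y) → (∀ y < i, p y < a) → c (fun y => p (f y)) j = v i := by
  induction t with
  | zero =>
    refine ⟨a, le_rfl, fun c _ => ⟨fun y => y, RS.id a a, fun i => c (fun y => y) 0, ?_⟩⟩
    intro i h1 h2; omega
  | succ t ih =>
    obtain ⟨M', hM', ih⟩ := ih
    obtain ⟨L, hL, hB⟩ := GR_base a M' hM' κ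
    refine ⟨L+1, by omega, fun c hc => ?_⟩
    obtain ⟨F, hF, hFc⟩ := hB (fun p => c p L) (hc L)
    have hocc : ∀ i, ∃ y, i < M' → y < L ∧ F y = i ∧ ∀ z < y, F z < i := by
      intro i
      by_cases h : i < M'
      · obtain ⟨y, hy⟩ := hF.2.2 i h
        exact ⟨y, fun _ => hy⟩
      · exact ⟨0, fun h' => absurd h' h⟩
    choose φ hφ using hocc
    obtain ⟨f1, hf1, v, hv⟩ := ih (fun p i => if i < M' then c (fun y => p (F y)) (φ i) else c (fun y => y) 0) (by
      intro j g g' hgg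
      by_cases h : j < M'
      · simp only [h, if_true]
        apply hc
        intro y hy
        exact hgg _ ((hφ j h).2.2 y hy)
      · simp only [h, if_false])
    let f : ℕ → ℕ := fun y => if y < L then f1 (F y) else a + t
    have hfl : ∀ y < L, f y = f1 (F y) := fun y hy => by simp [f, hy]
    have hcomp := hF.comp hf1
    have hfL : f L = a + t := by simp [f]
    have hR : RS a (L+1) (a+(t+1)) f := by
      refine ⟨fun y hy => ?_, fun y hy => ?_, fun x hx => ?_⟩
      · rw [hfl y (by omega)]; exact hcomp.1 y hy
      · by_cases h : y < L
        · rw [hfl y h]; have := hcomp.2.1 y h; simp only at this; omega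
        · simp only [f, h, if_false]; omega
      · by_cases h : x < a + t
        · obtain ⟨y, hy, h1, h2⟩ := hcomp.2.2 x h
          refine ⟨y, by omega, by rw [hfl y hy]; exact h1, fun z hz => ?_⟩
          rw [hfl z (by omega)]; exact h2 z hz
        · refine ⟨L, by omega, by omega, fun z hz => ?_⟩
          rw [hfl z hz]; have := hcomp.2.1 z hz; simp only at this; omega
    -- the colour at the top
    let p0 : ℕ → ℕ := fun y => if y < a then y else 0
    refine ⟨f, hR, fun i => if i < a + t then v i else c (fun y => p0 (f y)) L, ?_⟩
    intro i hi1 hi2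
    by_cases h : i < a + t
    · obtain ⟨j1, hj1, e1, e2, e3⟩ := hv i hi1 h
      obtain ⟨o1, o2, o3⟩ := hφ j1 hj1
      refine ⟨φ j1, by omega, by rw [hfl _ o1, o2, e1], fun z hz => ?_, fun p hp hp' => ?_⟩
      · rw [hfl z (by omega)]; exact e2 _ (o3 z hz)
      · have := e3 p hp hp'
        simp only [hj1, if_true] at this
        simp only [h, if_true]
        rw [← this]
        apply hc
        intro y hy
        simp only [hfl y (by omega)]
    · have hi : i = a + t := by omega
      subst hi
      refine ⟨L, by omega, hfL, fun z hz => ?_, fun p hp hp' => ?_⟩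
      · rw [hfl z hz]; have := hcomp.2.1 z hz; simp only at this; omega
      · simp only [lt_irrefl, if_false]
        have mk : ∀ p : ℕ → ℕ, (∀ y < a, p y = y) → (∀ y < a + t, p y < a) → RS a (a+t) a p :=
          fun p hp hp' => ⟨hp, hp', fun x hx => ⟨x, by omega, hp x hx, fun z hz => by
            rw [hp z (by omega)]; exact hz⟩⟩
        have hred : ∀ p : ℕ → ℕ, c (fun y => p (f y)) L = c (fun y => p (f1 (F y))) L := by
          intro p
          apply hc
          intro y hy
          simp only [hfl y hy]
        rw [hred p, hred p0]
        by_cases ha : a = 0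
        · subst ha
          by_cases ht : t = 0
          · subst ht
            exact hFc (fun y => p (f1 y)) (fun y => p0 (f1 y)) (hf1.comp (mk p hp hp'))
              (hf1.comp (mk p0 (by simp) (by simp)))
          · exact absurd (hp' 0 (by omega)) (by omega)
        · exact hFc (fun y => p (f1 y)) (fun y => p0 (f1 y)) (hf1.comp (mk p hp hp'))
            (hf1.comp (mk p0 (fun y hy => by simp [p0, hy]) (fun y hy => by
              simp only [p0]; split_ifs <;> omega)))

lemma initSeg2 (a m : ℕ) (ha : 0 < a) (ham : a ≤ m) (κ : Type) [Finite κ] :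
    ∃ M, a ≤ M ∧ ∀ c : (ℕ → ℕ) → ℕ → κ,
    (∀ j, Loc j (fun p => c p j)) → ∃ f, RS a M m f ∧ ∃ v : κ, ∀ i, a ≤ i → i < m →
      ∃ j < M, f j = i ∧ (∀ z < j, f z < i) ∧
        ∀ p : ℕ → ℕ, (∀ y < a, p y = y) → (∀ y < i, p y < a) → c (fun y => p (f y)) j = v := by
  classical
  have := Fintype.ofFinite κ
  obtain ⟨M, hM, H⟩ := initSeg1 a (Fintype.card κ * m) κ
  refine ⟨M, hM, fun c hc => ?_⟩
  obtain ⟨f, hf, v, hv⟩ := H c hc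
  have : Nonempty κ := ⟨v 0⟩
  obtain ⟨v0, -, hv0⟩ := Finset.exists_le_card_fiber_of_mul_le_card_of_maps_to
    (s := Finset.Ico a (a + Fintype.card κ * m)) (t := (Finset.univ : Finset κ)) (f := v) (n := m)
    (fun _ _ => Finset.mem_univ _) Finset.univ_nonempty (by simp)
  let Pr : ℕ → Prop := fun l => a ≤ l ∧ v l = v0
  set T := a + Fintype.card κ * m with hT
  have hcount : m ≤ Nat.count Pr T := by
    rw [Nat.count_eq_card_filter_range]
    refine hv0.trans (Finset.card_le_card ?_)
    intro x hx
    simp only [Finset.mem_filter, Finset.mem_Ico, Finset.mem_range, Pr] at hx ⊢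
    exact ⟨hx.1.2, hx.1.1, hx.2⟩
  let h : ℕ → ℕ := fun y => if y < a then y else if Nat.count Pr (y+1) = 0 then 0 else
    min (a + Nat.count Pr (y+1) - 1) (m - 1)
  have hfirst : ∀ i, a ≤ i → i < m → ∃ y < T, a ≤ y ∧ v y = v0 ∧ h y = i ∧ ∀ z < y, h z < i := by
    intro i h1 h2
    have hlt : i - a < Nat.count Pr T := by omega
    have hnth : Nat.nth Pr (i - a) < T := Nat.nth_lt_of_lt_count hlt
    have hmem : Pr (Nat.nth Pr (i-a)) := by
      apply Nat.nth_mem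
      intro hfin
      refine lt_of_lt_of_le hlt ?_
      rw [Nat.count_eq_card_filter_range]
      apply Finset.card_le_card
      intro x hx
      simpa using (Finset.mem_filter.mp hx).2
    have hc0 : Nat.count Pr (Nat.nth Pr (i-a)) = i - a := by
      apply Nat.count_nth
      intro hfin
      refine lt_of_lt_of_le hlt ?_
      rw [Nat.count_eq_card_filter_range]
      apply Finset.card_le_card
      intro x hx
      simpa using (Finset.mem_filter.mp hx).2
    refine ⟨Nat.nth Pr (i-a), hnth, hmem.1, hmem.2, ?_, ?_⟩
    · have e1 : ¬ (Nat.nth Pr (i-a) < a) := not_lt.mpr hmem.1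
      have e2 : Nat.count Pr (Nat.nth Pr (i-a) + 1) = i - a + 1 := by
        rw [Nat.count_succ, hc0, if_pos hmem]
      simp only [h, e1, if_false, e2]
      rw [if_neg (by omega)]
      omega
    · intro z hz
      have e2 : Nat.count Pr (z+1) ≤ i - a := by
        rw [← hc0]; exact Nat.count_monotone _ hz
      simp only [h]
      split_ifs <;> omega
  have hh : RS a T m h := by
    refine ⟨fun y hy => by simp [h, hy], fun y hy => ?_, fun x hx => ?_⟩
    · simp only [h]; split_ifs <;> omega
    · by_cases hxa : x < a
      · refine ⟨x, by omega, by simp [h, hxa], fun z hz => ?_⟩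
        have : z < a := by omega
        simp [h, this, hz]
      · obtain ⟨y, hy, _, _, h3, h4⟩ := hfirst x (by omega) hx
        exact ⟨y, hy, h3, h4⟩
  refine ⟨fun y => h (f y), hf.comp hh, v0, ?_⟩
  intro i hi1 hi2
  obtain ⟨y, hy, hya, hyv, h3, h4⟩ := hfirst i hi1 hi2
  obtain ⟨j, hj, j1, j2, j3⟩ := hv y hya hy
  refine ⟨j, hj, by simp only [j1, h3], fun z hz => h4 _ (j2 z hz), fun p hp hp' => ?_⟩
  rw [← hyv]
  exact j3 (fun y => p (h y)) (fun y hy => by simp only [hh.1 y hy, hp y hy])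
    (fun z hz => hp' _ (h4 z hz))

lemma GR_step {a k : ℕ} (ha : 0 < a) (hak : a < k) (H : GR (a+1) k) : GR a k := by
  intro m ham κ _
  obtain ⟨M, hM, hP⟩ := initSeg2 a m ha ham (Set κ)
  obtain ⟨t, rfl⟩ := Nat.exists_eq_add_of_le hM
  obtain ⟨n, hn, hS⟩ := stage1 hak H t κ
  refine ⟨n, hn, fun c hc => ?_⟩
  obtain ⟨f0, hf0, hf0c⟩ := hS c hc
  obtain ⟨f2, hf2, v, hv⟩ := hP (fun p j => {u | ∃ G, RS a (a+t) k G ∧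
      (∀ y < j, G y < a ∧ G y = p y) ∧ G j = a ∧ c (fun y => G (f0 y)) = u}) (by
    intro j p p' hpp
    ext u
    constructor
    · rintro ⟨G, h1, h2, h3⟩
      exact ⟨G, h1, fun y hy => ⟨(h2 y hy).1, by rw [(h2 y hy).2, hpp y hy]⟩, h3⟩
    · rintro ⟨G, h1, h2, h3⟩
      exact ⟨G, h1, fun y hy => ⟨(h2 y hy).1, by rw [(h2 y hy).2, hpp y hy]⟩, h3⟩)
  refine ⟨_, hf0.comp hf2, ?_⟩
  have key : ∀ g, RS a m k g → v = {c (fun y => g (f2 (f0 y)))} := by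
    intro g hg
    obtain ⟨i, hi, hia, hi'⟩ := hg.2.2 a hak
    have hai : a ≤ i := by
      by_contra hcon
      have := hg.1 i (by omega)
      omega
    obtain ⟨j, hj, j1, j2, j3⟩ := hv i hai hi
    rw [← j3 g hg.1 hi']
    ext u
    simp only [Set.mem_ofPred_eq, Set.mem_singleton_iff]
    constructor
    · rintro ⟨G, h1, h2, h3, rfl⟩
      exact hf0c G (fun y => g (f2 y)) h1 (hf2.comp hg) j hj ⟨h2, h3, by simp only [j1, hia]⟩
    · rintro rfl
      exact ⟨fun y => g (f2 y), hf2.comp hg, fun y hy => ⟨hi' _ (j2 y hy), rfl⟩,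
        by simp only [j1, hia], rfl⟩
  intro g g' hg hg'
  have := (key g hg).symm.trans (key g' hg')
  exact Set.singleton_injective this

theorem GR_all (a k : ℕ) (ha : 0 < a) (hak : a ≤ k) : GR a k := by
  obtain ⟨t, rfl⟩ := Nat.exists_eq_add_of_le hak
  clear hak
  induction t generalizing a with
  | zero => exact GR_base a
  | succ t ih =>
    apply GR_step ha (by omega)
    have := ih (a+1) (by omega)
    rwa [show a + 1 + t = a + (t+1) by omega] at this

lemma blocks {X Y : Type} [Fintype X] [Fintype Y] (lx : X → ℕ) (ly : Y → ℕ) (x0 : X) (y0 : Y)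
    (hx0 : ∀ x, lx x = 0 ↔ x = x0) (hy0 : ∀ y, ly y = 0 ↔ y = y0) (D : X → X)
    (hD : ∀ x, lx x ≠ 0 → lx (D x) < lx x) :
    ∃ (K M : ℕ) (P : ℕ → X) (Q : ℕ → Y), 0 < K ∧ 0 < M ∧ P 0 = x0 ∧ Q 0 = y0 ∧
      (∀ x, ∃ k < K, P k = x) ∧ (∀ y, ∃ j < M, Q j = y) ∧
      ∀ φ : Y → X, (∀ y, lx (φ y) ≤ ly y) → (∀ x, ∃ y, φ y = x ∧ ly y ≤ lx x) →
        ∃ g, RS 1 M K g ∧ ∀ j < M, P (g j) = φ (Q j) ∨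
          (lx (φ (Q j)) ≠ 0 ∧ P (g j) = D (φ (Q j))) := by
  classical
  let K := Fintype.card X
  let B := Fintype.card Y
  have hK : 0 < K := Fintype.card_pos_iff.mpr ⟨x0⟩
  have hB : 0 < B := Fintype.card_pos_iff.mpr ⟨y0⟩
  let e : X ≃ Fin K := Fintype.equivFin X
  let eY : Y ≃ Fin B := Fintype.equivFin Y
  let q : Fin K ≃ X := (Tuple.sort (lx ∘ e.symm)).trans e.symm
  have hq : Monotone (lx ∘ q) := Tuple.monotone_sort (lx ∘ e.symm)
  let rk : X → ℕ := fun x => (q.symm x : ℕ)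
  have hrkK : ∀ x, rk x < K := fun x => (q.symm x).2
  have hrk : ∀ x x', lx x < lx x' → rk x < rk x' := by
    intro x x' h
    by_contra hcon
    have h1 : q.symm x' ≤ q.symm x := not_lt.mp hcon
    have := hq h1
    simp only [Function.comp, Equiv.apply_symm_apply] at this
    omega
  let P : ℕ → X := fun k => if h : k < K then q ⟨k, h⟩ else x0
  have hPrk : ∀ x, P (rk x) = x := fun x => by
    simp only [P, hrkK, dif_pos]
    exact q.apply_symm_apply x
  have hrkP : ∀ k < K, rk (P k) = k := fun k hk => by
    simp only [P, hk, dif_pos, rk, Equiv.symm_apply_apply]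
  have hP0 : P 0 = x0 := by
    rw [← hx0]
    by_contra hcon
    have h1 : lx x0 < lx (P 0) := by rw [(hx0 x0).2 rfl]; omega
    have := hrk _ _ h1
    rw [hrkP 0 hK] at this
    omega
  have hrk0 : rk x0 = 0 := by rw [← hP0, hrkP 0 hK]
  let Q : ℕ → Y := fun j =>
    if K ≤ j / B ∨ ly (eY.symm ⟨j % B, Nat.mod_lt _ hB⟩) ≤ lx (P (j / B)) then
      eY.symm ⟨j % B, Nat.mod_lt _ hB⟩ else y0
  have hQl : ∀ j, j / B < K → ly (Q j) ≤ lx (P (j / B)) := by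
    intro j hj
    simp only [Q]
    split_ifs with h
    · rcases h with h | h
      · omega
      · exact h
    · rw [(hy0 y0).2 rfl]; omega
  have hQe : ∀ k y, (K ≤ k ∨ ly y ≤ lx (P k)) → Q (k * B + eY y) = y := by
    intro k y h
    have h1 : (k * B + (eY y : ℕ)) / B = k := by
      rw [mul_comm, Nat.mul_add_div hB, Nat.div_eq_of_lt (eY y).2, add_zero]
    have h2 : (k * B + (eY y : ℕ)) % B = eY y := by
      rw [mul_comm, Nat.mul_add_mod, Nat.mod_eq_of_lt (eY y).2]
    simp only [Q, h1, h2, Fin.eta, Equiv.symm_apply_apply, if_pos h]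
  have hlt : ∀ k y, k ≤ K → k * B + (eY y : ℕ) < (K + 1) * B := by
    intro k y hk
    have := (eY y).2
    have : k * B ≤ K * B := Nat.mul_le_mul_right _ hk
    rw [add_mul]; omega
  refine ⟨K, (K+1)*B, P, Q, hK, by positivity, hP0, ?_, fun x => ⟨rk x, hrkK x, hPrk x⟩,
    fun y => ⟨K * B + eY y, hlt K y le_rfl, hQe K y (Or.inl le_rfl)⟩, ?_⟩
  · rw [← hy0]
    have := hQl 0 (by simpa using hK)
    rw [Nat.zero_div, hP0, (hx0 x0).2 rfl] at this
    omega
  · intro φ h1 h2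
    let g : ℕ → ℕ := fun j => if rk (φ (Q j)) ≤ j / B then rk (φ (Q j)) else rk (D (φ (Q j)))
    have hgle : ∀ j, g j ≤ j / B := by
      intro j
      simp only [g]
      split_ifs with h
      · exact h
      · have hjK : j / B < K := by have := hrkK (φ (Q j)); omega
        have h3 := (h1 (Q j)).trans (hQl j hjK)
        have h4 : lx (φ (Q j)) ≠ 0 := by
          intro h0
          rw [hx0] at h0
          rw [h0, hrk0] at h
          exact h (Nat.zero_le _)
        have h5 := hrk _ _ (lt_of_lt_of_le (hD _ h4) h3)
        rw [hrkP _ hjK] at h5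
        exact h5.le
    refine ⟨g, ⟨?_, ?_, ?_⟩, ?_⟩
    · intro y hy
      have : y = 0 := by omega
      subst this
      have := hgle 0
      rw [Nat.zero_div] at this
      omega
    · intro y _
      simp only [g]
      split_ifs <;> exact hrkK _
    · intro x hx
      obtain ⟨y, hy1, hy2⟩ := h2 (P x)
      have hQ := hQe x y (Or.inr hy2)
      have hdiv : (x * B + (eY y : ℕ)) / B = x := by
        rw [mul_comm, Nat.mul_add_div hB, Nat.div_eq_of_lt (eY y).2, add_zero]
      have hg : g (x * B + eY y) = x := by
        simp only [g, hQ, hy1, hrkP x hx, hdiv, le_refl, if_true]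
      have hex : ∃ j, g j = x := ⟨_, hg⟩
      have hle := Nat.find_min' hex hg
      refine ⟨Nat.find hex, lt_of_le_of_lt hle (hlt x y hx.le), Nat.find_spec hex, ?_⟩
      intro z hz
      have h3 := Nat.find_min hex hz
      have h4 := hgle z
      have h5 : z / B ≤ x := by
        rw [← hdiv]; exact Nat.div_le_div_right (by omega)
      omega
    · intro j _
      simp only [g]
      split_ifs with h
      · left; exact hPrk _
      · refine Or.inr ⟨fun h0 => ?_, hPrk _⟩
        rw [hx0] at h0
        rw [h0, hrk0] at h
        exact h (Nat.zero_le _)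

/-- grid in the simplex -/
abbrev Gd (d L : ℕ) : Type := {u : Fin d → Fin (L+1) // ∑ i, (u i : ℕ) ≤ L}

def lev {d L : ℕ} (u : Gd d L) : ℕ := ∑ i, (u.1 i : ℕ)

def Gd.mk {d L : ℕ} (u : Fin d → ℕ) (h : ∑ i, u i ≤ L) : Gd d L :=
  ⟨fun i => ⟨u i, by
    have := Finset.single_le_sum (f := u) (fun i _ => Nat.zero_le _) (Finset.mem_univ i)
    omega⟩, h⟩

lemma Gd.mk_apply {d L : ℕ} (u : Fin d → ℕ) (h : ∑ i, u i ≤ L) (i : Fin d) :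
    (((Gd.mk u h).1 i : Fin (L+1)) : ℕ) = u i := rfl

lemma lev_mk {d L : ℕ} (u : Fin d → ℕ) (h : ∑ i, u i ≤ L) : lev (Gd.mk u h) = ∑ i, u i := rfl

lemma lev_eq_zero {d L : ℕ} (u : Gd d L) : lev u = 0 ↔ u = Gd.mk (fun _ => 0) (by simp) := by
  constructor
  · intro h
    unfold lev at h
    rw [Finset.sum_eq_zero_iff] at h
    apply Subtype.ext
    funext i
    apply Fin.ext
    exact h i (Finset.mem_univ i)
  · rintro rfl
    simp [lev_mk]

lemma exists_demote (d L : ℕ) : ∃ D : Gd d L → Gd d L, ∀ u, lev u ≠ 0 →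
    lev (D u) < lev u ∧ ∀ i, |((u.1 i : ℕ) : ℝ) - ((D u).1 i : ℕ)| ≤ 1 := by
  have : ∀ u : Gd d L, ∃ w : Gd d L, lev u ≠ 0 →
    lev w < lev u ∧ ∀ i, |((u.1 i : ℕ) : ℝ) - (w.1 i : ℕ)| ≤ 1 := by
    intro u
    by_cases h : lev u = 0
    · exact ⟨u, fun h' => absurd h h'⟩
    · have hex : ∃ i, (u.1 i : ℕ) ≠ 0 := by
        by_contra hcon
        push Not at hcon
        exact h (Finset.sum_eq_zero fun i _ => hcon i)
      obtain ⟨i, hi⟩ := hex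
      have hlt : ∑ j, (if j = i then (u.1 j : ℕ) - 1 else (u.1 j : ℕ)) < ∑ j, (u.1 j : ℕ) := by
        apply Finset.sum_lt_sum
        · intro j _
          split_ifs <;> omega
        · exact ⟨i, Finset.mem_univ i, by rw [if_pos rfl]; omega⟩
      refine ⟨Gd.mk (fun j => if j = i then (u.1 j : ℕ) - 1 else (u.1 j : ℕ)) (hlt.le.trans u.2),
        fun _ => ⟨hlt, fun j => ?_⟩⟩
      rw [Gd.mk_apply]
      split_ifs with hj
      · subst hj
        rw [Nat.cast_sub (by omega)]
        simp
      · simp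
  choose D hD using this
  exact ⟨D, hD⟩

noncomputable def pt {d L : ℕ} (u : Gd d L) : Fin (d+1) → ℝ :=
  Fin.snoc (α := fun _ => ℝ) (fun i => ((u.1 i : ℕ) : ℝ) / L) (1 - ∑ i, ((u.1 i : ℕ) : ℝ) / L)

lemma pt_cs {d L : ℕ} (u : Gd d L) (i : Fin d) : pt u i.castSucc = ((u.1 i : ℕ) : ℝ) / L := by
  simp [pt]

lemma pt_last {d L : ℕ} (u : Gd d L) : pt u (Fin.last d) = 1 - ∑ i, ((u.1 i : ℕ) : ℝ) / L := by
  simp [pt]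

lemma pt_sum {d L : ℕ} (u : Gd d L) : ∑ i, pt u i = 1 := by
  rw [Fin.sum_univ_castSucc, pt_last]
  simp [pt_cs]

lemma pt_nonneg {d L : ℕ} (u : Gd d L) (i : Fin (d+1)) : 0 ≤ pt u i := by
  refine Fin.lastCases ?_ (fun i => ?_) i
  · rw [pt_last, ← Finset.sum_div, sub_nonneg]
    have : (∑ i, ((u.1 i : ℕ) : ℝ)) ≤ L := by exact_mod_cast u.2
    exact div_le_one_of_le₀ this (by positivity)
  · rw [pt_cs]; positivity

lemma pt_vertex {d L : ℕ} (hL : 0 < L) (i : Fin (d+1)) : ∃ u : Gd d L, pt u i = 1 := by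
  refine Fin.lastCases ?_ (fun i => ?_) i
  · exact ⟨Gd.mk (fun _ => 0) (by simp), by simp [pt_last, Gd.mk_apply]⟩
  · refine ⟨Gd.mk (fun j => if j = i then L else 0) (by simp), ?_⟩
    rw [pt_cs, Gd.mk_apply]
    simp [hL.ne']

lemma mem_S_of_cols {n d L : ℕ} (hn : 0 < n) (hL : 0 < L) (p : ℕ → Gd d L)
    (h0 : p 0 = Gd.mk (fun _ => 0) (by simp)) (hs : ∀ u, ∃ y < n, p y = u) :
    (Matrix.of fun (i : Fin (d+1)) (j : Fin n) => pt (p (n - 1 - j)) i) ∈ S n (d+1) := by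
  refine ⟨fun i j => pt_nonneg _ _, fun j => pt_sum _, fun i => ?_, fun i j hj => ?_⟩
  · obtain ⟨u, hu⟩ := pt_vertex (d := d) hL i
    obtain ⟨y, hy, hyu⟩ := hs u
    refine ⟨⟨n - 1 - y, by omega⟩, ?_⟩
    simp only [Matrix.of_apply]
    rw [show n - 1 - (n - 1 - y) = y by omega, hyu, hu]
  · simp only [Matrix.of_apply, hj, Nat.sub_self, h0]
    refine Fin.lastCases ?_ (fun i => ?_) i
    · simp [pt_last, Gd.mk_apply]
    · have : ¬ ((i : ℕ) = d) := by omega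
      simp [pt_cs, Gd.mk_apply, this]

lemma dist_le {d : ℕ} (x y : Fin (d+1) → ℝ) (hx : ∑ i, x i = 1) (hy : ∑ i, y i = 1) (δ : ℝ)
    (h : ∀ i : Fin d, |x i.castSucc - y i.castSucc| ≤ δ) : ∑ i, |x i - y i| ≤ 2 * d * δ := by
  rw [Fin.sum_univ_castSucc] at hx hy ⊢
  have h1 : ∑ i : Fin d, |x i.castSucc - y i.castSucc| ≤ d * δ := by
    refine (Finset.sum_le_sum fun i _ => h i).trans ?_
    simp
  have h2 : |x (Fin.last d) - y (Fin.last d)| ≤ ∑ i : Fin d, |x i.castSucc - y i.castSucc| := by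
    have : x (Fin.last d) - y (Fin.last d) = -∑ i : Fin d, (x i.castSucc - y i.castSucc) := by
      rw [Finset.sum_sub_distrib]; linarith
    rw [this, abs_neg]
    exact Finset.abs_sum_le_sum_abs _ _
  linarith

lemma exists_phi {m d L : ℕ} (hL : 0 < L) {ρ : Matrix (Fin (d+1)) (Fin (m+1)) ℝ}
    (hρ : ρ ∈ S (m+1) (d+1)) : ∃ φ : Gd m L → Gd d L, (∀ w, lev (φ w) ≤ lev w) ∧
      (∀ u, ∃ w, φ w = u ∧ lev w ≤ lev u) ∧
      ∀ w i, |∑ j, ρ (Fin.castSucc i) j * pt w j - (((φ w).1 i : ℕ) : ℝ) / L| ≤ 1 / L := by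
  obtain ⟨h1, h2, h3, h4⟩ := hρ
  have hLr : (0:ℝ) < L := by exact_mod_cast hL
  have hlast : ∀ i : Fin d, ρ i.castSucc (Fin.last m) = 0 := by
    intro i
    rw [h4 _ _ (by simp)]
    simp; omega
  have hx : ∀ (w : Gd m L) (i : Fin d), ∑ j, ρ (Fin.castSucc i) j * pt w j =
      (∑ j : Fin m, ρ i.castSucc j.castSucc * ((w.1 j : ℕ) : ℝ)) / L := by
    intro w i
    rw [Fin.sum_univ_castSucc, hlast, Finset.sum_div]
    simp [pt_cs, mul_div_assoc]
  let fl : Gd m L → Fin d → ℕ := fun w i => ⌊∑ j : Fin m, ρ i.castSucc j.castSucc * ((w.1 j : ℕ) : ℝ)⌋₊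
  have hnn : ∀ (w : Gd m L) (i : Fin d), 0 ≤ ∑ j : Fin m, ρ i.castSucc j.castSucc * ((w.1 j : ℕ) : ℝ) :=
    fun w i => Finset.sum_nonneg fun j _ => mul_nonneg (h1 _ _) (by positivity)
  have hfl : ∀ w : Gd m L, ∑ i, fl w i ≤ lev w := by
    intro w
    have : (∑ i, (fl w i : ℝ)) ≤ ∑ j, ((w.1 j : ℕ) : ℝ) := by
      calc (∑ i, (fl w i : ℝ)) ≤ ∑ i, ∑ j : Fin m, ρ i.castSucc j.castSucc * ((w.1 j : ℕ) : ℝ) :=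
            Finset.sum_le_sum fun i _ => Nat.floor_le (hnn w i)
        _ = ∑ j : Fin m, (∑ i : Fin d, ρ i.castSucc j.castSucc) * ((w.1 j : ℕ) : ℝ) := by
            rw [Finset.sum_comm]; simp only [Finset.sum_mul]
        _ ≤ _ := by
            apply Finset.sum_le_sum
            intro j _
            have e := h2 j.castSucc
            rw [Fin.sum_univ_castSucc] at e
            have := h1 (Fin.last d) j.castSucc
            have : ∑ i : Fin d, ρ i.castSucc j.castSucc ≤ 1 := by linarith
            exact mul_le_of_le_one_left (by positivity) this
    unfold lev
    exact_mod_cast this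
  refine ⟨fun w => Gd.mk (fl w) ((hfl w).trans w.2), fun w => hfl w, ?_, ?_⟩
  · intro u
    have hJ : ∀ i : Fin d, ∃ j : Fin m, ρ i.castSucc j.castSucc = 1 := by
      intro i
      obtain ⟨j, hj⟩ := h3 i.castSucc
      revert hj
      refine Fin.lastCases ?_ (fun j => ?_) j
      · intro hj; rw [hlast] at hj; norm_num at hj
      · intro hj; exact ⟨j, hj⟩
    choose J hJ using hJ
    have hcol : ∀ i i' : Fin d, i ≠ i' → ρ i'.castSucc (J i).castSucc = 0 := by
      intro i i' hne
      have e := h2 (J i).castSucc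
      have hle : ρ i.castSucc (J i).castSucc + ρ i'.castSucc (J i).castSucc ≤ 1 := by
        rw [← e]
        exact Finset.add_le_sum (fun k _ => h1 k _) (Finset.mem_univ _) (Finset.mem_univ _)
          (fun h => hne (Fin.castSucc_injective _ h))
      rw [hJ] at hle
      have := h1 i'.castSucc (J i).castSucc
      linarith
    have hws : ∑ j : Fin m, ∑ i : Fin d, (if J i = j then (u.1 i : ℕ) else 0) = lev u := by
      rw [Finset.sum_comm]
      simp [lev]
    refine ⟨Gd.mk (fun j => ∑ i : Fin d, if J i = j then (u.1 i : ℕ) else 0)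
      (by rw [hws]; exact u.2), ?_, by rw [lev_mk, hws]⟩
    apply Subtype.ext
    funext i
    apply Fin.ext
    rw [Gd.mk_apply]
    simp only [fl, Gd.mk_apply]
    have : ∑ j : Fin m, ρ i.castSucc j.castSucc *
        ((∑ i : Fin d, if J i = j then (u.1 i : ℕ) else 0 : ℕ) : ℝ) = ((u.1 i : ℕ) : ℝ) := by
      push_cast
      simp only [Finset.mul_sum]
      rw [Finset.sum_comm]
      simp only [mul_ite, mul_zero, Finset.sum_ite_eq, Finset.mem_univ, if_true]
      rw [Finset.sum_eq_single i]
      · rw [hJ, one_mul]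
      · intro i' _ hne
        rw [hcol i' i hne, zero_mul]
      · simp
    rw [this, Nat.floor_natCast]
  · intro w i
    rw [hx, Gd.mk_apply, ← sub_div, abs_div, abs_of_pos hLr]
    apply div_le_div_of_nonneg_right _ hLr.le
    have a1 := Nat.floor_le (hnn w i)
    have a2 := (Nat.lt_floor_add_one (∑ j : Fin m, ρ i.castSucc j.castSucc * ((w.1 j : ℕ) : ℝ))).le
    simp only [fl]
    rw [abs_le]
    constructor <;> linarith

lemma one_mem_S (k : ℕ) : (1 : Matrix (Fin k) (Fin k) ℝ) ∈ S k k := by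
  refine ⟨fun i j => ?_, fun j => ?_, fun i => ⟨i, by simp⟩, fun i j hj => ?_⟩
  · rw [Matrix.one_apply]; split_ifs <;> norm_num
  · simp [Matrix.one_apply]
  · rw [Matrix.one_apply]
    congr 1
    rw [Fin.ext_iff, hj]

lemma ramsey_main (d m r : ℕ) (ε : ℝ) (hε : 0 < ε) (hne : (S (m+1) (d+1)).Nonempty) :
    ∃ n : ℕ, ∀ c : S n (d+1) → Fin r,
      ∃ γ ∈ S n (m+1), ∃ j : Fin r,
        ∀ ρ ∈ S (m+1) (d+1),
          ∃ (ρ' : Matrix (Fin (d+1)) (Fin n) ℝ) (hρ' : ρ' ∈ S n (d+1)),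
            c ⟨ρ', hρ'⟩ = j ∧
              ∀ col : Fin n, ∑ i : Fin (d+1), |(ρ * γ) i col - ρ' i col| ≤ ε := by
  classical
  obtain ⟨L0, hL0⟩ := exists_nat_gt (4 * d / ε)
  let L := L0 + 1
  have hL : 0 < L := Nat.succ_pos _
  have hLr : (0:ℝ) < L := by exact_mod_cast hL
  have hLε : 2 * d * (2 / L) ≤ ε := by
    have h1 : 4 * d / ε < L := hL0.trans (by simp [L])
    rw [div_lt_iff₀ hε] at h1
    have h2 : 2 * d * (2 / (L:ℝ)) = 4 * d / L := by ring
    rw [h2, div_le_iff₀ hLr]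
    linarith
  obtain ⟨D, hD⟩ := exists_demote d L
  obtain ⟨K, M, P, Q, hK, hM, hP0, hQ0, hPs, hQs, hmain⟩ :=
    blocks (lev (d := d) (L := L)) (lev (d := m) (L := L)) _ _ lev_eq_zero lev_eq_zero D
      (fun u hu => (hD u hu).1)
  obtain ⟨n, hn, hGR⟩ := GR_all 1 K one_pos hK M hM (Option (Fin r))
  refine ⟨n, fun c => ?_⟩
  let mat : (ℕ → ℕ) → Matrix (Fin (d+1)) (Fin n) ℝ := fun h =>
    Matrix.of fun i j => pt (P (h (n - 1 - j))) i
  obtain ⟨f, hf, hfc⟩ := hGR (fun h => if hh : mat h ∈ S n (d+1) then some (c ⟨mat h, hh⟩) else none)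
    (by
      intro g g' hgg
      have : mat g = mat g' := by
        ext i j
        simp only [mat, Matrix.of_apply]
        rw [hgg _ (by omega)]
      simp only [this])
  have hmat : ∀ h, RS 1 n K h → mat h ∈ S n (d+1) := by
    intro h hh
    refine mem_S_of_cols hn hL (fun y => P (h y)) ?_ ?_
    · simp only [hh.1 0 one_pos, hP0]
    · intro u
      obtain ⟨k, hk, hku⟩ := hPs u
      obtain ⟨y, hy, hyk, _⟩ := hh.2.2 k hk
      exact ⟨y, hy, by simp only [hyk, hku]⟩
  have hγ : (Matrix.of fun (i : Fin (m+1)) (j : Fin n) => pt (Q (f (n - 1 - j))) i) ∈ S n (m+1) := by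
    refine mem_S_of_cols hn hL (fun y => Q (f y)) ?_ ?_
    · simp only [hf.1 0 one_pos, hQ0]
    · intro u
      obtain ⟨k, hk, hku⟩ := hQs u
      obtain ⟨y, hy, hyk, _⟩ := hf.2.2 k hk
      exact ⟨y, hy, by simp only [hyk, hku]⟩
  have hg : ∀ ρ ∈ S (m+1) (d+1), ∃ g, RS 1 M K g ∧ ∀ y < M, ∀ i : Fin d,
      |∑ j, ρ (Fin.castSucc i) j * pt (Q y) j - pt (P (g y)) i.castSucc| ≤ 2 / L := by
    intro ρ hρ
    obtain ⟨φ, p1, p2, p3⟩ := exists_phi hL hρ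
    obtain ⟨g, hg, hg'⟩ := hmain φ p1 p2
    refine ⟨g, hg, fun y hy i => ?_⟩
    have e1 := p3 (Q y) i
    have e12 : (1:ℝ) / L ≤ 2 / L := by gcongr; norm_num
    by_cases hφ : P (g y) = φ (Q y)
    · rw [hφ, pt_cs]
      exact e1.trans e12
    · obtain ⟨h0, hd⟩ := (hg' y hy).resolve_left hφ
      · rw [hd, pt_cs]
        have e2 := (hD _ h0).2 i
        have e3 : |(((φ (Q y)).1 i : ℕ) : ℝ) / L - (((D (φ (Q y))).1 i : ℕ) : ℝ) / L| ≤ 1 / L := by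
          rw [← sub_div, abs_div, abs_of_pos hLr]
          exact div_le_div_of_nonneg_right e2 hLr.le
        calc _ ≤ _ := abs_sub_le _ ((((φ (Q y)).1 i : ℕ) : ℝ) / L) _
          _ ≤ 1 / L + 1 / L := add_le_add e1 e3
          _ = 2 / L := by ring
  obtain ⟨ρ0, hρ0⟩ := hne
  obtain ⟨g0, hg0, -⟩ := hg ρ0 hρ0
  refine ⟨_, hγ, c ⟨_, hmat _ (hf.comp hg0)⟩, fun ρ hρ => ?_⟩
  obtain ⟨g, hgR, hgd⟩ := hg ρ hρ
  have hm := hmat _ (hf.comp hgR)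
  refine ⟨_, hm, ?_, fun col => ?_⟩
  · have := hfc g g0 hgR hg0
    simp only [hm, hmat _ (hf.comp hg0), dif_pos, Option.some.injEq] at this
    exact this
  · refine le_trans (dist_le (fun i => (ρ * (Matrix.of fun (i : Fin (m+1)) (j : Fin n) =>
      pt (Q (f (n - 1 - j))) i)) i col) (fun i => mat (fun y => g (f y)) i col) ?_ (hm.2.1 col) (2 / L) ?_) hLε
    · simp only [Matrix.mul_apply]
      rw [Finset.sum_comm]
      simp only [← Finset.sum_mul, hρ.2.1, one_mul]
      exact hγ.2.1 col
    · intro i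
      simp only [Matrix.mul_apply, mat, Matrix.of_apply]
      exact hgd _ (hf.2.1 _ (by omega)) i

/-- Ramsey-type statement for the sets `S(k,l)` of matrices of trace-preserving positive
contractive quotient mappings `ℓ₁ᵏ → ℓ₁ˡ` fixing the last coordinate.  The distance
`D(A,B) = max_j ∑_i |A i j - B i j|` is expressed by the condition `∀ j, ∑ i, |A i j - B i j| ≤ ε`. -/
theorem ramsey_tpcq_matrices (d m r : ℕ) (ε : ℝ) (hε : 0 < ε) :
    ∃ n : ℕ, ∀ c : S n d → Fin r,
      ∃ γ ∈ S n m, ∃ j : Fin r,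
        ∀ ρ ∈ S m d,
          ∃ (ρ' : Matrix (Fin d) (Fin n) ℝ) (hρ' : ρ' ∈ S n d),
            c ⟨ρ', hρ'⟩ = j ∧
              ∀ col : Fin n, ∑ i : Fin d, |(ρ * γ) i col - ρ' i col| ≤ ε := by
  rcases Nat.eq_zero_or_pos r with rfl | hr
  · exact ⟨d, fun c => (c ⟨1, one_mem_S d⟩).elim0⟩
  rcases (S m d).eq_empty_or_nonempty with he | hne
  · refine ⟨m, fun c => ⟨1, one_mem_S m, ⟨0, hr⟩, fun ρ hρ => ?_⟩⟩
    rw [he] at hρ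
    exact absurd hρ (Set.notMem_empty _)
  obtain ⟨ρ0, h1, h2, h3, h4⟩ := id hne
  rcases m with _ | m
  · rcases d with _ | d
    · refine ⟨0, fun c => ⟨1, one_mem_S 0, c ⟨1, one_mem_S 0⟩, fun ρ hρ => ?_⟩⟩
      exact ⟨1, one_mem_S 0, rfl, fun col => col.elim0⟩
    · obtain ⟨j, _⟩ := h3 0
      exact j.elim0
  · rcases d with _ | d
    · have := h2 0
      simp at this
    · exact ramsey_main d m r ε hε hne
end

section
/- Let A be a d × n real matrix with nonnegative entries and let φ_A : ℓ₁^n(ℝ) → ℓ₁^d(ℝ) be the induced linear map. Then φ_A maps the closed unit ball of ℓ₁^n(ℝ) onto the closed unit ball of ℓ₁^d(ℝ) and satisfies Σ_{i=1}^d (φ_A a)_i = Σ_{j=1}^n a_j for every a ∈ ℝ^n, if and only if every column of A sums to 1 and every row of A contains an entry equal to 1. -/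
/-- `ℓ₁ⁿ(ℝ)`: the space `ℝⁿ` with the norm given by the sum of the absolute values of the
coordinates. -/
abbrev L1R (n : ℕ) : Type := PiLp 1 (fun _ : Fin n => ℝ)

/-- The linear map `ℓ₁ⁿ(ℝ) → ℓ₁ᵈ(ℝ)` induced by a `d × n` real matrix. -/
def matrixMapL1R {d n : ℕ} (A : Matrix (Fin d) (Fin n) ℝ) (x : L1R n) : L1R d :=
  (WithLp.equiv 1 (Fin d → ℝ)).symm (A.mulVec (WithLp.equiv 1 (Fin n → ℝ) x))

/-- A `d × n` real matrix `A` with nonnegative entries induces a map `ℓ₁ⁿ(ℝ) → ℓ₁ᵈ(ℝ)` which is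
a contractive quotient mapping (the closed unit ball is mapped onto the closed unit ball) and
preserves the sum of the coordinates if and only if every column of `A` sums to `1` and every
row of `A` contains an entry equal to `1`. -/
theorem matrix_tp_contractive_quotient_iff (d n : ℕ) (A : Matrix (Fin d) (Fin n) ℝ)
    (hA : ∀ i j, 0 ≤ A i j) :
    (matrixMapL1R A '' Metric.closedBall 0 1 = Metric.closedBall 0 1 ∧
        ∀ a : Fin n → ℝ, ∑ i : Fin d, A.mulVec a i = ∑ j : Fin n, a j) ↔
      ((∀ j : Fin n, ∑ i : Fin d, A i j = 1) ∧ (∀ i : Fin d, ∃ j : Fin n, A i j = 1)) := by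
  have hnorm : ∀ (m : ℕ) (x : L1R m), x ∈ Metric.closedBall (0 : L1R m) 1 ↔ ∑ j, |x j| ≤ 1 := by
    intro m x
    rw [mem_closedBall_zero_iff, PiLp.norm_eq_of_L1]
    simp [Real.norm_eq_abs]
  have happ : ∀ (x : L1R n) (i : Fin d), matrixMapL1R A x i = ∑ j, A i j * x j := by
    intro x i
    rfl
  constructor
  · rintro ⟨himg, hsum⟩
    have hcol : ∀ j : Fin n, ∑ i : Fin d, A i j = 1 := by
      intro j
      have h := hsum (Pi.single j 1)
      simpa using h
    refine ⟨hcol, fun i => ?_⟩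
    by_contra! hne
    have hlt : ∀ j, A i j < 1 := by
      intro j
      refine lt_of_le_of_ne ?_ (hne j)
      rw [← hcol j]
      exact Finset.single_le_sum (f := fun k => A k j) (fun k _ => hA k j) (Finset.mem_univ i)
    have hmem : (WithLp.toLp 1 (Pi.single i 1) : L1R d) ∈ Metric.closedBall (0 : L1R d) 1 := by
      rw [hnorm]
      refine le_of_eq ?_
      rw [Finset.sum_eq_single i]
      · simp
      · intro b _ hb
        simp [hb]
      · simp
    rw [← himg] at hmem
    obtain ⟨x, hx, hxi⟩ := hmem
    rw [hnorm] at hx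
    have h1 : ∑ j, A i j * x j = 1 := by
      rw [← happ, hxi]
      simp
    have hle : ∑ j, A i j * x j ≤ ∑ j, A i j * |x j| :=
      Finset.sum_le_sum fun j _ => mul_le_mul_of_nonneg_left (le_abs_self _) (hA i j)
    have hnn : ∀ j ∈ Finset.univ, 0 ≤ (1 - A i j) * |x j| := fun j _ =>
      mul_nonneg (by linarith [hlt j]) (abs_nonneg _)
    have h0 : ∑ j, (1 - A i j) * |x j| = 0 := by
      refine le_antisymm ?_ (Finset.sum_nonneg hnn)
      simp only [sub_mul, one_mul, Finset.sum_sub_distrib]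
      linarith
    rw [Finset.sum_eq_zero_iff_of_nonneg hnn] at h0
    have hx0 : ∀ j, x j = 0 := by
      intro j
      rcases mul_eq_zero.mp (h0 j (Finset.mem_univ j)) with h | h
      · linarith [hlt j]
      · exact abs_eq_zero.mp h
    simp [hx0] at h1
  · rintro ⟨hcol, hrow⟩
    refine ⟨Set.Subset.antisymm ?_ ?_, ?_⟩
    · rintro _ ⟨x, hx, rfl⟩
      rw [hnorm] at hx ⊢
      refine le_trans ?_ hx
      calc ∑ i, |matrixMapL1R A x i| ≤ ∑ i, ∑ j, A i j * |x j| := by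
            refine Finset.sum_le_sum fun i _ => ?_
            rw [happ]
            refine (Finset.abs_sum_le_sum_abs _ _).trans (le_of_eq ?_)
            refine Finset.sum_congr rfl fun j _ => ?_
            rw [abs_mul, abs_of_nonneg (hA i j)]
        _ = ∑ j, |x j| := by
            rw [Finset.sum_comm]
            refine Finset.sum_congr rfl fun j _ => ?_
            rw [← Finset.sum_mul, hcol, one_mul]
    · intro y hy
      rw [hnorm] at hy
      choose f hf using hrow
      have hz : ∀ k i, k ≠ i → A k (f i) = 0 := by
        intro k i hki
        have h := hcol (f i)
        rw [← Finset.add_sum_erase _ _ (Finset.mem_univ i), hf] at h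
        have h' : ∑ k ∈ Finset.univ.erase i, A k (f i) = 0 := by linarith
        rw [Finset.sum_eq_zero_iff_of_nonneg (fun k _ => hA k (f i))] at h'
        exact h' k (by simp [hki])
      refine ⟨WithLp.toLp 1 (fun j => ∑ i, if f i = j then y i else 0), ?_, ?_⟩
      · rw [hnorm]
        refine le_trans ?_ hy
        calc ∑ j, |∑ i, if f i = j then y i else 0| ≤ ∑ j, ∑ i, if f i = j then |y i| else 0 := by
              refine Finset.sum_le_sum fun j _ => ?_
              refine (Finset.abs_sum_le_sum_abs _ _).trans (le_of_eq ?_)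
              refine Finset.sum_congr rfl fun i _ => ?_
              split_ifs <;> simp
          _ = ∑ i, |y i| := by
              rw [Finset.sum_comm]
              simp
      · ext k
        rw [happ]
        simp only [Finset.mul_sum]
        rw [Finset.sum_comm]
        simp only [mul_ite, mul_zero, Finset.sum_ite_eq, Finset.mem_univ, if_true]
        rw [Finset.sum_eq_single k]
        · rw [hf, one_mul]
        · intro i _ hi
          rw [hz k i hi.symm, zero_mul]
        · simp
    · intro a
      simp only [Matrix.mulVec, dotProduct]
      rw [Finset.sum_comm]
      refine Finset.sum_congr rfl fun j _ => ?_
      rw [← Finset.sum_mul, hcol, one_mul]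
end

section
/- Let H and K be finite-dimensional complex inner product spaces with dim H ≤ dim K, let δ ≥ 0, and let T : H → K be a linear map such that ‖T(x)‖ ≤ ‖x‖ and ‖x‖ ≤ (1+δ)‖T(x)‖ for all x ∈ H. Then there exists a linear isometry U : H → K such that ‖T − U‖ ≤ δ, where ‖·‖ denotes the operator norm. -/
theorem aux_norm_sq_sum {E : Type*} [NormedAddCommGroup E] [InnerProductSpace ℂ E]
    {ι : Type*} [Fintype ι] {v : ι → E} (hv : Orthonormal ℂ v) (c : ι → ℂ) :
    ‖∑ i, c i • v i‖ ^ 2 = ∑ i, ‖c i‖ ^ 2 := by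
  have h := hv.inner_sum c c Finset.univ
  rw [inner_self_eq_norm_sq_to_K] at h
  have h2 : ∀ i, (starRingEnd ℂ) (c i) * c i = ((‖c i‖ ^ 2 : ℝ) : ℂ) := by
    intro i
    rw [mul_comm, Complex.mul_conj, Complex.normSq_eq_norm_sq]
  simp only [h2] at h
  rw [← Complex.ofReal_sum] at h
  apply Complex.ofReal_injective
  rw [← h]
  simp

/-- Every linear `δ`-embedding between finite-dimensional complex inner product spaces
(with the dimension of the domain at most that of the codomain) is within operator-norm
distance `δ` of a linear isometry. -/
theorem deltaEmbedding_close_to_isometry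
    (H K : Type*) [NormedAddCommGroup H] [InnerProductSpace ℂ H] [FiniteDimensional ℂ H]
    [NormedAddCommGroup K] [InnerProductSpace ℂ K] [FiniteDimensional ℂ K]
    (hdim : Module.finrank ℂ H ≤ Module.finrank ℂ K)
    (δ : ℝ) (hδ : 0 ≤ δ) (T : H →L[ℂ] K)
    (hT : ∀ x : H, ‖T x‖ ≤ ‖x‖ ∧ ‖x‖ ≤ (1 + δ) * ‖T x‖) :
    ∃ U : H →L[ℂ] K, (∀ x : H, ‖U x‖ = ‖x‖) ∧ ‖T - U‖ ≤ δ := by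
  have hS : (ContinuousLinearMap.adjoint T ∘L T : H →L[ℂ] H).toLinearMap.IsSymmetric := by
    intro x y
    simp [ContinuousLinearMap.adjoint_inner_left, ContinuousLinearMap.adjoint_inner_right]
  let b := hS.eigenvectorBasis rfl
  have hTb : ∀ i j, i ≠ j → inner ℂ (T (b i)) (T (b j)) = 0 := by
    intro i j hij
    rw [← ContinuousLinearMap.adjoint_inner_right]
    have h := hS.apply_eigenvectorBasis rfl j
    change ContinuousLinearMap.adjoint T (T (b j)) = _ • b j at h
    rw [h, inner_smul_right, b.orthonormal.2 hij, mul_zero]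
  have hb : ∀ i, ‖b i‖ = 1 := b.orthonormal.1
  let s : _ → ℝ := fun i => ‖T (b i)‖
  have hs1 : ∀ i, s i ≤ 1 := fun i => by simpa [hb] using (hT (b i)).1
  have hs2 : ∀ i, 1 ≤ (1 + δ) * s i := fun i => by simpa [hb] using (hT (b i)).2
  have hs0 : ∀ i, 0 < s i := fun i => by
    have := hs2 i
    by_contra hc
    have : (1 + δ) * s i ≤ 0 := mul_nonpos_of_nonneg_of_nonpos (by linarith) (not_lt.mp hc)
    linarith
  let u : Fin (Module.finrank ℂ H) → K := fun i => ((s i : ℂ)⁻¹) • T (b i)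
  have hu : Orthonormal ℂ u := by
    constructor
    · intro i
      have : s i ≠ 0 := (hs0 i).ne'
      simp only [u, norm_smul, norm_inv, Complex.norm_real, Real.norm_eq_abs, abs_of_pos (hs0 i)]
      exact inv_mul_cancel₀ this
    · intro i j hij
      simp only [u, inner_smul_left, inner_smul_right, hTb i j hij, mul_zero]
  have hTu : ∀ i, T (b i) = (s i : ℂ) • u i := fun i => by
    have : (s i : ℂ) ≠ 0 := by exact_mod_cast (hs0 i).ne'
    simp only [u, smul_smul, mul_inv_cancel₀ this, one_smul]
  let U : H →L[ℂ] K := LinearMap.toContinuousLinearMap (b.toBasis.constr ℂ u)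
  have hUb : ∀ i, U (b i) = u i := fun i => by
    have := b.toBasis.constr_basis ℂ u i
    simpa [U] using this
  have hx : ∀ x, x = ∑ i, (b.repr x i) • b i := fun x => (b.sum_repr x).symm
  have hnx : ∀ x, ‖x‖ ^ 2 = ∑ i, ‖b.repr x i‖ ^ 2 := fun x => by
    conv_lhs => rw [hx x]
    exact aux_norm_sq_sum b.orthonormal _
  refine ⟨U, fun x => ?_, ?_⟩
  · have hUx : U x = ∑ i, (b.repr x i) • u i := by
      conv_lhs => rw [hx x]
      simp only [map_sum, map_smul, hUb]
    have h2 : ‖U x‖ ^ 2 = ‖x‖ ^ 2 := by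
      rw [hUx, aux_norm_sq_sum hu, hnx x]
    exact (pow_left_inj₀ (norm_nonneg _) (norm_nonneg _) two_ne_zero).mp h2
  · refine ContinuousLinearMap.opNorm_le_bound _ hδ fun x => ?_
    have hDx : (T - U) x = ∑ i, (b.repr x i * ((s i - 1 : ℝ) : ℂ)) • u i := by
      conv_lhs => rw [hx x]
      simp only [map_sum, map_smul, ContinuousLinearMap.sub_apply, hUb, hTu]
      refine Finset.sum_congr rfl fun i _ => ?_
      push_cast
      module
    refine (pow_le_pow_iff_left₀ (norm_nonneg _) (by positivity) two_ne_zero).mp ?_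
    rw [hDx, aux_norm_sq_sum hu, mul_pow, hnx x, Finset.mul_sum]
    refine Finset.sum_le_sum fun i _ => ?_
    rw [norm_mul, mul_pow, mul_comm]
    refine mul_le_mul_of_nonneg_right ?_ (by positivity)
    rw [Complex.norm_real, Real.norm_eq_abs, sq_abs]
    have h1 := hs1 i
    have h2 := hs2 i
    have h3 : δ * s i ≤ δ := mul_le_of_le_one_right hδ h1
    exact sq_le_sq' (by linarith) (by linarith)
end

section
/- The class {ℓ∞^n(ℂ)}_{n∈ℕ} satisfies the stable Ramsey property with modulus ϖ(δ) = δ: for all d, m ∈ ℕ, δ ≥ 0, and ε > 0 there exists n ∈ ℕ such that for every 1-Lipschitz map c from the set of linear δ-embeddings of ℓ∞^d(ℂ) into ℓ∞^n(ℂ) (with the operator-norm metric) to [0,1], there exists a linear isometric embedding γ : ℓ∞^m(ℂ) → ℓ∞^n(ℂ) such that |c(γ ∘ η₀) − c(γ ∘ η₁)| ≤ ε + δ for all linear δ-embeddings η₀, η₁ of ℓ∞^d(ℂ) into ℓ∞^m(ℂ). -/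
/-- `ℓ∞ⁿ(ℂ)`: the space `ℂⁿ` with the supremum norm. -/
abbrev LinfC (n : ℕ) : Type := PiLp ⊤ (fun _ : Fin n => ℂ)

namespace SRP

open Filter

attribute [local instance] Ultrafilter.mul Ultrafilter.semigroup

/-- Words over the alphabet `ℕ`. -/
abbrev W := FreeMonoid ℕ

/-- Words using only letters `< i`. -/
def LT (i : ℕ) : Set W := {w | ∀ a ∈ FreeMonoid.toList w, a < i}

/-- Words beginning with the letter `i`. -/
def Beg (i : ℕ) : Set W := {w | ∃ v : List ℕ, FreeMonoid.toList w = i :: v}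

/-- Ultrafilters concentrating on `LT i`. -/
def Al (i : ℕ) : Set (Ultrafilter W) := {U | LT i ∈ U}

lemma Al_mul {i : ℕ} {U V : Ultrafilter W} (hU : U ∈ Al i) (hV : V ∈ Al i) : U * V ∈ Al i := by
  change ∀ᶠ m in ↑(U * V), m ∈ LT i
  rw [Ultrafilter.eventually_mul]
  filter_upwards [show ∀ᶠ m in (U : Filter W), m ∈ LT i from hU] with a ha
  filter_upwards [show ∀ᶠ m in (V : Filter W), m ∈ LT i from hV] with b hb
  intro x hx
  rw [FreeMonoid.toList_mul, List.mem_append] at hx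
  rcases hx with hx | hx
  · exact ha x hx
  · exact hb x hx

lemma Al_mono {i j : ℕ} (h : i ≤ j) : Al i ⊆ Al j := fun U hU =>
  Filter.mem_of_superset (f := (U : Filter W)) hU fun _ hw a ha => (hw a ha).trans_le h

lemma Al_closed (i : ℕ) : IsClosed (Al i) := ultrafilter_isClosed_basic _

lemma beg_mul {i : ℕ} {U V : Ultrafilter W} (hU : Beg i ∈ U) : Beg i ∈ U * V := by
  change ∀ᶠ m in ↑(U * V), m ∈ Beg i
  rw [Ultrafilter.eventually_mul]
  filter_upwards [show ∀ᶠ m in (U : Filter W), m ∈ Beg i from hU] with a ha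
  refine Eventually.of_forall fun b => ?_
  obtain ⟨v, hv⟩ := ha
  exact ⟨v ++ FreeMonoid.toList b, by rw [FreeMonoid.toList_mul, hv]; rfl⟩

lemma map_mul_uf (f : W →* W) (U V : Ultrafilter W) :
    (U * V).map f = U.map f * V.map f := by
  apply Ultrafilter.coe_inj.mp
  apply Filter.ext'
  intro p
  rw [Ultrafilter.eventually_mul]
  simp only [Ultrafilter.coe_map, Filter.eventually_map]
  rw [Ultrafilter.eventually_mul]
  simp

lemma map_congr_uf {U : Ultrafilter W} {s : Set W} (hs : s ∈ U) {f g : W → W}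
    (h : ∀ w ∈ s, f w = g w) : U.map f = U.map g := by
  apply Ultrafilter.coe_inj.mp
  simp only [Ultrafilter.coe_map]
  exact Filter.map_congr (Filter.mem_of_superset (f := (U : Filter W)) hs h)

lemma one_mul_uf (U : Ultrafilter W) : (pure 1 : Ultrafilter W) * U = U := by
  apply Ultrafilter.coe_inj.mp
  apply Filter.ext'
  intro p
  rw [Ultrafilter.eventually_mul]
  simp

lemma mul_one_uf (U : Ultrafilter W) : U * (pure 1 : Ultrafilter W) = U := by
  apply Ultrafilter.coe_inj.mp
  apply Filter.ext'
  intro p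
  rw [Ultrafilter.eventually_mul]
  simp

lemma map_congr_LT {i : ℕ} {f g : ℕ → ℕ} (h : ∀ a < i, f a = g a) {w : W} (hw : w ∈ LT i) :
    FreeMonoid.map f w = FreeMonoid.map g w := by
  apply FreeMonoid.toList.injective
  simp only [FreeMonoid.toList_map]
  exact List.map_congr_left fun a ha => h a (hw a ha)

lemma map_congr_Al {i : ℕ} {f g : ℕ → ℕ} (h : ∀ a < i, f a = g a) {U : Ultrafilter W}
    (hU : U ∈ Al i) : U.map (FreeMonoid.map f) = U.map (FreeMonoid.map g) :=
  map_congr_uf hU fun _ hw => map_congr_LT h hw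

lemma map_Al {i j : ℕ} {f : ℕ → ℕ} (h : ∀ a < i, f a < j) {U : Ultrafilter W}
    (hU : U ∈ Al i) : U.map (FreeMonoid.map f) ∈ Al j := by
  change ∀ᶠ m in ↑(U.map (FreeMonoid.map f)), m ∈ LT j
  rw [Ultrafilter.coe_map, Filter.eventually_map]
  filter_upwards [show ∀ᶠ m in (U : Filter W), m ∈ LT i from hU] with w hw
  intro a ha
  rw [FreeMonoid.toList_map, List.mem_map] at ha
  obtain ⟨b, hb, rfl⟩ := ha
  exact h b (hw b hb)

lemma map_map_uf (f g : ℕ → ℕ) (U : Ultrafilter W) :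
    (U.map (FreeMonoid.map f)).map (FreeMonoid.map g) = U.map (FreeMonoid.map (g ∘ f)) := by
  rw [Ultrafilter.map_map]
  congr 1
  ext w
  simp [FreeMonoid.map_comp]

/-- `p` is an idempotent in a minimal left ideal of `Al i`. -/
def Good (i : ℕ) (p : Ultrafilter W) : Prop :=
  p ∈ Al i ∧ p * p = p ∧ ∀ u ∈ Al i, ∃ v ∈ Al i, v * (u * p) = p

lemma eq_pure_of_Al0 {U : Ultrafilter W} (hU : U ∈ Al 0) : U = pure 1 := by
  apply Ultrafilter.eq_of_le
  rw [Ultrafilter.coe_pure, Filter.le_pure_iff]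
  refine Filter.mem_of_superset (f := (U : Filter W)) hU fun w hw => ?_
  apply FreeMonoid.toList.injective
  exact List.eq_nil_iff_forall_not_mem.mpr fun a ha => absurd (hw a ha) (by omega)

lemma good_zero : Good 0 (pure 1) := by
  have h1 : (pure 1 : Ultrafilter W) ∈ Al 0 := by
    change LT 0 ∈ (pure 1 : Ultrafilter W)
    rw [Ultrafilter.mem_pure]
    intro a ha
    simp at ha
  refine ⟨h1, one_mul_uf _, fun u hu => ⟨pure 1, h1, ?_⟩⟩
  rw [eq_pure_of_Al0 hu, one_mul_uf, one_mul_uf]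

/-- retraction of letter `i` to letter `a`. -/
def ret (i a : ℕ) : ℕ → ℕ := fun b => if b = i then a else b

lemma good_step {i : ℕ} {p : Ultrafilter W} (hp : Good i p) :
    ∃ p', Good (i + 1) p' ∧ Beg i ∈ p' ∧
      ∀ a < i, p * p'.map (FreeMonoid.map (ret i a)) = p := by
  obtain ⟨hpA, hpp, hmin⟩ := hp
  have hpA' : p ∈ Al (i + 1) := Al_mono (Nat.le_succ i) hpA
  let S : Set (Set (Ultrafilter W)) :=
    {N | IsClosed N ∧ N.Nonempty ∧ N ⊆ (· * p) '' Al (i + 1) ∧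
      ∀ u ∈ Al (i + 1), ∀ v ∈ N, u * v ∈ N}
  have key : ∀ v ∈ Al (i + 1), v ∈ (· * p) '' Al (i + 1) →
      (· * v) '' Al (i + 1) ∈ S := by
    intro v hv hvp
    refine ⟨((Al_closed _).isCompact.image (Ultrafilter.continuous_mul_left v)).isClosed,
      ⟨_, v, hv, rfl⟩, ?_, ?_⟩
    · rintro _ ⟨u, hu, rfl⟩
      obtain ⟨w, hw, rfl⟩ := hvp
      exact ⟨u * w, Al_mul hu hw, mul_assoc _ _ _⟩
    · rintro u hu _ ⟨v', hv', rfl⟩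
      exact ⟨u * v', Al_mul hu hv', mul_assoc _ _ _⟩
  have hS0 : (· * p) '' Al (i + 1) ∈ S := key p hpA' ⟨p, hpA', hpp⟩
  obtain ⟨N, hNle, hN⟩ : ∃ N, N ⊆ (· * p) '' Al (i + 1) ∧ Minimal (· ∈ S) N := by
    refine zorn_superset_nonempty S (fun c hcs hc hne => ?_) _ hS0
    refine ⟨⋂₀ c, ⟨isClosed_sInter fun t ht => (hcs ht).1, ?_, ?_, ?_⟩, fun s hs =>
      Set.sInter_subset_of_mem hs⟩
    · have := @IsCompact.nonempty_iInter_of_directed_nonempty_isCompact_isClosed _ _ _ hne.coe_sort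
        ((↑) : c → Set (Ultrafilter W))
        (DirectedOn.directed_val (IsChain.directedOn hc.symm))
        (fun i => (hcs i.prop).2.1) (fun i => (hcs i.prop).1.isCompact) (fun i => (hcs i.prop).1)
      rwa [Set.sInter_eq_iInter]
    · obtain ⟨t, ht⟩ := hne
      exact (Set.sInter_subset_of_mem ht).trans (hcs ht).2.2.1
    · intro u hu v hv
      rw [Set.mem_sInter] at hv ⊢
      exact fun t ht => (hcs ht).2.2.2 u hu v (hv t ht)
  obtain ⟨N_closed, ⟨x, hx⟩, N_sub, N_mul⟩ := hN.prop
  have hNA : N ⊆ Al (i + 1) := by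
    intro v hv
    obtain ⟨u, hu, rfl⟩ := N_sub hv
    exact Al_mul hu hpA'
  have hpure : (pure (FreeMonoid.of i) : Ultrafilter W) ∈ Al (i + 1) := by
    change LT (i + 1) ∈ (pure (FreeMonoid.of i) : Ultrafilter W)
    rw [Ultrafilter.mem_pure]
    intro a ha
    simp at ha
    omega
  obtain ⟨p', ⟨hp'N, hp'B⟩, hp'⟩ := exists_idempotent_in_compact_subsemigroup
    (Ultrafilter.continuous_mul_left (M := W)) (N ∩ {U | Beg i ∈ U})
    ⟨pure (FreeMonoid.of i) * x, N_mul _ hpure x hx, by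
      change Beg i ∈ pure (FreeMonoid.of i) * x
      apply beg_mul
      rw [Ultrafilter.mem_pure]
      exact ⟨[], rfl⟩⟩
    (N_closed.inter (ultrafilter_isClosed_basic _)).isCompact
    (fun u hu v hv => ⟨N_mul u (hNA hu.1) v hv.1, beg_mul hu.2⟩)
  have hp'A := hNA hp'N
  refine ⟨p', ⟨hp'A, hp', fun u hu => ?_⟩, hp'B, fun a ha => ?_⟩
  · have h1 : u * p' ∈ N := N_mul u hu p' hp'N
    have h2 := key (u * p') (hNA h1) (N_sub h1)
    have h3 : (· * (u * p')) '' Al (i + 1) ⊆ N := by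
      rintro _ ⟨w, hw, rfl⟩
      exact N_mul w hw _ h1
    have h4 := hN.le_of_le h2 h3 hp'N
    obtain ⟨v, hv, h⟩ := h4
    exact ⟨v, hv, h⟩
  · have hpp' : p' * p = p' := by
      obtain ⟨r, _, hr⟩ := N_sub hp'N
      change r * p = p' at hr
      rw [← hr, mul_assoc, hpp]
    set e := p'.map (FreeMonoid.map (ret i a)) with he
    have heA : e ∈ Al i := map_Al (fun b hb => by unfold ret; split_ifs <;> omega) hp'A
    have hee : e * e = e := by rw [he, ← map_mul_uf, hp']
    have hTp : p.map (FreeMonoid.map (ret i a)) = p := by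
      rw [map_congr_Al (g := id) (fun b hb => by unfold ret; split_ifs <;> simp; omega) hpA,
        FreeMonoid.map_id]
      exact Ultrafilter.map_id _
    have hep : e * p = e := by
      conv_lhs => rw [← hTp, he, ← map_mul_uf, hpp']
    obtain ⟨v, _, hv⟩ := hmin e heA
    rw [hep] at hv
    rw [← hv, mul_assoc, hee]

/-- The chain of idempotents. -/
lemma exists_chain : ∃ p : ℕ → Ultrafilter W, (∀ i, p (i + 1) ∈ Al (i + 1)) ∧
    (∀ i, Beg i ∈ p (i + 1)) ∧ p 0 = pure 1 ∧
    ∀ i, ∀ a < i, p i * (p (i + 1)).map (FreeMonoid.map (ret i a)) = p i := by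
  choose F hF using fun (i : ℕ) (p : {p : Ultrafilter W // Good i p}) => good_step p.2
  let q : (i : ℕ) → {p : Ultrafilter W // Good i p} := fun i =>
    Nat.rec ⟨pure 1, good_zero⟩ (fun i p => ⟨F i p, (hF i p).1⟩) i
  refine ⟨fun i => (q i).1, fun i => (q (i+1)).2.1, fun i => (hF i (q i)).2.1, rfl, fun i a ha => ?_⟩
  exact (hF i (q i)).2.2 a ha

/-- initial products -/
def pr {M : Type*} [Monoid M] (x : ℕ → M) : ℕ → M
  | 0 => 1
  | n + 1 => pr x n * x n

lemma pr_congr {M : Type*} [Monoid M] {x y : ℕ → M} {n : ℕ} (h : ∀ i < n, x i = y i) :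
    pr x n = pr y n := by
  induction n with
  | zero => rfl
  | succ n ih =>
    simp only [pr]
    rw [ih fun i hi => h i (by omega), h n (by omega)]

lemma pr_add {M : Type*} [Monoid M] (x : ℕ → M) (a k : ℕ) :
    pr x (a + k) = pr x a * pr (fun j => x (a + j)) k := by
  induction k with
  | zero => simp [pr]
  | succ k ih => rw [← Nat.add_assoc]; simp only [pr]; rw [ih, mul_assoc]

/-- products of ultrafilters -/
noncomputable def PP (p : ℕ → Ultrafilter W) : ℕ → Ultrafilter W
  | 0 => pure 1
  | n + 1 => PP p n * p (n + 1)

lemma select (p : ℕ → Ultrafilter W) (B : ℕ → Set W) (hB : ∀ i, B i ∈ p (i + 1))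
    (Q : ℕ → W → Prop) (k : ℕ) : ∀ n, (∀ j ≤ k, ∀ᶠ w in (PP p (n + j) : Filter W), Q (n + j) w) →
    ∀ᶠ w in (PP p n : Filter W), ∃ x u : ℕ → W, u n = w ∧ ∀ i, n ≤ i →
      (i ≤ n + k → Q i (u i)) ∧ (i < n + k → x i ∈ B i ∧ u (i + 1) = u i * x i) := by
  induction k with
  | zero =>
    intro n h
    filter_upwards [h 0 le_rfl] with w hw
    refine ⟨fun _ => 1, fun _ => w, rfl, fun i hi => ⟨fun h => ?_, fun h => by omega⟩⟩
    obtain rfl : i = n := by omega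
    exact hw
  | succ k ih =>
    intro n h
    have h1 := ih (n + 1) (fun j hj => by
      have := h (j + 1) (by omega)
      rwa [show n + 1 + j = n + (j + 1) by omega])
    change ∀ᶠ w in ((PP p n * p (n + 1) : Ultrafilter W) : Filter W), _ at h1
    rw [Ultrafilter.eventually_mul] at h1
    filter_upwards [h1, h 0 (by omega)] with w hw hQ
    obtain ⟨a, ⟨x, u, hu, hxu⟩, haB⟩ :=
      (hw.and (show ∀ᶠ a in (p (n + 1) : Filter W), a ∈ B n from hB n)).exists
    refine ⟨fun i => if i = n then a else x i, fun i => if i = n then w else u i, by simp, ?_⟩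
    intro i hi
    by_cases hin : i = n
    · subst hin
      refine ⟨fun _ => by simpa using hQ, fun _ => ?_⟩
      simp [haB, hu]
    · have h3 := hxu i (by omega)
      have h4 : i + 1 ≠ n := by omega
      simp only [hin, h4, if_false]
      exact ⟨fun h => h3.1 (by omega), fun h => h3.2 (by omega)⟩

lemma select' (p : ℕ → Ultrafilter W) (B : ℕ → Set W) (hB : ∀ i, B i ∈ p (i + 1))
    (Q : ℕ → W → Prop) (N : ℕ) (h : ∀ j ≤ N, ∀ᶠ w in (PP p j : Filter W), Q j w) :
    ∃ x : ℕ → W, (∀ i < N, x i ∈ B i) ∧ ∀ j ≤ N, Q j (pr x j) := by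
  have h1 := select p B hB Q N 0 (by simpa using h)
  change ∀ᶠ w in ((pure 1 : Ultrafilter W) : Filter W), _ at h1
  rw [Ultrafilter.coe_pure, Filter.eventually_pure] at h1
  obtain ⟨x, u, hu, hxu⟩ := h1
  have key : ∀ i ≤ N, u i = pr x i := by
    intro i
    induction i with
    | zero => intro _; exact hu
    | succ i ih =>
      intro hi
      rw [((hxu i (by omega)).2 (by omega)).2, ih (by omega)]
      rfl
  refine ⟨x, fun i hi => ((hxu i (by omega)).2 (by omega)).1, fun j hj => ?_⟩
  rw [← key j hj]
  exact (hxu j (by omega)).1 (by omega)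

lemma LT_mul {i : ℕ} {v w : W} (hv : v ∈ LT i) (hw : w ∈ LT i) : v * w ∈ LT i := by
  intro x hx
  rw [FreeMonoid.toList_mul, List.mem_append] at hx
  rcases hx with hx | hx
  · exact hv x hx
  · exact hw x hx

lemma LT_mono {i j : ℕ} (h : i ≤ j) : LT i ⊆ LT j := fun _ hw a ha => (hw a ha).trans_le h

lemma pr_LT {x : ℕ → W} {n : ℕ} (h : ∀ i < n, x i ∈ LT (i + 1)) : pr x n ∈ LT n := by
  induction n with
  | zero => intro a ha; simp [pr] at ha
  | succ n ih =>
    exact LT_mul (LT_mono (Nat.le_succ n) (ih fun i hi => h i (by omega))) (h n (by omega))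

lemma fusion {κ : Type} [Finite κ] (ψ : W → κ) (s : ℕ) : ∃ ψ' : W → κ, ∀ N, ∃ x : ℕ → W,
    (∀ i < N, x i ∈ LT (i + 1) ∧ x i ∈ Beg i) ∧
    ∀ n ≤ N, ∀ t : ℕ → ℕ, ∀ q < n, (∀ i < n, t i ≤ s) → t q = s → (∀ b ≤ s, ∃ j ≤ q, t j = b) →
      ψ (FreeMonoid.map t (pr x n)) = ψ' (FreeMonoid.ofList ((List.range q).map t)) := by
  obtain ⟨p, hpA, hpB, hp0, hpr⟩ := exists_chain
  have hex : ∀ v : W, ∃ k : κ, ∀ᶠ w in (PP p (v.length + 1) : Filter W),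
      ψ (FreeMonoid.map (fun i => v.toList.getD i s) w) = k := by
    intro v
    obtain ⟨k, hk⟩ := Ultrafilter.eq_pure_of_finite
      ((PP p (v.length + 1)).map fun w => ψ (FreeMonoid.map (fun i => v.toList.getD i s) w))
    refine ⟨k, ?_⟩
    have : ({k} : Set κ) ∈ (PP p (v.length + 1)).map
        fun w => ψ (FreeMonoid.map (fun i => v.toList.getD i s) w) := by
      rw [hk]; exact Set.mem_singleton k
    exact this
  choose ψ' hψ' using hex
  have hPA : ∀ n, PP p n ∈ Al n := by
    intro n
    induction n with
    | zero => exact good_zero.1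
    | succ n ih => exact Al_mul (Al_mono (Nat.le_succ n) ih) (hpA n)
  refine ⟨ψ', fun N => ?_⟩
  let ext : (n : ℕ) → (Fin n → Fin (s + 1)) → ℕ → ℕ := fun n t i =>
    if h : i < n then (t ⟨i, h⟩ : ℕ) else 0
  let Q : ℕ → W → Prop := fun n w => ∀ t' : Fin n → Fin (s + 1), ∀ q : Fin n,
    ext n t' q = s → (∀ b ≤ s, ∃ j ≤ (q : ℕ), ext n t' j = b) →
    ψ (FreeMonoid.map (ext n t') w) = ψ' (FreeMonoid.ofList ((List.range q).map (ext n t')))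
  obtain ⟨x, hxB, hxQ⟩ := select' p (fun i => LT (i + 1) ∩ Beg i)
    (fun i => Filter.inter_mem (f := (p (i + 1) : Filter W)) (hpA i) (hpB i)) Q N (by
      intro n hn
      simp only [Q]
      rw [Filter.eventually_all]
      intro t'
      rw [Filter.eventually_all]
      intro q
      by_cases h1 : ext n t' q = s ∧ (∀ b ≤ s, ∃ j ≤ (q : ℕ), ext n t' j = b)
      swap
      · exact Eventually.of_forall fun w ha hb => absurd ⟨ha, hb⟩ h1
      obtain ⟨h1, h2⟩ := h1
      generalize ht : ext n t' = t at *
      have hle : ∀ i, t i ≤ s := by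
        intro i
        rw [← ht]
        simp only [ext]
        split_ifs
        · exact Nat.lt_succ_iff.mp (Fin.is_lt _)
        · omega
      have collapse : ∀ k, (PP p (q + 1 + k)).map (FreeMonoid.map t)
          = (PP p (q + 1)).map (FreeMonoid.map t) := by
        intro k
        induction k with
        | zero => rfl
        | succ k ih =>
          rw [← ih]
          obtain ⟨r, hr⟩ : ∃ r, (q : ℕ) + 1 + k = r + 1 := ⟨q + k, by omega⟩
          rw [← Nat.add_assoc, hr]
          obtain ⟨a, ha, hta⟩ := h2 (t (r + 1)) (hle _)
          have e1 : (p (r + 2)).map (FreeMonoid.map t)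
              = ((p (r + 2)).map (FreeMonoid.map (ret (r + 1) a))).map (FreeMonoid.map t) := by
            rw [map_map_uf]
            congr 2
            refine congrArg FreeMonoid.map (funext fun b => ?_)
            simp only [Function.comp, ret]
            split_ifs with hb
            · rw [hb, hta]
            · rfl
          change (PP p r * p (r + 1) * p (r + 2)).map _ = (PP p r * p (r + 1)).map _
          rw [mul_assoc, map_mul_uf, map_mul_uf (FreeMonoid.map t) (p (r + 1)), e1, ← map_mul_uf,
            hpr (r + 1) a (by omega), ← map_mul_uf]
      have hlen : (FreeMonoid.ofList ((List.range q).map t)).length = q := by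
        simp [FreeMonoid.length]
      have h3 := hψ' (FreeMonoid.ofList ((List.range q).map t))
      rw [hlen] at h3
      have h4 : ∀ᶠ w in (PP p (q + 1) : Filter W), ψ (FreeMonoid.map t w)
          = ψ' (FreeMonoid.ofList ((List.range q).map t)) := by
        filter_upwards [h3, show ∀ᶠ w in (PP p (q + 1) : Filter W), w ∈ LT (q + 1) from hPA (q + 1)]
          with w hw hwL
        rw [← hw]
        congr 1
        apply map_congr_LT _ hwL
        intro a ha
        rw [FreeMonoid.toList_ofList, List.getD_eq_getElem?_getD]
        by_cases haq : a < q
        · simp [haq]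
        · have : a = q := by omega
          subst this
          simp [h1]
      have h5 : ∀ᶠ v in ((PP p (q + 1)).map (FreeMonoid.map t) : Filter W), ψ v
          = ψ' (FreeMonoid.ofList ((List.range q).map t)) := h4
      obtain ⟨k, hk⟩ : ∃ k, n = q + 1 + k := ⟨n - (q + 1), by have := q.2; omega⟩
      have h6 : ∀ᶠ v in ((PP p n).map (FreeMonoid.map t) : Filter W), ψ v
          = ψ' (FreeMonoid.ofList ((List.range q).map t)) := by
        have := collapse k
        rw [← hk] at this
        rw [this]
        exact h5
      have h7 : ∀ᶠ w in (PP p n : Filter W), ψ (FreeMonoid.map t w)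
          = ψ' (FreeMonoid.ofList ((List.range q).map t)) := h6
      filter_upwards [h7] with w hw _ _
      exact hw)
  refine ⟨x, hxB, fun n hn t q hq hts htq hsur => ?_⟩
  have hL : pr x n ∈ LT n := pr_LT fun i hi => (hxB i (by omega)).1
  let t' : Fin n → Fin (s + 1) := fun i => ⟨t i, Nat.lt_succ_of_le (hts i i.2)⟩
  have he : ∀ i < n, ext n t' i = t i := fun i hi => by simp [ext, t', hi]
  have h := hxQ n hn t' ⟨q, hq⟩ (by rw [he _ hq, htq]) (fun b hb => by
    obtain ⟨j, hj, hjb⟩ := hsur b hb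
    exact ⟨j, hj, by rw [he j (by omega), hjb]⟩)
  rw [map_congr_LT he hL] at h
  rw [h]
  congr 2
  apply List.map_congr_left
  intro a ha
  rw [List.mem_range] at ha
  exact he a (by simp at ha; omega)

/-- `τ` restricted to `{0,…,n-1}` is a rigid surjection onto `{0,…,s-1}`. -/
def Rig (s n : ℕ) (τ : ℕ → ℕ) : Prop :=
  (∀ i < n, τ i < s) ∧ (∀ i < n, ∀ b < τ i, ∃ j < i, τ j = b) ∧ ∀ b < s, ∃ j < n, τ j = b

lemma pr_eq_range (y : ℕ → W) (L : ℕ) {n : ℕ} (hn : n ≤ L) :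
    pr y n = FreeMonoid.ofList ((List.range (pr y n).length).map
      fun i => (pr y L).toList.getD i 0) := by
  obtain ⟨k, rfl⟩ : ∃ k, L = n + k := ⟨L - n, by omega⟩
  rw [pr_add]
  generalize pr y n = a
  generalize pr (fun j => y (n + j)) k = b
  apply FreeMonoid.toList.injective
  rw [FreeMonoid.toList_ofList, FreeMonoid.toList_mul]
  apply List.ext_getElem
  · simp [FreeMonoid.length]
  · intro i h1 h2
    simp [List.getElem?_append, h1]

lemma dual_ramsey {κ : Type} [Finite κ] (s : ℕ) : ∀ (ψ : W → κ) (L : ℕ), ∃ y : ℕ → W,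
    (∀ i < L, y i ∈ LT (i + 1) ∧ y i ∈ Beg i) ∧ ∃ k, ∀ n ≤ L, ∀ τ, Rig s n τ →
      ψ (FreeMonoid.map τ (pr y n)) = k := by
  induction s with
  | zero =>
    intro ψ L
    refine ⟨fun i => FreeMonoid.of i, fun i _ => ⟨fun a ha => ?_, [], rfl⟩, ψ 1, fun n _ τ hτ => ?_⟩
    · simp at ha; omega
    · have : n = 0 := by
        by_contra h
        have := hτ.1 0 (by omega)
        omega
      subst this
      simp [pr]
  | succ s ih =>
    intro ψ L
    obtain ⟨ψ', hψ'⟩ := fusion ψ s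
    obtain ⟨y', hy', k, hk⟩ := ih ψ' L
    let c : ℕ → ℕ := fun n => (pr y' n).length
    have c_succ : ∀ n, c (n + 1) = c n + (y' n).length := fun n => FreeMonoid.length_mul _ _
    have c_mono : Monotone c := monotone_nat_of_le_succ fun n => by rw [c_succ]; omega
    have c_lt : ∀ i < L, c i < c (i + 1) := by
      intro i hi
      obtain ⟨v, hv⟩ := (hy' i hi).2
      rw [c_succ, FreeMonoid.length, hv]
      simp
    let Y : ℕ → ℕ := fun i => (pr y' L).toList.getD i 0
    have hY : ∀ n ≤ L, pr y' n = FreeMonoid.ofList ((List.range (c n)).map Y) := fun n hn =>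
      pr_eq_range y' L hn
    have hLT : ∀ n ≤ L, pr y' n ∈ LT n := fun n hn => pr_LT fun i hi => (hy' i (by omega)).1
    have hYlt : ∀ n ≤ L, ∀ j < c n, Y j < n := by
      intro n hn j hj
      apply hLT n hn
      rw [hY n hn, FreeMonoid.toList_ofList, List.mem_map]
      exact ⟨j, List.mem_range.mpr hj, rfl⟩
    have hYc : ∀ i < L, Y (c i) = i := by
      intro i hi
      have h1 := hY (i + 1) hi
      obtain ⟨v, hv⟩ := (hy' i hi).2
      have h2 : (pr y' (i + 1)).toList[c i]? = some i := by
        change (pr y' i * y' i).toList[c i]? = some i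
        rw [FreeMonoid.toList_mul, hv]
        rw [List.getElem?_append_right (by simp [c, FreeMonoid.length])]
        simp [c, FreeMonoid.length]
      rw [h1, FreeMonoid.toList_ofList, List.getElem?_map,
        List.getElem?_range (c_lt i hi)] at h2
      simpa using h2
    obtain ⟨x, hx, hxψ⟩ := hψ' (c L)
    let y : ℕ → W := fun i => FreeMonoid.map Y (pr (fun j => x (c i + j)) (y' i).length)
    have hpy : ∀ n, pr y n = FreeMonoid.map Y (pr x (c n)) := by
      intro n
      induction n with
      | zero => simp [pr, c]
      | succ n ihn =>
        rw [c_succ, pr_add x, map_mul, ← ihn]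
        rfl
    refine ⟨y, fun i hi => ⟨?_, ?_⟩, k, ?_⟩
    · intro a ha
      have hmem : a ∈ FreeMonoid.toList (pr y (i + 1)) := by
        change a ∈ FreeMonoid.toList (pr y i * y i)
        rw [FreeMonoid.toList_mul, List.mem_append]
        exact Or.inr ha
      rw [hpy, FreeMonoid.toList_map, List.mem_map] at hmem
      obtain ⟨b, hb, rfl⟩ := hmem
      have hcL : c (i + 1) ≤ c L := c_mono hi
      exact hYlt (i + 1) hi b ((pr_LT fun j hj => (hx j (by omega)).1) b hb)
    · have h1 := c_lt i hi
      rw [c_succ] at h1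
      have hcL : c (i + 1) ≤ c L := c_mono hi
      rw [c_succ] at hcL
      obtain ⟨l, hl⟩ : ∃ l, (y' i).length = 1 + l := ⟨(y' i).length - 1, by omega⟩
      obtain ⟨v, hv⟩ := (hx (c i) (by omega)).2
      change FreeMonoid.map Y (pr (fun j => x (c i + j)) (y' i).length) ∈ Beg i
      rw [hl, pr_add]
      simp only [pr, one_mul, Nat.add_zero]
      rw [Beg, Set.mem_ofPred_eq, FreeMonoid.toList_map, FreeMonoid.toList_mul, hv]
      rw [List.cons_append, List.map_cons, hYc i hi]
      exact ⟨_, rfl⟩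
    · intro n hn τ hτ
      obtain ⟨hτ1, hτ2, hτ3⟩ := hτ
      have hex : ∃ j, τ j = s := by
        obtain ⟨j, _, hj⟩ := hτ3 s (by omega)
        exact ⟨j, hj⟩
      classical
      have hqs : τ (Nat.find hex) = s := Nat.find_spec hex
      have hqm : ∀ j < Nat.find hex, τ j ≠ s := fun j hj => Nat.find_min hex hj
      have hqn : Nat.find hex < n := by
        obtain ⟨j, hjn, hj⟩ := hτ3 s (by omega)
        exact (Nat.find_min' hex hj).trans_lt hjn
      generalize Nat.find hex = q at *
      have hrig : Rig s q τ := by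
        refine ⟨fun i hi => ?_, fun i hi => hτ2 i (by omega), fun b hb => ?_⟩
        · have := hτ1 i (by omega)
          have := hqm i hi
          omega
        · exact hτ2 q hqn b (by omega)
      have hqL : q < L := by omega
      have h1 := hk q hqL.le τ hrig
      rw [← h1, hpy, FreeMonoid.map_map]
      have hcq : c q < c n := (c_lt q hqL).trans_le (c_mono hqn)
      rw [hxψ (c n) (c_mono hn) (τ ∘ Y) (c q) hcq]
      · rw [hY q hqL.le, ← FreeMonoid.ofList_map, List.map_map]
      · intro i hi
        have := hτ1 (Y i) (hYlt n hn i hi)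
        simp only [Function.comp]
        omega
      · simp only [Function.comp]
        rw [hYc q hqL, hqs]
      · intro b hb
        rcases hb.lt_or_eq with hb | rfl
        · obtain ⟨j, hj, hjb⟩ := hrig.2.2 b hb
          exact ⟨c j, c_mono hj.le, by simp only [Function.comp]; rw [hYc j (by omega), hjb]⟩
        · exact ⟨c q, le_rfl, by simp only [Function.comp]; rw [hYc q hqL, hqs]⟩

/-- Finite dual Ramsey theorem. -/
lemma dual_ramsey_finite (κ : Type) [Finite κ] (s L : ℕ) : ∃ N : ℕ, ∀ ψ : W → κ,
    ∃ σ : W, σ.length ≤ N ∧ σ ∈ LT L ∧ (∀ b < L, b ∈ σ.toList) ∧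
      ∃ k, ∀ τ, Rig s L τ → ψ (FreeMonoid.map τ σ) = k := by
  by_contra! hcon
  choose ψ hψ using hcon
  have hex : ∀ w : W, ∃ k : κ, ∀ᶠ n in (hyperfilter ℕ : Filter ℕ), ψ n w = k := by
    intro w
    obtain ⟨k, hk⟩ := Ultrafilter.eq_pure_of_finite ((hyperfilter ℕ).map fun n => ψ n w)
    refine ⟨k, ?_⟩
    have : ({k} : Set κ) ∈ (hyperfilter ℕ).map fun n => ψ n w := by
      rw [hk]; exact Set.mem_singleton k
    exact this
  choose Ψ hΨ using hex
  obtain ⟨y, hy, k, hk⟩ := dual_ramsey s Ψ L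
  have hL : pr y L ∈ LT L := pr_LT fun i hi => (hy i hi).1
  have hmem : ∀ n, n ≤ L → ∀ b < n, b ∈ (pr y n).toList := by
    intro n
    induction n with
    | zero => intro _ b hb; omega
    | succ n ih =>
      intro hn b hb
      change b ∈ (pr y n * y n).toList
      rw [FreeMonoid.toList_mul, List.mem_append]
      by_cases hbn : b < n
      · exact Or.inl (ih (by omega) b hbn)
      · obtain ⟨v, hv⟩ := (hy n hn).2
        right
        rw [hv, show b = n by omega]
        exact List.mem_cons_self
  have h1 : ∀ᶠ n in (hyperfilter ℕ : Filter ℕ), ∀ t : Fin L → Fin s,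
      ψ n (FreeMonoid.map (fun i => if h : i < L then (t ⟨i, h⟩ : ℕ) else 0) (pr y L)) =
      Ψ (FreeMonoid.map (fun i => if h : i < L then (t ⟨i, h⟩ : ℕ) else 0) (pr y L)) := by
    rw [Filter.eventually_all]
    exact fun t => hΨ _
  have h2 : ∀ᶠ n in (hyperfilter ℕ : Filter ℕ), (pr y L).length ≤ n :=
    (Nat.hyperfilter_le_atTop) (eventually_ge_atTop _)
  obtain ⟨n, hn1, hn2⟩ := (h1.and h2).exists
  obtain ⟨τ, hτ, hne⟩ := hψ n (pr y L) hn2 hL (hmem L le_rfl) k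
  apply hne
  have h3 := hn1 fun i => ⟨τ i, hτ.1 i i.2⟩
  rw [map_congr_LT (g := τ) (fun a ha => by simp [ha]) hL] at h3
  rw [h3]
  exact hk L le_rfl τ hτ

section net

variable {E : Type*} [NormedAddCommGroup E] [NormedSpace ℂ E]

/-- a sequence such that every vector of norm at most `‖D a‖` is close to an earlier term. -/
def GoodSeq (ε : ℝ) (s : ℕ) (D : ℕ → E) : Prop :=
  0 < s ∧ D 0 = 0 ∧ ∀ a < s, a ≠ 0 → ∀ v, ‖v‖ ≤ ‖D a‖ → ∃ b < a, ‖v - D b‖ ≤ ε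

lemma append_net {ε r : ℝ} {s : ℕ} {D : ℕ → E} (hD : GoodSeq ε s D)
    (hr : ∀ v, ‖v‖ ≤ r → ∃ b < s, ‖v - D b‖ ≤ ε) (F : Set E) (hF : F.Finite) :
    (∀ f ∈ F, ‖f‖ ≤ r) →
    ∃ (s' : ℕ) (D' : ℕ → E), s ≤ s' ∧ (∀ a < s, D' a = D a) ∧ GoodSeq ε s' D' ∧
      (∀ f ∈ F, ∃ a < s', D' a = f) ∧ ∀ a < s', a < s ∨ D' a ∈ F := by
  induction F, hF using Set.Finite.induction_on with
  | empty =>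
    intro _
    exact ⟨s, D, le_rfl, fun _ _ => rfl, hD, fun f hf => absurd hf (Set.notMem_empty f),
      fun a ha => Or.inl ha⟩
  | @insert f F _ _ ih =>
    intro hF
    obtain ⟨s', D', hs, hDD, ⟨h1, h2, h3⟩, h4, h5⟩ := ih fun g hg => hF g (Set.mem_insert_of_mem f hg)
    have hlt : ∀ a < s', (fun a => if a = s' then f else D' a) a = D' a := fun a ha => by
      simp [ha.ne]
    refine ⟨s' + 1, fun a => if a = s' then f else D' a, by omega, fun a ha => ?_,
      ⟨by omega, ?_, ?_⟩, ?_, ?_⟩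
    · rw [hlt a (by omega), hDD a ha]
    · rw [hlt 0 h1, h2]
    · intro a ha ha0 v hv
      by_cases has : a = s'
      · subst has
        simp only [if_true] at hv
        obtain ⟨b, hb, hvb⟩ := hr v (hv.trans (hF f (Set.mem_insert f F)))
        refine ⟨b, by omega, ?_⟩
        rw [hlt b (by omega), hDD b hb]
        exact hvb
      · have ha' : a < s' := by omega
        rw [hlt a ha'] at hv
        obtain ⟨b, hb, hvb⟩ := h3 a ha' ha0 v hv
        exact ⟨b, hb, by rw [hlt b (by omega)]; exact hvb⟩
    · intro g hg
      rcases Set.mem_insert_iff.mp hg with rfl | hg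
      · exact ⟨s', by omega, by simp⟩
      · obtain ⟨a, ha, hga⟩ := h4 g hg
        exact ⟨a, by omega, by rw [hlt a ha, hga]⟩
    · intro a ha
      by_cases has : a = s'
      · right; simp [has]
      · have ha' : a < s' := by omega
        rw [hlt a ha']
        rcases h5 a ha' with h | h
        · exact Or.inl h
        · exact Or.inr (Set.mem_insert_of_mem f h)

lemma exists_net [ProperSpace E] {ε : ℝ} (hε : 0 < ε) (F : Set E) (hF : F.Finite)
    (hF1 : ∀ f ∈ F, ‖f‖ ≤ 1) :
    ∃ (s : ℕ) (D : ℕ → E), GoodSeq ε s D ∧ (∀ a < s, ‖D a‖ ≤ 1) ∧ ∀ f ∈ F, ∃ a < s, D a = f := by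
  obtain ⟨N, hN⟩ := exists_nat_one_div_lt (half_pos hε)
  set η : ℝ := 1 / ((N : ℝ) + 1) with hη
  have hη0 : 0 < η := by positivity
  have widen : ∀ (i s : ℕ) (D : ℕ → E), (∀ v, ‖v‖ ≤ i * η → ∃ b < s, ‖v - D b‖ ≤ η) →
      ∀ v, ‖v‖ ≤ ((i + 1 : ℕ) : ℝ) * η → ∃ b < s, ‖v - D b‖ ≤ ε := by
    intro i s D h v hv
    push_cast at hv
    have hi : (0 : ℝ) < (i : ℝ) + 1 := by positivity
    have hle : ‖v‖ / ((i : ℝ) + 1) ≤ η := by rw [div_le_iff₀ hi]; linarith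
    set v' : E := ((i / (i + 1) : ℝ) : ℂ) • v with hv'
    have hn1 : ‖v'‖ ≤ i * η := by
      rw [hv', norm_smul, Complex.norm_real, Real.norm_of_nonneg (by positivity)]
      calc (i / (i + 1) : ℝ) * ‖v‖ = i * (‖v‖ / ((i : ℝ) + 1)) := by ring
        _ ≤ i * η := by gcongr
    have hn2 : ‖v - v'‖ ≤ η := by
      have : v - v' = ((1 / (i + 1) : ℝ) : ℂ) • v := by
        rw [hv', show ((1 / (i + 1) : ℝ) : ℂ) = 1 - ((i / (i + 1) : ℝ) : ℂ) by
          rw [← Complex.ofReal_one, ← Complex.ofReal_sub]; congr 1; field_simp; ring]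
        rw [sub_smul, one_smul]
      rw [this, norm_smul, Complex.norm_real, Real.norm_of_nonneg (by positivity)]
      calc (1 / (i + 1) : ℝ) * ‖v‖ = ‖v‖ / ((i : ℝ) + 1) := by ring
        _ ≤ η := hle
    obtain ⟨b, hb, hvb⟩ := h v' hn1
    refine ⟨b, hb, ?_⟩
    calc ‖v - D b‖ = ‖(v - v') + (v' - D b)‖ := by congr 1; abel
      _ ≤ ‖v - v'‖ + ‖v' - D b‖ := norm_add_le _ _
      _ ≤ ε := by linarith
  have main : ∀ i : ℕ, ∃ (s : ℕ) (D : ℕ → E), GoodSeq ε s D ∧ (∀ a < s, ‖D a‖ ≤ i * η) ∧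
      ∀ v, ‖v‖ ≤ i * η → ∃ b < s, ‖v - D b‖ ≤ η := by
    intro i
    induction i with
    | zero =>
      refine ⟨1, fun _ => 0, ⟨by omega, rfl, fun a ha ha0 => by omega⟩, by simp, ?_⟩
      intro v hv
      refine ⟨0, by omega, ?_⟩
      simp at hv
      simp [hv, hη0.le]
    | succ i ih =>
      obtain ⟨s, D, h1, h2, h3⟩ := ih
      obtain ⟨t, htsub, htfin, ht⟩ := Metric.finite_approx_of_totallyBounded
        (isCompact_closedBall (0 : E) (((i + 1 : ℕ) : ℝ) * η)).totallyBounded η hη0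
      obtain ⟨s', D', hs, hDD, h1', h4, h5⟩ := append_net h1 (widen i s D h3) t htfin
        (fun f hf => by simpa using htsub hf)
      refine ⟨s', D', h1', fun a ha => ?_, fun v hv => ?_⟩
      · rcases h5 a ha with h | h
        · rw [hDD a h]
          refine (h2 a h).trans ?_
          push_cast
          nlinarith
        · simpa using htsub h
      · have := ht (show v ∈ Metric.closedBall (0 : E) (((i + 1 : ℕ) : ℝ) * η) by simpa using hv)
        simp only [Set.mem_iUnion, Metric.mem_ball, dist_eq_norm] at this
        obtain ⟨f, hf, hvf⟩ := this
        obtain ⟨b, hb, rfl⟩ := h4 f hf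
        exact ⟨b, hb, hvf.le⟩
  obtain ⟨s, D, h1, h2, h3⟩ := main N
  have hone : ((N + 1 : ℕ) : ℝ) * η = 1 := by
    rw [hη]; push_cast; field_simp
  obtain ⟨s', D', hs, hDD, h1', h4, h5⟩ := append_net h1 (widen N s D h3) F hF
    (fun f hf => by rw [hone]; exact hF1 f hf)
  refine ⟨s', D', h1', fun a ha => ?_, h4⟩
  rcases h5 a ha with h | h
  · rw [hDD a h]
    refine (h2 a h).trans ?_
    rw [← hone]
    push_cast
    nlinarith
  · exact hF1 _ h

end net

/-- operator with given rows -/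
noncomputable def R {m n : ℕ} (r : Fin n → (LinfC m →L[ℂ] ℂ)) : LinfC m →L[ℂ] LinfC n :=
  (PiLp.continuousLinearEquiv ⊤ ℂ (fun _ : Fin n => ℂ)).symm.toContinuousLinearMap.comp
    (ContinuousLinearMap.pi r)

lemma R_apply {m n : ℕ} (r : Fin n → (LinfC m →L[ℂ] ℂ)) (x : LinfC m) (i : Fin n) :
    R r x i = r i x := rfl

lemma linf_le {n : ℕ} {v : LinfC n} {C : ℝ} (hC : 0 ≤ C) (h : ∀ i, ‖v i‖ ≤ C) : ‖v‖ ≤ C := by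
  rw [PiLp.norm_eq_ciSup]
  exact Real.iSup_le h hC

/-- coordinate functional -/
noncomputable def co {m : ℕ} (i : Fin m) : LinfC m →L[ℂ] ℂ := PiLp.proj ⊤ (fun _ : Fin m => ℂ) i

lemma co_apply {m : ℕ} (i : Fin m) (x : LinfC m) : co i x = x i := rfl

lemma co_norm {m : ℕ} (i : Fin m) : ‖co i‖ ≤ 1 :=
  ContinuousLinearMap.opNorm_le_bound _ zero_le_one fun x => by
    rw [one_mul, co_apply]; exact PiLp.norm_apply_le x i

lemma R_isom {m n : ℕ} {r : Fin n → (LinfC m →L[ℂ] ℂ)} (h1 : ∀ i, ‖r i‖ ≤ 1)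
    (h2 : ∀ j, ∃ i, r i = co j) (x : LinfC m) : ‖R r x‖ = ‖x‖ := by
  apply le_antisymm
  · refine linf_le (norm_nonneg x) fun i => ?_
    rw [R_apply]
    exact (ContinuousLinearMap.le_of_opNorm_le _ (h1 i) x).trans (by rw [one_mul])
  · refine linf_le (norm_nonneg _) fun j => ?_
    obtain ⟨i, hi⟩ := h2 j
    rw [← co_apply j x, ← hi, ← R_apply]
    exact PiLp.norm_apply_le _ i

lemma delta_comp {d m n : ℕ} {δ : ℝ} {γ : LinfC m →L[ℂ] LinfC n} (hγ : ∀ x, ‖γ x‖ = ‖x‖)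
    {η : LinfC d →L[ℂ] LinfC m} (hη : IsDeltaEmbedding δ η) : IsDeltaEmbedding δ (γ.comp η) := by
  intro x
  rw [ContinuousLinearMap.comp_apply, hγ]
  exact hη x

lemma ext_contr {d m : ℕ} {δ : ℝ} (hδ : 0 ≤ δ) {η₀ η₁ : LinfC d →L[ℂ] LinfC m}
    (h₀ : IsDeltaEmbedding δ η₀) (h₁ : IsDeltaEmbedding δ η₁) :
    ∃ A : LinfC m →L[ℂ] LinfC m, ‖A‖ ≤ 1 ∧ ∀ x, A (η₀ x) = (((1 + δ)⁻¹ : ℝ) : ℂ) • η₁ x := by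
  have hpos : 0 < 1 + δ := by linarith
  have hinj : Function.Injective η₀.toLinearMap := by
    rw [← LinearMap.ker_eq_bot, LinearMap.ker_eq_bot']
    intro x hx
    have := (h₀ x).2
    rw [show η₀ x = 0 from hx, norm_zero, mul_zero] at this
    exact norm_le_zero_iff.mp this
  let e := LinearEquiv.ofInjective η₀.toLinearMap hinj
  have hex : ∀ i : Fin m, ∃ g : LinfC m →L[ℂ] ℂ, ‖g‖ ≤ 1 ∧
      ∀ x, g (η₀ x) = (((1 + δ)⁻¹ : ℝ) : ℂ) * η₁ x i := by
    intro i
    let f0 : LinearMap.range η₀.toLinearMap →ₗ[ℂ] ℂ :=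
      (((1 + δ)⁻¹ : ℝ) : ℂ) • ((co i).toLinearMap ∘ₗ η₁.toLinearMap ∘ₗ e.symm.toLinearMap)
    have hf0 : ∀ x, f0 (e x) = (((1 + δ)⁻¹ : ℝ) : ℂ) * η₁ x i := by
      intro x
      simp [f0, co_apply]
    have hb : ∀ y, ‖f0 y‖ ≤ 1 * ‖y‖ := by
      intro y
      obtain ⟨x, rfl⟩ := e.surjective y
      rw [hf0, one_mul, norm_mul, Complex.norm_real, Real.norm_of_nonneg (by positivity)]
      have e1 : ‖e x‖ = ‖η₀ x‖ := rfl
      rw [e1, inv_mul_le_iff₀ hpos]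
      exact (PiLp.norm_apply_le _ i).trans ((h₁ x).1.trans (h₀ x).2)
    obtain ⟨g, hg, hgn⟩ := exists_extension_norm_eq (LinearMap.range η₀.toLinearMap)
      (f0.mkContinuous 1 hb)
    refine ⟨g, hgn.le.trans (LinearMap.mkContinuous_norm_le _ zero_le_one _), fun x => ?_⟩
    have := hg (e x)
    rw [LinearMap.mkContinuous_apply, hf0] at this
    exact this
  choose g hg1 hg2 using hex
  refine ⟨R g, ContinuousLinearMap.opNorm_le_bound _ zero_le_one fun x =>
    linf_le (by positivity) fun i => ?_, fun x => ?_⟩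
  · rw [R_apply]
    exact ContinuousLinearMap.le_of_opNorm_le _ (hg1 i) x
  · ext i
    rw [R_apply, hg2]
    rfl

lemma R_diff {d m n : ℕ} {r r' : Fin n → (LinfC m →L[ℂ] ℂ)} {η η' : LinfC d →L[ℂ] LinfC m}
    {C : ℝ} (hC : 0 ≤ C) (h : ∀ i, ‖(r i).comp η - (r' i).comp η'‖ ≤ C) :
    ‖(R r).comp η - (R r').comp η'‖ ≤ C := by
  refine ContinuousLinearMap.opNorm_le_bound _ hC fun x => linf_le (by positivity) fun i => ?_
  exact ContinuousLinearMap.le_of_opNorm_le _ (h i) x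

/-- rows read off from a word -/
noncomputable def row {m : ℕ} (N : ℕ) (w : W) (ρ : ℕ → (LinfC m →L[ℂ] ℂ)) :
    Fin N → (LinfC m →L[ℂ] ℂ) :=
  fun i => ((FreeMonoid.toList w).map ρ).getD i 0

lemma row_map {m : ℕ} (N : ℕ) (w : W) (τ : ℕ → ℕ) (ρ : ℕ → (LinfC m →L[ℂ] ℂ)) :
    row N (FreeMonoid.map τ w) ρ = row N w (fun l => ρ (τ l)) := by
  funext i
  unfold row
  rw [FreeMonoid.toList_map, List.map_map]
  rfl

lemma row_cases (m : ℕ) (N : ℕ) (w : W) (i : Fin N) :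
    (∀ ρ : ℕ → (LinfC m →L[ℂ] ℂ), row N w ρ i = 0) ∨
      ∃ a ∈ FreeMonoid.toList w, ∀ ρ : ℕ → (LinfC m →L[ℂ] ℂ), row N w ρ i = ρ a := by
  by_cases h : (i : ℕ) < (FreeMonoid.toList w).length
  · right
    refine ⟨(FreeMonoid.toList w)[(i : ℕ)], List.getElem_mem h, fun ρ => ?_⟩
    simp [row, List.getD, h]
  · left
    intro ρ
    simp [row, List.getD, h]

lemma row_exists (m : ℕ) (N : ℕ) (w : W) (hw : w.length ≤ N) {a : ℕ}
    (ha : a ∈ FreeMonoid.toList w) :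
    ∃ i : Fin N, ∀ ρ : ℕ → (LinfC m →L[ℂ] ℂ), row N w ρ i = ρ a := by
  obtain ⟨i, hi, rfl⟩ := List.getElem_of_mem ha
  have hi' : i < N := lt_of_lt_of_le hi hw
  refine ⟨⟨i, hi'⟩, fun ρ => ?_⟩
  simp [row, List.getD, hi]

/-- interlaced sequence of functionals -/
noncomputable def rho {m : ℕ} (D : ℕ → (LinfC m →L[ℂ] ℂ)) (A B : LinfC m →L[ℂ] LinfC m) :
    ℕ → (LinfC m →L[ℂ] ℂ) :=
  fun l => if l % 2 = 0 then (D (l / 2)).comp A else (D (l / 2)).comp B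

/-- sequences of functionals to which the Ramsey argument applies -/
def GoodRho {m : ℕ} (ε : ℝ) (s : ℕ) (D ρ : ℕ → (LinfC m →L[ℂ] ℂ)) : Prop :=
  (∀ l < 2 * s, ‖ρ l‖ ≤ 1) ∧ (∀ j, ∃ l < 2 * s, ρ l = co j) ∧
    ∃ τ, Rig s (2 * s) τ ∧ ∀ l < 2 * s, ‖ρ l - D (τ l)‖ ≤ ε

lemma comp_le {m : ℕ} (f : LinfC m →L[ℂ] ℂ) {A : LinfC m →L[ℂ] LinfC m} (hA : ‖A‖ ≤ 1) :
    ‖f.comp A‖ ≤ ‖f‖ :=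
  (ContinuousLinearMap.opNorm_comp_le f A).trans (mul_le_of_le_one_right (norm_nonneg f) hA)

lemma near {m s : ℕ} {ε : ℝ} (hε : 0 < ε) {D : ℕ → (LinfC m →L[ℂ] ℂ)} (hD : GoodSeq ε s D)
    {A : LinfC m →L[ℂ] LinfC m} (hA : ‖A‖ ≤ 1) :
    ∃ t : ℕ → ℕ, t 0 = 0 ∧ (∀ a < s, a ≠ 0 → t a < a) ∧
      ∀ a < s, ‖(D a).comp A - D (t a)‖ ≤ ε := by
  have : ∀ a, ∃ b, (a < s → a ≠ 0 → b < a) ∧ (a = 0 → b = 0) ∧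
      (a < s → ‖(D a).comp A - D b‖ ≤ ε) := by
    intro a
    by_cases h0 : a = 0
    · subst h0
      refine ⟨0, fun _ h => absurd rfl h, fun _ => rfl, fun _ => ?_⟩
      rw [hD.2.1, ContinuousLinearMap.zero_comp, sub_zero, norm_zero]
      exact hε.le
    · by_cases has : a < s
      · obtain ⟨b, hb, hbv⟩ := hD.2.2 a has h0 _ (comp_le (D a) hA)
        exact ⟨b, fun _ _ => hb, fun h => absurd h h0, fun _ => hbv⟩
      · exact ⟨0, fun h => absurd h has, fun _ => rfl, fun h => absurd h has⟩
  choose t h1 h2 h3 using this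
  exact ⟨t, h2 0 rfl, h1, h3⟩

lemma id_norm (m : ℕ) : ‖ContinuousLinearMap.id ℂ (LinfC m)‖ ≤ 1 :=
  ContinuousLinearMap.norm_id_le

lemma rho_norm {m s : ℕ} {D : ℕ → (LinfC m →L[ℂ] ℂ)} (h1 : ∀ a < s, ‖D a‖ ≤ 1)
    {A B : LinfC m →L[ℂ] LinfC m} (hA : ‖A‖ ≤ 1) (hB : ‖B‖ ≤ 1) (l : ℕ) (hl : l < 2 * s) :
    ‖rho D A B l‖ ≤ 1 := by
  unfold rho
  split_ifs
  · exact (comp_le _ hA).trans (h1 _ (by omega))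
  · exact (comp_le _ hB).trans (h1 _ (by omega))

lemma good_left {m s : ℕ} {ε : ℝ} (hε : 0 < ε) {D : ℕ → (LinfC m →L[ℂ] ℂ)}
    (hD : GoodSeq ε s D) (h1 : ∀ a < s, ‖D a‖ ≤ 1) (h2 : ∀ j, ∃ a < s, D a = co j)
    {A : LinfC m →L[ℂ] LinfC m} (hA : ‖A‖ ≤ 1) :
    GoodRho ε s D (rho D (ContinuousLinearMap.id ℂ _) A) := by
  obtain ⟨t, t0, t1, t2⟩ := near hε hD hA
  refine ⟨fun l hl => rho_norm h1 (id_norm m) hA l hl, fun j => ?_,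
    fun l => if l % 2 = 0 then l / 2 else t (l / 2), ⟨?_, ?_, ?_⟩, ?_⟩
  · obtain ⟨a, ha, haj⟩ := h2 j
    refine ⟨2 * a, by omega, ?_⟩
    simp [rho, haj]
  · intro l hl
    dsimp only
    split_ifs
    · omega
    · by_cases h0 : l / 2 = 0
      · rw [h0, t0]; omega
      · have := t1 (l / 2) (by omega) h0
        omega
  · intro l hl b hb
    refine ⟨2 * b, ?_, by simp⟩
    dsimp only at hb
    split_ifs at hb
    · omega
    · by_cases h0 : l / 2 = 0
      · rw [h0, t0] at hb; omega
      · have := t1 (l / 2) (by omega) h0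
        omega
  · intro b hb
    exact ⟨2 * b, by omega, by simp⟩
  · intro l hl
    have ht := t2 (l / 2) (by omega)
    beta_reduce
    by_cases hp : l % 2 = 0
    · rw [rho, if_pos hp, if_pos hp, ContinuousLinearMap.comp_id, sub_self, norm_zero]
      exact hε.le
    · rw [rho, if_neg hp, if_neg hp]
      exact ht

lemma good_right {m s : ℕ} {ε : ℝ} (hε : 0 < ε) {D : ℕ → (LinfC m →L[ℂ] ℂ)}
    (hD : GoodSeq ε s D) (h1 : ∀ a < s, ‖D a‖ ≤ 1) (h2 : ∀ j, ∃ a < s, D a = co j)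
    {A : LinfC m →L[ℂ] LinfC m} (hA : ‖A‖ ≤ 1) :
    GoodRho ε s D (rho D A (ContinuousLinearMap.id ℂ _)) := by
  obtain ⟨t, t0, t1, t2⟩ := near hε hD hA
  have hodd : ∀ b, (2 * b + 1) % 2 ≠ 0 ∧ (2 * b + 1) / 2 = b := fun b => by omega
  refine ⟨fun l hl => rho_norm h1 hA (id_norm m) l hl, fun j => ?_,
    fun l => if l % 2 = 0 then t (l / 2) else l / 2, ⟨?_, ?_, ?_⟩, ?_⟩
  · obtain ⟨a, ha, haj⟩ := h2 j
    refine ⟨2 * a + 1, by omega, ?_⟩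
    rw [rho, if_neg (hodd a).1, (hodd a).2, haj]
    rfl
  · intro l hl
    dsimp only
    split_ifs
    · by_cases h0 : l / 2 = 0
      · rw [h0, t0]; omega
      · have := t1 (l / 2) (by omega) h0
        omega
    · omega
  · intro l hl b hb
    refine ⟨2 * b + 1, ?_, by dsimp only; rw [if_neg (hodd b).1, (hodd b).2]⟩
    dsimp only at hb
    split_ifs at hb
    · by_cases h0 : l / 2 = 0
      · rw [h0, t0] at hb; omega
      · have := t1 (l / 2) (by omega) h0
        omega
    · omega
  · intro b hb
    exact ⟨2 * b + 1, by omega, by dsimp only; rw [if_neg (hodd b).1, (hodd b).2]⟩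
  · intro l hl
    have ht := t2 (l / 2) (by omega)
    beta_reduce
    by_cases hp : l % 2 = 0
    · rw [rho, if_pos hp, if_pos hp]
      exact ht
    · rw [rho, if_neg hp, if_neg hp, ContinuousLinearMap.comp_id, sub_self, norm_zero]
      exact hε.le

lemma floor_close {a b e : ℝ} (he : 0 < e) (ha : 0 ≤ a) (hb : 0 ≤ b)
    (h : ⌊a / e⌋₊ = ⌊b / e⌋₊) : |a - b| ≤ e := by
  have a1 := Nat.floor_le (div_nonneg ha he.le)
  have a2 := Nat.lt_floor_add_one (a / e)
  have b1 := Nat.floor_le (div_nonneg hb he.le)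
  have b2 := Nat.lt_floor_add_one (b / e)
  rw [h] at a1 a2
  have h1 : (a - b) / e ≤ 1 := by rw [sub_div]; linarith
  have h2 : (b - a) / e ≤ 1 := by rw [sub_div]; linarith
  rw [div_le_one he] at h1 h2
  rw [abs_le]
  constructor <;> linarith

/-- the main theorem, for a total function in place of the partial colouring -/
lemma main_total (d m : ℕ) (δ : ℝ) (hδ : 0 ≤ δ) (ε : ℝ) (hε : 0 < ε) :
    ∃ n : ℕ, ∀ c : (LinfC d →L[ℂ] LinfC n) → ℝ,
      (∀ φ φ', IsDeltaEmbedding δ φ → IsDeltaEmbedding δ φ' → |c φ - c φ'| ≤ ‖φ - φ'‖) →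
      (∀ φ, 0 ≤ c φ ∧ c φ ≤ 1) →
      ∃ γ : LinfC m →L[ℂ] LinfC n, (∀ y, ‖γ y‖ = ‖y‖) ∧
        ∀ η₀ η₁ : LinfC d →L[ℂ] LinfC m, IsDeltaEmbedding δ η₀ → IsDeltaEmbedding δ η₁ →
          |c (γ.comp η₀) - c (γ.comp η₁)| ≤ ε + δ := by
  set e : ℝ := ε / 8 with he
  have he0 : 0 < e := by positivity
  have hnorm : ∀ η : LinfC d →L[ℂ] LinfC m, IsDeltaEmbedding δ η → ‖η‖ ≤ 1 := fun η hη =>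
    ContinuousLinearMap.opNorm_le_bound _ zero_le_one fun x => by rw [one_mul]; exact (hη x).1
  haveI : ProperSpace (LinfC m →L[ℂ] ℂ) := FiniteDimensional.proper ℂ _
  haveI : ProperSpace (LinfC d →L[ℂ] LinfC m) := FiniteDimensional.proper ℂ _
  obtain ⟨s, D, hD, hD1, hD2⟩ := exists_net he0 (Set.range (co (m := m))) (Set.finite_range _)
    (by rintro _ ⟨i, rfl⟩; exact co_norm i)
  have hD3 : ∀ j, ∃ a < s, D a = co j := fun j => hD2 _ ⟨j, rfl⟩
  let S : Set (LinfC d →L[ℂ] LinfC m) := setOf (IsDeltaEmbedding δ)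
  have hS : TotallyBounded S :=
    (isCompact_closedBall (0 : LinfC d →L[ℂ] LinfC m) 1).totallyBounded.subset fun η hη => by
      simpa using hnorm η hη
  obtain ⟨H, hHS, hHfin, hH⟩ := Metric.finite_approx_of_totallyBounded hS e he0
  have hH' : ∀ η, IsDeltaEmbedding δ η → ∃ η' ∈ H, IsDeltaEmbedding δ η' ∧ ‖η - η'‖ ≤ e := by
    intro η hη
    have := hH (show η ∈ S from hη)
    simp only [Set.mem_iUnion, Metric.mem_ball, dist_eq_norm] at this
    obtain ⟨η', h1, h2⟩ := this
    exact ⟨η', h1, hHS h1, h2.le⟩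
  haveI : Finite H := hHfin
  obtain ⟨N, hN⟩ := dual_ramsey_finite (H → Fin (⌊1 / e⌋₊ + 1)) s (2 * s)
  refine ⟨N, fun c hc hc01 => ?_⟩
  obtain ⟨σ, hσN, hσL, hσ, k, hk⟩ := hN fun w η =>
    ⟨⌊c ((R (row N w D)).comp η.1) / e⌋₊, Nat.lt_succ_of_le (Nat.floor_le_floor
      (div_le_div_of_nonneg_right (hc01 _).2 he0.le))⟩
  have isom : ∀ ρ : ℕ → (LinfC m →L[ℂ] ℂ), (∀ l < 2 * s, ‖ρ l‖ ≤ 1) →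
      (∀ j, ∃ l < 2 * s, ρ l = co j) → ∀ y, ‖R (row N σ ρ) y‖ = ‖y‖ := by
    intro ρ h1 h2
    refine R_isom (fun i => ?_) fun j => ?_
    · rcases row_cases m N σ i with h | ⟨a, ha, h⟩
      · rw [h]; simp
      · rw [h]; exact h1 a (hσL a ha)
    · obtain ⟨l, hl, hlj⟩ := h2 j
      obtain ⟨i, hi⟩ := row_exists m N σ hσN (hσ l hl)
      exact ⟨i, by rw [hi, hlj]⟩
  have step : ∀ ρ, GoodRho e s D ρ → ∀ η (hη : η ∈ H), ∃ x, 0 ≤ x ∧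
      |c ((R (row N σ ρ)).comp η) - x| ≤ e ∧ ⌊x / e⌋₊ = (k ⟨η, hη⟩ : ℕ) := by
    rintro ρ ⟨h1, h2, τ, hτ, h3⟩ η hη
    have hτk := congrArg (fun f => ((f ⟨η, hη⟩ : Fin _) : ℕ)) (hk τ hτ)
    refine ⟨_, (hc01 _).1, ?_, hτk⟩
    rw [row_map]
    have hδη : IsDeltaEmbedding δ η := hHS hη
    refine (hc _ _ (delta_comp (isom ρ h1 h2) hδη) (delta_comp (isom _ ?_ ?_) hδη)).trans
      (R_diff he0.le fun i => ?_)
    · intro l hl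
      exact hD1 _ (hτ.1 l hl)
    · intro j
      obtain ⟨a, ha, haj⟩ := hD3 j
      obtain ⟨l, hl, hla⟩ := hτ.2.2 a ha
      exact ⟨l, hl, by rw [hla, haj]⟩
    · rcases row_cases m N σ i with h | ⟨a, ha, h⟩
      · rw [h, h]; simp [he0.le]
      · rw [h, h, ← ContinuousLinearMap.sub_comp]
        refine (ContinuousLinearMap.opNorm_comp_le _ _).trans ?_
        exact (mul_le_of_le_one_right (norm_nonneg _) (hnorm η hδη)).trans (h3 a (hσL a ha))
  have two : ∀ ρ ρ', GoodRho e s D ρ → GoodRho e s D ρ' → ∀ η ∈ H,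
      |c ((R (row N σ ρ)).comp η) - c ((R (row N σ ρ')).comp η)| ≤ 3 * e := by
    intro ρ ρ' h h' η hη
    obtain ⟨x, hx0, hx1, hx2⟩ := step ρ h η hη
    obtain ⟨y, hy0, hy1, hy2⟩ := step ρ' h' η hη
    have := floor_close he0 hx0 hy0 (hx2.trans hy2.symm)
    rw [abs_le] at *
    constructor <;> linarith [hx1.1, hx1.2, hy1.1, hy1.2, this.1, this.2]
  have g0 : GoodRho e s D (rho D (ContinuousLinearMap.id ℂ _) 0) :=
    good_left he0 hD hD1 hD3 (by simp)
  set γ := R (row N σ (rho D (ContinuousLinearMap.id ℂ _) 0)) with hγ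
  have γi : ∀ y, ‖γ y‖ = ‖y‖ := isom _ g0.1 g0.2.1
  have γn : ‖γ‖ ≤ 1 := ContinuousLinearMap.opNorm_le_bound _ zero_le_one fun x => by
    rw [one_mul, γi]
  refine ⟨γ, γi, fun η₀ η₁ h₀ h₁ => ?_⟩
  have approx : ∀ η η', IsDeltaEmbedding δ η → IsDeltaEmbedding δ η' → ‖η - η'‖ ≤ e →
      |c (γ.comp η) - c (γ.comp η')| ≤ e := by
    intro η η' h h' hh
    refine (hc _ _ (delta_comp γi h) (delta_comp γi h')).trans ?_
    rw [← ContinuousLinearMap.comp_sub]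
    exact (ContinuousLinearMap.opNorm_comp_le _ _).trans
      ((mul_le_of_le_one_left (norm_nonneg _) γn).trans hh)
  obtain ⟨θ₀, hθ₀, d₀, a₀⟩ := hH' η₀ h₀
  obtain ⟨θ₁, hθ₁, d₁, a₁⟩ := hH' η₁ h₁
  obtain ⟨A, hA, hA'⟩ := ext_contr hδ d₀ d₁
  obtain ⟨B, hB, hB'⟩ := ext_contr hδ d₁ d₀
  have gA := good_left he0 hD hD1 hD3 hA
  have gB := good_right he0 hD hD1 hD3 hB
  have hpos : 0 < 1 + δ := by linarith
  have hsc : ∀ v : LinfC m, ‖v - (((1 + δ)⁻¹ : ℝ) : ℂ) • v‖ ≤ δ * ‖v‖ := by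
    intro v
    have : v - (((1 + δ)⁻¹ : ℝ) : ℂ) • v = ((1 - (1 + δ)⁻¹ : ℝ) : ℂ) • v := by
      rw [Complex.ofReal_sub, sub_smul, Complex.ofReal_one, one_smul]
    rw [this, norm_smul, Complex.norm_real]
    have h1 : 1 - (1 + δ)⁻¹ = δ / (1 + δ) := by field_simp; ring
    rw [h1, Real.norm_of_nonneg (by positivity)]
    refine mul_le_mul_of_nonneg_right ?_ (norm_nonneg v)
    exact div_le_self hδ (by linarith)
  have mid : |c ((R (row N σ (rho D (ContinuousLinearMap.id ℂ _) A))).comp θ₀) -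
      c ((R (row N σ (rho D B (ContinuousLinearMap.id ℂ _)))).comp θ₁)| ≤ δ := by
    refine (hc _ _ (delta_comp (isom _ gA.1 gA.2.1) d₀)
      (delta_comp (isom _ gB.1 gB.2.1) d₁)).trans (R_diff hδ fun i => ?_)
    rcases row_cases m N σ i with h | ⟨l, hl, h⟩
    · rw [h, h]; simp [hδ]
    · rw [h, h]
      have hl' : l < 2 * s := hσL l hl
      have hDl := hD1 (l / 2) (by omega)
      refine ContinuousLinearMap.opNorm_le_bound _ hδ fun x => ?_
      unfold rho
      split_ifs
      · simp only [ContinuousLinearMap.sub_apply, ContinuousLinearMap.comp_apply,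
          ContinuousLinearMap.id_apply, hB']
        rw [← map_sub]
        refine (ContinuousLinearMap.le_of_opNorm_le _ hDl _).trans ?_
        rw [one_mul]
        exact (hsc _).trans (mul_le_mul_of_nonneg_left (d₀ x).1 hδ)
      · simp only [ContinuousLinearMap.sub_apply, ContinuousLinearMap.comp_apply,
          ContinuousLinearMap.id_apply, hA']
        rw [← map_sub, ← norm_neg, ← map_neg, neg_sub]
        refine (ContinuousLinearMap.le_of_opNorm_le _ hDl _).trans ?_
        rw [one_mul]
        exact (hsc _).trans (mul_le_mul_of_nonneg_left (d₁ x).1 hδ)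
  have b1 := abs_le.mp (approx _ _ h₀ d₀ a₀)
  have b2 := abs_le.mp (two _ _ g0 gA θ₀ hθ₀)
  have b3 := abs_le.mp mid
  have b4 := abs_le.mp (two _ _ gB g0 θ₁ hθ₁)
  have b5 := abs_le.mp (approx _ _ h₁ d₁ a₁)
  rw [← hγ] at b2 b4
  have hε8 : ε = 8 * e := by rw [he]; ring
  rw [abs_le, hε8]
  constructor <;> linarith [b1.1, b1.2, b2.1, b2.2, b3.1, b3.2, b4.1, b4.2, b5.1, b5.2]

end SRP

/-- Stable Ramsey property, with stability modulus `ϖ(δ) = δ`, of the class `{ℓ∞ⁿ(ℂ)}ₙ`. -/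
theorem srp_linf_complex (d m : ℕ) (δ : ℝ) (hδ : 0 ≤ δ) (ε : ℝ) (hε : 0 < ε) :
    ∃ n : ℕ,
      ∀ c : {φ : LinfC d →L[ℂ] LinfC n // IsDeltaEmbedding δ φ} → ℝ,
        LipschitzWith 1 c → (∀ φ, c φ ∈ Set.Icc (0 : ℝ) 1) →
        ∃ (γ : LinfC m →L[ℂ] LinfC n) (_ : ∀ y, ‖γ y‖ = ‖y‖),
          ∀ (η₀ η₁ : LinfC d →L[ℂ] LinfC m),
            IsDeltaEmbedding δ η₀ → IsDeltaEmbedding δ η₁ →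
            ∀ (h₀ : IsDeltaEmbedding δ (γ.comp η₀)) (h₁ : IsDeltaEmbedding δ (γ.comp η₁)),
              |c ⟨γ.comp η₀, h₀⟩ - c ⟨γ.comp η₁, h₁⟩| ≤ ε + δ := by
  obtain ⟨n, hn⟩ := SRP.main_total d m δ hδ ε hε
  refine ⟨n, fun c hc hc01 => ?_⟩
  classical
  obtain ⟨γ, hγ, hmain⟩ := hn (fun φ => if h : IsDeltaEmbedding δ φ then c ⟨φ, h⟩ else 0) (by
    intro φ φ' h h'
    rw [dif_pos h, dif_pos h']
    have := hc.dist_le_mul ⟨φ, h⟩ ⟨φ', h'⟩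
    rw [Real.dist_eq, NNReal.coe_one, one_mul, Subtype.dist_eq, dist_eq_norm] at this
    exact this) (by
    intro φ
    split_ifs with h
    · exact ⟨(hc01 _).1, (hc01 _).2⟩
    · exact ⟨le_rfl, zero_le_one⟩)
  refine ⟨γ, hγ, fun η₀ η₁ e₀ e₁ h₀ h₁ => ?_⟩
  have := hmain η₀ η₁ e₀ e₁
  rw [dif_pos h₀, dif_pos h₁] at this
  exact this
end

section
/- Stable amalgamation property for the class {ℓ∞^n(ℂ)}_{n∈ℕ} with modulus ϖ(δ) = δ: for all k, m, l ∈ ℕ, every δ ≥ 0 and ε > 0, and all linear δ-embeddings φ : ℓ∞^k(ℂ) → ℓ∞^m(ℂ) and ψ : ℓ∞^k(ℂ) → ℓ∞^l(ℂ), there exist N ∈ ℕ and linear isometric embeddings i : ℓ∞^m(ℂ) → ℓ∞^N(ℂ) and j : ℓ∞^l(ℂ) → ℓ∞^N(ℂ) such that ‖i ∘ φ − j ∘ ψ‖ ≤ δ + ε (operator norm). -/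
lemma exists_ext_aux {X Y : Type*} [NormedAddCommGroup X] [NormedSpace ℂ X]
    [NormedAddCommGroup Y] [NormedSpace ℂ Y] (δ : ℝ) (hδ : 0 ≤ δ) (ψ : X →L[ℂ] Y)
    (hψ : IsDeltaEmbedding δ ψ) (f : X →L[ℂ] ℂ) (hf : ∀ x, ‖f x‖ ≤ ‖x‖) :
    ∃ g : Y →L[ℂ] ℂ, (∀ y, ‖g y‖ ≤ ‖y‖) ∧ ∀ x, ‖f x - g (ψ x)‖ ≤ δ * ‖x‖ := by
  have hinj : Function.Injective ψ.toLinearMap := by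
    rw [← LinearMap.ker_eq_bot, LinearMap.ker_eq_bot']
    intro x hx
    have h := (hψ x).2
    have hx' : ψ x = 0 := hx
    rw [hx', norm_zero, mul_zero] at h
    exact norm_le_zero_iff.mp h
  let e := LinearEquiv.ofInjective ψ.toLinearMap hinj
  have he : ∀ y, ψ (e.symm y) = (y : Y) := fun y =>
    congrArg Subtype.val (e.apply_symm_apply y)
  let F : (LinearMap.range ψ.toLinearMap) →L[ℂ] ℂ :=
    LinearMap.mkContinuous (f.toLinearMap.comp e.symm.toLinearMap) (1 + δ) (by
      intro y
      have h := (hψ (e.symm y)).2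
      rw [he] at h
      exact (hf _).trans h)
  have hF : ‖F‖ ≤ 1 + δ := LinearMap.mkContinuous_norm_le _ (by linarith) _
  have hFe : ∀ x, F (e x) = f x := fun x => congrArg f (e.symm_apply_apply x)
  obtain ⟨G, hG1, hG2⟩ := exists_extension_norm_eq _ F
  have hpos : (0 : ℝ) < 1 + δ := by linarith
  have hGψ : ∀ x, G (ψ x) = f x := fun x => (hG1 (e x)).trans (hFe x)
  refine ⟨(((1 + δ)⁻¹ : ℝ) : ℂ) • G, fun y => ?_, fun x => ?_⟩
  · have h1 : ‖G y‖ ≤ (1 + δ) * ‖y‖ :=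
      (G.le_opNorm y).trans (by rw [hG2]; gcongr)
    rw [smul_apply, norm_smul, Complex.norm_real, Real.norm_eq_abs,
      abs_of_pos (inv_pos.mpr hpos), inv_mul_le_iff₀ hpos]
    exact h1
  · rw [smul_apply, hGψ]
    have h2 : f x - (((1 + δ)⁻¹ : ℝ) : ℂ) • f x = ((1 - (1 + δ)⁻¹ : ℝ) : ℂ) * f x := by
      push_cast
      rw [smul_eq_mul]; ring
    have h3 : 1 - (1 + δ)⁻¹ = δ * (1 + δ)⁻¹ := by field_simp; ring
    have h4 : (1 + δ)⁻¹ ≤ 1 := inv_le_one_of_one_le₀ (by linarith)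
    have h5 : 0 ≤ δ * (1 + δ)⁻¹ := mul_nonneg hδ (inv_pos.mpr hpos).le
    rw [h2, norm_mul, Complex.norm_real, Real.norm_eq_abs, h3, abs_of_nonneg h5]
    have h6 : δ * (1 + δ)⁻¹ ≤ δ := mul_le_of_le_one_right hδ h4
    exact mul_le_mul h6 (hf x) (norm_nonneg _) hδ

lemma linf_norm_le {n : ℕ} (x : LinfC n) (C : ℝ) (hC : 0 ≤ C) (h : ∀ a, ‖x a‖ ≤ C) :
    ‖x‖ ≤ C := by
  rw [PiLp.norm_eq_ciSup]
  exact Real.iSup_le h hC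

/-- The map into `ℓ∞` with prescribed coordinates. -/
noncomputable def linfMk {X : Type*} [NormedAddCommGroup X] [NormedSpace ℂ X] {n : ℕ}
    (h : Fin n → (X →L[ℂ] ℂ)) : X →L[ℂ] LinfC n :=
  ((PiLp.continuousLinearEquiv ⊤ ℂ (fun _ : Fin n => ℂ)).symm :
    (Fin n → ℂ) →L[ℂ] LinfC n).comp (ContinuousLinearMap.pi h)

lemma linfMk_apply {X : Type*} [NormedAddCommGroup X] [NormedSpace ℂ X] {n : ℕ}
    (h : Fin n → (X →L[ℂ] ℂ)) (x : X) (a : Fin n) : linfMk h x a = h a x := rfl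

/-- `ℓ∞ⁿ(ℂ)` coordinates. -/
noncomputable def linfCoord {n : ℕ} (a : Fin n) : LinfC n →L[ℂ] ℂ :=
  PiLp.proj ⊤ (fun _ : Fin n => ℂ) a

lemma linfCoord_apply {n : ℕ} (a : Fin n) (x : LinfC n) : linfCoord a x = x a := rfl

/-- Stable amalgamation property, with stability modulus `ϖ(δ) = δ`, of the class
`{ℓ∞ⁿ(ℂ)}ₙ`. -/
theorem sap_linf_complex (k m l : ℕ) (δ : ℝ) (hδ : 0 ≤ δ) (ε : ℝ) (hε : 0 < ε)
    (φ : LinfC k →L[ℂ] LinfC m) (hφ : IsDeltaEmbedding δ φ)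
    (ψ : LinfC k →L[ℂ] LinfC l) (hψ : IsDeltaEmbedding δ ψ) :
    ∃ (N : ℕ) (i : LinfC m →L[ℂ] LinfC N) (j : LinfC l →L[ℂ] LinfC N),
      (∀ x, ‖i x‖ = ‖x‖) ∧ (∀ x, ‖j x‖ = ‖x‖) ∧ ‖i.comp φ - j.comp ψ‖ ≤ δ + ε := by
  have hA : ∀ a : Fin m, ∃ g : LinfC l →L[ℂ] ℂ, (∀ y, ‖g y‖ ≤ ‖y‖) ∧
      ∀ x, ‖φ x a - g (ψ x)‖ ≤ δ * ‖x‖ := fun a =>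
    exists_ext_aux δ hδ ψ hψ ((linfCoord a).comp φ)
      (fun x => (PiLp.norm_apply_le (φ x) a).trans (hφ x).1)
  have hB : ∀ b : Fin l, ∃ g : LinfC m →L[ℂ] ℂ, (∀ y, ‖g y‖ ≤ ‖y‖) ∧
      ∀ x, ‖ψ x b - g (φ x)‖ ≤ δ * ‖x‖ := fun b =>
    exists_ext_aux δ hδ φ hφ ((linfCoord b).comp ψ)
      (fun x => (PiLp.norm_apply_le (ψ x) b).trans (hψ x).1)
  choose g hg1 hg2 using hA
  choose h hh1 hh2 using hB
  let i : LinfC m →L[ℂ] LinfC (m + l) := linfMk (Fin.append linfCoord h)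
  let j : LinfC l →L[ℂ] LinfC (m + l) := linfMk (Fin.append g linfCoord)
  have il : ∀ x a, i x (Fin.castAdd l a) = x a := fun x a => by
    simp only [i, linfMk_apply, Fin.append_left, linfCoord_apply]
  have ir : ∀ x b, i x (Fin.natAdd m b) = h b x := fun x b => by
    simp only [i, linfMk_apply, Fin.append_right]
  have jl : ∀ x a, j x (Fin.castAdd l a) = g a x := fun x a => by
    simp only [j, linfMk_apply, Fin.append_left]
  have jr : ∀ x b, j x (Fin.natAdd m b) = x b := fun x b => by
    simp only [j, linfMk_apply, Fin.append_right, linfCoord_apply]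
  refine ⟨m + l, i, j, fun x => le_antisymm ?_ ?_, fun x => le_antisymm ?_ ?_, ?_⟩
  · refine linf_norm_le _ _ (norm_nonneg _) (fun c => ?_)
    refine Fin.addCases (fun a => ?_) (fun b => ?_) c
    · rw [il]; exact PiLp.norm_apply_le x a
    · rw [ir]; exact hh1 b x
  · refine linf_norm_le _ _ (norm_nonneg _) (fun a => ?_)
    rw [← il]; exact PiLp.norm_apply_le _ _
  · refine linf_norm_le _ _ (norm_nonneg _) (fun c => ?_)
    refine Fin.addCases (fun a => ?_) (fun b => ?_) c
    · rw [jl]; exact hg1 a x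
    · rw [jr]; exact PiLp.norm_apply_le x b
  · refine linf_norm_le _ _ (norm_nonneg _) (fun a => ?_)
    rw [← jr]; exact PiLp.norm_apply_le _ _
  · refine (ContinuousLinearMap.opNorm_le_bound _ hδ (fun x => ?_)).trans (by linarith)
    refine linf_norm_le _ _ (mul_nonneg hδ (norm_nonneg _)) (fun c => ?_)
    change ‖i (φ x) c - j (ψ x) c‖ ≤ _
    refine Fin.addCases (fun a => ?_) (fun b => ?_) c
    · rw [il, jl]; exact hg2 a x
    · rw [ir, jr, norm_sub_rev]; exact hh2 b x
end
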